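/- Let B be a finite simplicial complex and let p : E → B be a Hurewicz fibration such that for every b ∈ B the fiber p⁻¹(b) is homotopy equivalent to a finite simplicial complex. Then there exist a compact ENR X, a continuous map q : X → B which is an approximate fibration, and a homotopy equivalence φ : X → E such that p ∘ φ = q. -/

import Mathlib

noncomputable section

open unitInterval

/-- A map `p : E → B` is a (Hurewicz) fibration if it is continuous and has the homotopy
lifting property with respect to every topological space. -/
def IsHurewiczFibration {E B : Type} [TopologicalSpace E] [TopologicalSpace B]
    (p : E → B) : Prop :=
  Continuous p ∧
  ∀ (X : Type) [TopologicalSpace X] (f : C(X, E)) (h : C(X × I, B)),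
    (∀ x : X, h (x, 0) = p (f x)) →
    ∃ H : C(X × I, E), (∀ x : X, H (x, 0) = f x) ∧ (∀ z : X × I, p (H z) = h z)

/-- A map `p : E → B` is an approximate fibration if it is continuous and, for every space `X`,
every partial lift and every open cover `𝒰` of `B`, there is a lift of the homotopy which
commutes with the given homotopy "up to `𝒰`". -/
def IsApproxFibration {E B : Type} [TopologicalSpace E] [TopologicalSpace B]
    (p : E → B) : Prop :=
  Continuous p ∧
  ∀ (X : Type) [TopologicalSpace X] (f : C(X, E)) (h : C(X × I, B)),
    (∀ x : X, h (x, 0) = p (f x)) →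
    ∀ 𝒰 : Set (Set B), (∀ U ∈ 𝒰, IsOpen U) → (⋃₀ 𝒰 = Set.univ) →
    ∃ H : C(X × I, E), (∀ x : X, H (x, 0) = f x) ∧
      (∀ z : X × I, ∃ U ∈ 𝒰, p (H z) ∈ U ∧ h z ∈ U)

/-- A topological space is a Euclidean neighborhood retract: it is homeomorphic to a subspace
`X'` of some `ℝⁿ` which is a retract of an open neighborhood `U` of `X'` in `ℝⁿ`. -/
def IsENR (X : Type) [TopologicalSpace X] : Prop :=
  ∃ (n : ℕ) (X' : Set (Fin n → ℝ)), Nonempty (X ≃ₜ X') ∧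
    ∃ U : Set (Fin n → ℝ), IsOpen U ∧ X' ⊆ U ∧
      ∃ r : C(U, X'), ∀ (x : U) (hx : (x : Fin n → ℝ) ∈ X'), r x = ⟨(x : Fin n → ℝ), hx⟩

/-- A space is (homeomorphic to) the polyhedron of a finite geometric simplicial complex
in some Euclidean space. -/
def IsFiniteSimplicialComplex (B : Type) [TopologicalSpace B] : Prop :=
  ∃ (n : ℕ) (K : Geometry.SimplicialComplex ℝ (Fin n → ℝ)),
    K.faces.Finite ∧ Nonempty (B ≃ₜ K.space)

/-- `X` is homotopy equivalent to (the polyhedron of) a finite simplicial complex. -/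
def HomotopyEquivToFiniteComplex (X : Type) [TopologicalSpace X] : Prop :=
  ∃ (n : ℕ) (K : Geometry.SimplicialComplex ℝ (Fin n → ℝ)),
    K.faces.Finite ∧ Nonempty (ContinuousMap.HomotopyEquiv X K.space)

/-!
Call `φ : X → E` a controlled homotopy equivalence if for every `ε > 0` it has a homotopy inverse
whose homotopies move points by at most `ε` when measured in the base. Homotopies in the base lift
exactly to `E`, hence approximately to `X` through an `ε`-inverse of `φ`, so `p ∘ φ` is an
approximate fibration.

The space `X` is built by induction over the simplices `τ` of the base. Over `τ` the fibration is
fibrewise homotopy equivalent to a product `τ × L` with `L` a finite complex. If a compact model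
`X₀` over the other simplices is given, with the part `D ⊆ X₀` over the boundary of `τ`, then
`τ × L` is attached to `X₀` along the cylinder `D × [0, 1]`. All points of the cylinder over `m ∈ D`
lie over the same point of the base; the control comes from thin collars of the boundary in `τ`.
The map `D → τ × L` is first made injective by enlarging `L`, so that the cylinder is again a
compact absolute neighbourhood extensor in a Euclidean space, that is, a compact ENR.
-/

/-! ### Controlled homotopy equivalences -/

section Clamp

/-- The retraction of the real line onto the unit interval. Homotopies and cylinders below are
parametrised by all of `ℝ`; `clamp` makes a parameter stationary outside `[0, 1]`. -/
def clamp (t : ℝ) : ℝ := max 0 (min 1 t)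

variable {t : ℝ}

@[fun_prop]
lemma continuous_clamp : Continuous clamp := by unfold clamp; fun_prop

lemma clamp_nonneg (t : ℝ) : 0 ≤ clamp t := le_max_left _ _

lemma clamp_le_one (t : ℝ) : clamp t ≤ 1 := max_le zero_le_one (min_le_left _ _)

lemma clamp_of_nonpos (h : t ≤ 0) : clamp t = 0 := max_eq_left ((min_le_right _ _).trans h)

lemma clamp_of_one_le (h : 1 ≤ t) : clamp t = 1 := by
  rw [clamp, min_eq_left h, max_eq_right zero_le_one]

lemma clamp_of_mem (h₀ : 0 ≤ t) (h₁ : t ≤ 1) : clamp t = t := by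
  rw [clamp, min_eq_right h₁, max_eq_right h₀]

@[simp] lemma clamp_zero : clamp 0 = 0 := clamp_of_nonpos le_rfl

@[simp] lemma clamp_one : clamp 1 = 1 := clamp_of_one_le le_rfl

end Clamp

section ControlledHomotopy

variable {V X Y Z W : Type*} [PseudoMetricSpace V] [TopologicalSpace X] [TopologicalSpace Y]
  [TopologicalSpace Z] [TopologicalSpace W]

/-- A homotopy from `f` to `g` whose time parameter ranges over all of `ℝ`, so that concatenations
and reparametrisations need no bookkeeping of bounds. -/
structure RealHomotopy (f g : X → Z) where
  /-- The underlying map. -/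
  toFun : X × ℝ → Z
  continuous_toFun : Continuous toFun
  map_zero : ∀ x, toFun (x, 0) = f x
  map_one : ∀ x, toFun (x, 1) = g x

namespace RealHomotopy

instance {f g : X → Z} : CoeFun (RealHomotopy f g) fun _ => X × ℝ → Z := ⟨toFun⟩

attribute [fun_prop] continuous_toFun

attribute [simp] map_zero map_one

variable {f g : X → Z}

/-- The reversed homotopy. -/
@[simps toFun]
def symm (H : RealHomotopy f g) : RealHomotopy g f where
  toFun z := H (z.1, 1 - z.2)
  continuous_toFun := by fun_prop
  map_zero x := by simp
  map_one x := by simp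

@[simp] lemma symm_symm (H : RealHomotopy f g) : H.symm.symm = H := by
  cases H
  simp [symm]

/-- Precomposition of a homotopy with a continuous map. -/
def compRight (H : RealHomotopy f g) {m : Y → X} (hm : Continuous m) :
    RealHomotopy (f ∘ m) (g ∘ m) where
  toFun z := H (m z.1, z.2)
  continuous_toFun := by fun_prop
  map_zero x := by simp
  map_one x := by simp

/-- Postcomposition of a homotopy with a continuous map. -/
def compLeft (H : RealHomotopy f g) {m : Z → W} (hm : Continuous m) :
    RealHomotopy (m ∘ f) (m ∘ g) where
  toFun z := m (H z)
  continuous_toFun := by fun_prop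
  map_zero x := by simp
  map_one x := by simp

end RealHomotopy

/-- `f` and `g` are homotopic through maps which, measured in `V` by `q`, stay within `ε` of `b`.
For `ε = 0` and `b = q ∘ f` this is fibrewise homotopy. -/
def ControlledHomotopic (q : Z → V) (b : X → V) (ε : ℝ) (f g : X → Z) : Prop :=
  ∃ H : RealHomotopy f g, ∀ x t, dist (q (H (x, t))) (b x) ≤ ε

namespace ControlledHomotopic

variable {q : Z → V} {b : X → V} {ε η : ℝ} {f g h : X → Z}

lemma refl (hf : Continuous f) (hε : ∀ x, dist (q (f x)) (b x) ≤ ε) :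
    ControlledHomotopic q b ε f f :=
  ⟨⟨fun z => f z.1, by fun_prop, fun _ => rfl, fun _ => rfl⟩, fun x _ => hε x⟩

lemma continuous_right (H : ControlledHomotopic q b ε f g) : Continuous g := by
  obtain ⟨H, -⟩ := H
  rw [show g = fun x => H (x, 1) from funext fun x => (H.map_one x).symm]
  fun_prop

lemma dist_right_le (H : ControlledHomotopic q b ε f g) (x : X) : dist (q (g x)) (b x) ≤ ε := by
  obtain ⟨H, hε⟩ := H
  exact H.map_one x ▸ hε x 1

lemma dist_left_le (H : ControlledHomotopic q b ε f g) (x : X) : dist (q (f x)) (b x) ≤ ε := by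
  obtain ⟨H, hε⟩ := H
  exact H.map_zero x ▸ hε x 0

lemma mono (H : ControlledHomotopic q b ε f g) (h : ε ≤ η) : ControlledHomotopic q b η f g := by
  obtain ⟨H, hε⟩ := H
  exact ⟨H, fun x t => (hε x t).trans h⟩

lemma symm (H : ControlledHomotopic q b ε f g) : ControlledHomotopic q b ε g f := by
  obtain ⟨H, hε⟩ := H
  exact ⟨H.symm, fun x t => hε x _⟩

lemma trans (H : ControlledHomotopic q b ε f g) (K : ControlledHomotopic q b ε g h) :
    ControlledHomotopic q b ε f h := by
  obtain ⟨H, hε⟩ := H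
  obtain ⟨K, kε⟩ := K
  refine ⟨⟨fun z => if z.2 ≤ 1 / 2 then H (z.1, 2 * z.2) else K (z.1, 2 * z.2 - 1), ?_,
    fun x => ?_, fun x => ?_⟩, fun x t => ?_⟩
  · refine Continuous.if_le (by fun_prop) (by fun_prop) (by fun_prop) (by fun_prop) ?_
    rintro ⟨x, t⟩ (rfl : t = 1 / 2)
    norm_num
  · norm_num
  · norm_num
  · dsimp only
    split_ifs
    exacts [hε _ _, kε _ _]

lemma comp_right (H : ControlledHomotopic q b ε f g) {m : Y → X} (hm : Continuous m) :
    ControlledHomotopic q (b ∘ m) ε (f ∘ m) (g ∘ m) := by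
  obtain ⟨H, hε⟩ := H
  exact ⟨H.compRight hm, fun _ _ => hε _ _⟩

lemma comp_left (H : ControlledHomotopic q b ε f g) {m : Z → W} (hm : Continuous m) {r : W → V}
    (hr : ∀ z, dist (r (m z)) (q z) ≤ η) :
    ControlledHomotopic r b (η + ε) (m ∘ f) (m ∘ g) := by
  obtain ⟨H, hε⟩ := H
  exact ⟨H.compLeft hm, fun x t => (dist_triangle _ _ _).trans (add_le_add (hr _) (hε x t))⟩

lemma comp_left_of_comm {r : W → V} {m : Z → W}
    (H : ControlledHomotopic (r ∘ m) b ε f g) (hm : Continuous m) :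
    ControlledHomotopic r b ε (m ∘ f) (m ∘ g) := by
  simpa using H.comp_left hm (r := r) (η := 0) (fun z => by simp)

lemma of_dist_base_le (H : ControlledHomotopic q b ε f g) {c : X → V}
    (hc : ∀ x, dist (b x) (c x) ≤ η) : ControlledHomotopic q c (ε + η) f g := by
  obtain ⟨H, hε⟩ := H
  exact ⟨H, fun x t => (dist_triangle _ _ _).trans (add_le_add (hε x t) (hc x))⟩

/-- `f ∘ n ≃ n' ∘ n ∘ f ∘ n ≃ n' ∘ n ≃ id`. -/
lemma comp_of_leftInverse_leftInverse {f : X → Z} {n : Z → X} {n' : X → Z} (hε : 0 ≤ ε)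
    (hf : Continuous f) (hn : Continuous n) (hn' : Continuous n')
    (hnf : ControlledHomotopic (q ∘ f) (q ∘ f) ε (n ∘ f) id)
    (hn'n : ControlledHomotopic q q ε (n' ∘ n) id) (h : ∀ z, dist (q (f (n z))) (q z) ≤ ε)
    (h' : ∀ x, dist (q (n' x)) (q (f x)) ≤ ε) :
    ControlledHomotopic q q (3 * ε) (f ∘ n) id := by
  have insert_inverse : ControlledHomotopic q q (ε + ε) (f ∘ n) (n' ∘ n ∘ f ∘ n) :=
    (hn'n.symm.comp_right (hf.comp hn)).of_dist_base_le h
  have cancel_inverse : ControlledHomotopic q q (ε + ε + ε) (n' ∘ n ∘ f ∘ n) (n' ∘ n) :=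
    ((hnf.comp_right hn).comp_left hn' h').of_dist_base_le h
  refine (insert_inverse.mono ?_).trans ((cancel_inverse.mono ?_).trans (hn'n.mono ?_)) <;> linarith

/-- `r ∘ f ≃ r ∘ f ∘ r ∘ r' ≃ r ∘ r' ≃ id`. -/
lemma comp_of_rightInverse_rightInverse {f : X → Z} {r : Z → X} {r' : X → Z} (hε : 0 ≤ ε)
    (hf : Continuous f) (hr : Continuous r) (hr' : Continuous r')
    (hfr : ControlledHomotopic q q ε (f ∘ r) id)
    (hrr' : ControlledHomotopic (q ∘ f) (q ∘ f) ε (r ∘ r') id) :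
    ControlledHomotopic (q ∘ f) (q ∘ f) (4 * ε) (r ∘ f) id := by
  have insert_inverse : ControlledHomotopic (q ∘ f) (q ∘ f) (ε + ε) (r ∘ f) (r ∘ f ∘ r ∘ r') :=
    hrr'.symm.comp_left (hr.comp hf) fun x => hfr.dist_left_le (f x)
  have dist_r' (x : X) : dist (q (r' x)) (q (f x)) ≤ ε + ε :=
    (dist_triangle_left _ _ _).trans (add_le_add (hfr.dist_left_le (r' x)) (hrr'.dist_left_le x))
  have cancel_inverse :
      ControlledHomotopic (q ∘ f) (q ∘ f) (ε + ε + (ε + ε)) (r ∘ f ∘ r ∘ r') (r ∘ r') :=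
    ((hfr.comp_right hr').comp_left hr hfr.dist_left_le).of_dist_base_le dist_r'
  refine (insert_inverse.mono ?_).trans ((cancel_inverse.mono ?_).trans (hrr'.mono ?_)) <;> linarith

end ControlledHomotopic

end ControlledHomotopy

section ControlledEquiv

variable {V X Y E : Type*} [PseudoMetricSpace V] [TopologicalSpace X] [TopologicalSpace Y]
  [TopologicalSpace E]

/-- `φ : X → E` is a controlled homotopy equivalence over `q : E → V`: for every `ε > 0` it has a
homotopy inverse whose two homotopies move points by at most `ε`, measured in `V`. -/
structure IsControlledEquiv (q : E → V) (φ : X → E) : Prop where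
  continuous : Continuous φ
  exists_inverse : ∀ ε > 0, ∃ ψ : E → X, Continuous ψ ∧
    ControlledHomotopic (q ∘ φ) (q ∘ φ) ε id (ψ ∘ φ) ∧ ControlledHomotopic q q ε id (φ ∘ ψ)

namespace IsControlledEquiv

variable {q : E → V}

lemma of_fiberwise_inverse {φ : X → E} {ψ : E → X} (hφ : Continuous φ) (hψ : Continuous ψ)
    (hX : ControlledHomotopic (q ∘ φ) (q ∘ φ) 0 id (ψ ∘ φ))
    (hE : ControlledHomotopic q q 0 id (φ ∘ ψ)) : IsControlledEquiv q φ :=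
  ⟨hφ, fun _ hε => ⟨ψ, hψ, hX.mono hε.le, hE.mono hε.le⟩⟩

lemma of_homeomorph (e : X ≃ₜ E) : IsControlledEquiv q e := by
  refine of_fiberwise_inverse e.continuous e.symm.continuous ?_ ?_
  · simpa using ControlledHomotopic.refl continuous_id (by simp)
  · simpa using ControlledHomotopic.refl continuous_id (by simp)

lemma comp {β : Y → E} {α : X → Y} (hβ : IsControlledEquiv q β)
    (hα : IsControlledEquiv (q ∘ β) α) : IsControlledEquiv q (β ∘ α) := by
  refine ⟨hβ.continuous.comp hα.continuous, fun ε hε => ?_⟩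
  obtain ⟨ψ, hψ, Gα, Kα⟩ := hα.exists_inverse (ε / 2) (half_pos hε)
  obtain ⟨χ, hχ, Gβ, Kβ⟩ := hβ.exists_inverse (ε / 2) (half_pos hε)
  refine ⟨ψ ∘ χ, hψ.comp hχ, (Gα.mono (by linarith)).trans ?_,
    (Kβ.mono (by linarith)).trans ?_⟩
  · exact ((Gβ.comp_right hα.continuous).comp_left hψ Kα.dist_right_le).mono (by linarith)
  · exact (((Kα.comp_right hχ).comp_left_of_comm hβ.continuous).of_dist_base_le
      Kβ.dist_right_le).mono (by linarith)

/-- If `ψ` and `χ` invert `α` and `β ∘ α`, then `α ∘ χ` inverts `β`, because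
`id ≃ α ∘ ψ ≃ α ∘ χ ∘ β ∘ α ∘ ψ ≃ α ∘ χ ∘ β`. -/
lemma of_comp {β : Y → E} {α : X → Y} (hα : IsControlledEquiv (q ∘ β) α) (hβ : Continuous β)
    (hβα : IsControlledEquiv q (β ∘ α)) : IsControlledEquiv q β := by
  refine ⟨hβ, fun ε hε => ?_⟩
  obtain ⟨ψ, hψ, -, Kα⟩ := hα.exists_inverse (ε / 2) (half_pos hε)
  obtain ⟨χ, hχ, Gβα, Kβα⟩ := hβα.exists_inverse (ε / 2) (half_pos hε)
  have insert_inverse : ControlledHomotopic (q ∘ β) (q ∘ β) ε (α ∘ ψ) (α ∘ χ ∘ β ∘ α ∘ ψ) :=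
    (((Gβα.comp_right hψ).comp_left_of_comm (r := q ∘ β) hα.continuous).of_dist_base_le
      Kα.dist_right_le).mono (by linarith)
  have cancel_inverse : ControlledHomotopic (q ∘ β) (q ∘ β) ε (α ∘ χ ∘ β ∘ α ∘ ψ) (α ∘ χ ∘ β) :=
    (Kα.symm.comp_left (m := α ∘ χ ∘ β) (r := q ∘ β) (by have := hα.continuous; fun_prop)
      (fun y => Kβα.dist_right_le (β y))).mono (by linarith)
  exact ⟨α ∘ χ, hα.continuous.comp hχ,
    (Kα.mono (by linarith)).trans (insert_inverse.trans cancel_inverse), Kβα.mono (by linarith)⟩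

lemma congr {φ φ' : X → E} (hφ : IsControlledEquiv q φ)
    (h : ControlledHomotopic q (q ∘ φ) 0 φ φ') (hq : q ∘ φ' = q ∘ φ) :
    IsControlledEquiv q φ' := by
  refine ⟨h.continuous_right, fun ε hε => ?_⟩
  obtain ⟨ψ, hψ, G, K⟩ := hφ.exists_inverse ε hε
  refine ⟨ψ, hψ, ?_, K.trans ?_⟩
  · rw [hq]
    exact G.trans ((h.comp_left hψ K.dist_right_le).mono (by linarith))
  · exact ((h.comp_right hψ).of_dist_base_le K.dist_right_le).mono (by linarith)

end IsControlledEquiv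

end ControlledEquiv

/-! ### Double mapping cylinders -/

section DoubleCylinderDefs

variable {A M L : Type*}

/-- The identifications defining `DoubleCylinder`. -/
inductive DoubleCylinderRel (i : M → A) (j : M → L) :
    A ⊕ (M × ℝ) ⊕ L → A ⊕ (M × ℝ) ⊕ L → Prop
  | left (m : M) (s : ℝ) (h : s ≤ 0) : DoubleCylinderRel i j (.inr (.inl (m, s))) (.inl (i m))
  | right (m : M) (s : ℝ) (h : 1 ≤ s) :
    DoubleCylinderRel i j (.inr (.inl (m, s))) (.inr (.inr (j m)))

/-- The double mapping cylinder (homotopy pushout) of `i : M → A` and `j : M → L`. The cylinder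
coordinate ranges over `ℝ`, with `(-∞, 0]` and `[1, ∞)` collapsed to the two ends. -/
def DoubleCylinder (i : M → A) (j : M → L) : Type _ := Quot (DoubleCylinderRel i j)

end DoubleCylinderDefs

namespace DoubleCylinder

section Basic

variable {A M L Z : Type*} {i : M → A} {j : M → L}

/-- The left end `A` of the double mapping cylinder. -/
def left (a : A) : DoubleCylinder i j := Quot.mk _ (.inl a)

/-- The point of the double mapping cylinder over `m : M` at height `s`. -/
def mid (m : M) (s : ℝ) : DoubleCylinder i j := Quot.mk _ (.inr (.inl (m, s)))

/-- The right end `L` of the double mapping cylinder. -/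
def right (l : L) : DoubleCylinder i j := Quot.mk _ (.inr (.inr l))

variable {m : M} {s : ℝ}

lemma mid_of_nonpos (h : s ≤ 0) : (mid m s : DoubleCylinder i j) = left (i m) :=
  Quot.sound (.left m s h)

lemma mid_of_one_le (h : 1 ≤ s) : (mid m s : DoubleCylinder i j) = right (j m) :=
  Quot.sound (.right m s h)

@[simp] lemma mid_zero : (mid m 0 : DoubleCylinder i j) = left (i m) := mid_of_nonpos le_rfl

@[simp] lemma mid_one : (mid m 1 : DoubleCylinder i j) = right (j m) := mid_of_one_le le_rfl

@[elab_as_elim]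
lemma induction {P : DoubleCylinder i j → Prop} (left : ∀ a, P (left a))
    (mid : ∀ m s, 0 < s → s < 1 → P (mid m s)) (right : ∀ l, P (right l)) (z) : P z := by
  obtain ⟨a | ⟨m, s⟩ | l⟩ := z
  · exact left a
  · change P (DoubleCylinder.mid m s)
    rcases le_or_gt s 0 with h₀ | h₀
    · exact mid_of_nonpos h₀ ▸ left (i m)
    rcases lt_or_ge s 1 with h₁ | h₁
    · exact mid m s h₀ h₁
    · exact mid_of_one_le h₁ ▸ right (j m)
  · exact right l

/-- The map out of the double mapping cylinder given by compatible maps on its three parts; only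
the values of `c` at heights in `[0, 1]` matter. -/
def lift (a : A → Z) (c : M × ℝ → Z) (l : L → Z) (h₀ : ∀ m, c (m, 0) = a (i m))
    (h₁ : ∀ m, c (m, 1) = l (j m)) : DoubleCylinder i j → Z :=
  Quot.lift (Sum.elim a (Sum.elim (fun z => c (z.1, clamp z.2)) l)) <| by
    rintro _ _ (⟨m, s, h⟩ | ⟨m, s, h⟩)
    · simp [clamp_of_nonpos h, h₀]
    · simp [clamp_of_one_le h, h₁]

variable {a : A → Z} {c : M × ℝ → Z} {l : L → Z} {h₀ : ∀ m, c (m, 0) = a (i m)}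
  {h₁ : ∀ m, c (m, 1) = l (j m)}

lemma lift_mid (m : M) (hs₀ : 0 ≤ s) (hs₁ : s ≤ 1) : lift a c l h₀ h₁ (mid m s) = c (m, s) := by
  rw [show lift a c l h₀ h₁ (mid m s) = c (m, clamp s) from rfl, clamp_of_mem hs₀ hs₁]

/-- The map of double mapping cylinders induced by a strict morphism of diagrams. -/
def map {A' M' L' : Type*} {i' : M' → A'} {j' : M' → L'} (f : A → A') (k : M → M') (g : L → L')
    (hi : ∀ m, i' (k m) = f (i m)) (hj : ∀ m, j' (k m) = g (j m)) :
    DoubleCylinder i j → DoubleCylinder i' j' :=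
  lift (fun a => left (f a)) (fun z => mid (k z.1) z.2) (fun l => right (g l))
    (fun m => by rw [mid_zero, hi]) (fun m => by rw [mid_one, hj])

section Map

variable {A' M' L' : Type*} {i' : M' → A'} {j' : M' → L'} {f : A → A'} {k : M → M'} {g : L → L'}
  {hi : ∀ m, i' (k m) = f (i m)} {hj : ∀ m, j' (k m) = g (j m)}

@[simp] lemma map_left (a : A) : map f k g hi hj (left a) = left (f a) := rfl

@[simp] lemma map_right (l : L) : map f k g hi hj (right l) = right (g l) := rfl

@[simp] lemma map_mid (m : M) (s : ℝ) : map f k g hi hj (mid m s) = mid (k m) s := by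
  change mid (k m) (clamp s) = _
  rcases le_total s 0 with h₀ | h₀
  · rw [clamp_of_nonpos h₀, mid_zero, mid_of_nonpos h₀]
  rcases le_total s 1 with h₁ | h₁
  · rw [clamp_of_mem h₀ h₁]
  · rw [clamp_of_one_le h₁, mid_one, mid_of_one_le h₁]

end Map

/-- The reference map of a double mapping cylinder whose ends lie over `V`, constant along the
cylinder lines. -/
def proj {V : Type*} (α : A → V) (β : L → V) (h : ∀ m, α (i m) = β (j m)) :
    DoubleCylinder i j → V :=
  lift α (fun z => α (i z.1)) β (fun _ => rfl) h

section Proj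

variable {V : Type*} {α : A → V} {β : L → V} {h : ∀ m, α (i m) = β (j m)}

@[simp] lemma proj_left (a : A) : proj α β h (left a) = α a := rfl

@[simp] lemma proj_right (l : L) : proj α β h (right l) = β l := rfl

@[simp] lemma proj_mid (m : M) (s : ℝ) : proj α β h (mid m s) = α (i m) := rfl

end Proj

/-- The path of `mid m u` with its parts in the two ends replaced by prescribed points. -/
def zigzag (a : A) (m : M) (l : L) (u : ℝ) : DoubleCylinder i j :=
  if u ≤ 0 then left a else if u ≤ 1 then mid m u else right l

lemma zigzag_of_nonpos (a : A) (m : M) (l : L) {u : ℝ} (h : u ≤ 0) :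
    (zigzag a m l u : DoubleCylinder i j) = left a := if_pos h

lemma zigzag_of_mem {a : A} {m : M} {l : L} {u : ℝ} (h₀ : 0 ≤ u) (h₁ : u ≤ 1)
    (ha : u = 0 → a = i m) : (zigzag a m l u : DoubleCylinder i j) = mid m u := by
  rcases h₀.eq_or_lt with rfl | h₀
  · rw [zigzag_of_nonpos _ _ _ le_rfl, mid_zero, ha rfl]
  · rw [zigzag, if_neg h₀.not_ge, if_pos h₁]

lemma zigzag_of_one_le {a : A} {m : M} {l : L} {u : ℝ} (h : 1 ≤ u) (hl : u = 1 → l = j m) :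
    (zigzag a m l u : DoubleCylinder i j) = right l := by
  rcases h.eq_or_lt with rfl | h
  · rw [zigzag_of_mem zero_le_one le_rfl (by simp), mid_one, hl rfl]
  · rw [zigzag, if_neg (by linarith), if_neg h.not_ge]

lemma zigzag_induction {P : DoubleCylinder i j → Prop} {a : A} {m : M} {l : L} {u : ℝ}
    (left : P (left a)) (mid : P (mid m u)) (right : P (right l)) : P (zigzag a m l u) := by
  unfold zigzag
  split_ifs
  exacts [left, mid, right]

end Basic

section Topology

variable {A M L Z : Type*} [TopologicalSpace A] [TopologicalSpace M] [TopologicalSpace L]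
  [TopologicalSpace Z] {i : M → A} {j : M → L}

instance : TopologicalSpace (DoubleCylinder i j) :=
  inferInstanceAs (TopologicalSpace (Quot (DoubleCylinderRel i j)))

@[fun_prop]
lemma continuous_left : Continuous (left : A → DoubleCylinder i j) :=
  continuous_quot_mk.comp continuous_inl

@[fun_prop]
lemma continuous_right : Continuous (right : L → DoubleCylinder i j) :=
  continuous_quot_mk.comp (continuous_inr.comp continuous_inr)

@[fun_prop]
lemma continuous_mid {T : Type*} [TopologicalSpace T] {m : T → M} {u : T → ℝ}
    (hm : Continuous m) (hu : Continuous u) :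
    Continuous fun t => (mid (m t) (u t) : DoubleCylinder i j) :=
  continuous_quot_mk.comp (continuous_inr.comp (continuous_inl.comp (hm.prodMk hu)))

lemma continuous_lift {a : A → Z} {c : M × ℝ → Z} {l : L → Z} (h₀ : ∀ m, c (m, 0) = a (i m))
    (h₁ : ∀ m, c (m, 1) = l (j m)) (ha : Continuous a) (hc : Continuous c) (hl : Continuous l) :
    Continuous (lift a c l h₀ h₁) :=
  continuous_quot_lift _ <| ha.sumElim <| Continuous.sumElim (by fun_prop) hl

lemma continuous_map {A' M' L' : Type*} [TopologicalSpace A'] [TopologicalSpace M']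
    [TopologicalSpace L'] {i' : M' → A'} {j' : M' → L'} {f : A → A'} {k : M → M'} {g : L → L'}
    (hi : ∀ m, i' (k m) = f (i m)) (hj : ∀ m, j' (k m) = g (j m)) (hf : Continuous f)
    (hk : Continuous k) (hg : Continuous g) :
    Continuous (map f k g hi hj : DoubleCylinder i j → DoubleCylinder i' j') :=
  continuous_lift _ _ (by fun_prop) (by fun_prop) (by fun_prop)

lemma continuous_zigzag {T : Type*} [TopologicalSpace T] {a : T → A} {m : T → M} {l : T → L}
    {u : T → ℝ} (ha : Continuous a) (hm : Continuous m) (hl : Continuous l) (hu : Continuous u)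
    (h₀ : ∀ t, u t = 0 → a t = i (m t)) (h₁ : ∀ t, u t = 1 → l t = j (m t)) :
    Continuous fun t => (zigzag (a t) (m t) (l t) (u t) : DoubleCylinder i j) := by
  refine Continuous.if_le (by fun_prop) (Continuous.if_le (by fun_prop) (by fun_prop)
    (by fun_prop) (by fun_prop) fun t ht => ?_) (by fun_prop) (by fun_prop) fun t ht => ?_
  · rw [ht, mid_one, h₁ t ht]
  · simp only [ht, zero_le_one, if_true, mid_zero, h₀ t ht]

/-- Continuity on the product with `ℝ` holds because `ℝ` is locally compact, so that a homotopy is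
the same as a map into the function space `C(ℝ, Z)`. -/
lemma exists_lift_homotopy {a : A × ℝ → Z} {c : M × ℝ × ℝ → Z} {l : L × ℝ → Z}
    (ha : Continuous a) (hc : Continuous c) (hl : Continuous l)
    (h₀ : ∀ m t, c (m, 0, t) = a (i m, t)) (h₁ : ∀ m t, c (m, 1, t) = l (j m, t)) :
    ∃ H : DoubleCylinder i j × ℝ → Z, Continuous H ∧ (∀ x t, H (left x, t) = a (x, t)) ∧
      (∀ m s t, 0 ≤ s → s ≤ 1 → H (mid m s, t) = c (m, s, t)) ∧
      ∀ x t, H (right x, t) = l (x, t) := by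
  let a' : C(A, C(ℝ, Z)) := ContinuousMap.curry ⟨a, ha⟩
  let c' : C(M × ℝ, C(ℝ, Z)) :=
    ContinuousMap.curry ⟨fun z : (M × ℝ) × ℝ => c (z.1.1, z.1.2, z.2), by fun_prop⟩
  let l' : C(L, C(ℝ, Z)) := ContinuousMap.curry ⟨l, hl⟩
  have h₀' (m : M) : c' (m, 0) = a' (i m) := ContinuousMap.ext (h₀ m)
  have h₁' (m : M) : c' (m, 1) = l' (j m) := ContinuousMap.ext (h₁ m)
  have continuous_lift := continuous_lift h₀' h₁' a'.continuous c'.continuous l'.continuous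
  refine ⟨fun z => lift a' c' l' h₀' h₁' z.1 z.2, by fun_prop, fun _ _ => rfl, ?_, fun _ _ => rfl⟩
  intro m s t hs₀ hs₁
  exact congrArg (fun F : C(ℝ, Z) => F t) (lift_mid m hs₀ hs₁)

lemma controlledHomotopic {V : Type*} [PseudoMetricSpace V] {q : Z → V} {b : DoubleCylinder i j → V}
    {ε : ℝ} {f g : DoubleCylinder i j → Z} {a : A × ℝ → Z} {c : M × ℝ × ℝ → Z} {l : L × ℝ → Z}
    (ha : Continuous a) (hc : Continuous c) (hl : Continuous l)
    (h₀ : ∀ m t, 0 ≤ t → t ≤ 1 → c (m, 0, t) = a (i m, t))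
    (h₁ : ∀ m t, 0 ≤ t → t ≤ 1 → c (m, 1, t) = l (j m, t))
    (f_left : ∀ x, a (x, 0) = f (left x)) (f_right : ∀ x, l (x, 0) = f (right x))
    (f_mid : ∀ m s, 0 ≤ s → s ≤ 1 → c (m, s, 0) = f (mid m s))
    (g_left : ∀ x, a (x, 1) = g (left x)) (g_right : ∀ x, l (x, 1) = g (right x))
    (g_mid : ∀ m s, 0 ≤ s → s ≤ 1 → c (m, s, 1) = g (mid m s))
    (ε_left : ∀ x t, 0 ≤ t → t ≤ 1 → dist (q (a (x, t))) (b (left x)) ≤ ε)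
    (ε_right : ∀ x t, 0 ≤ t → t ≤ 1 → dist (q (l (x, t))) (b (right x)) ≤ ε)
    (ε_mid : ∀ m s t, 0 ≤ s → s ≤ 1 → 0 ≤ t → t ≤ 1 →
      dist (q (c (m, s, t))) (b (mid m s)) ≤ ε) :
    ControlledHomotopic q b ε f g := by
  obtain ⟨H, hH, H_left, H_mid, H_right⟩ := exists_lift_homotopy (i := i) (j := j)
    (a := fun z => a (z.1, clamp z.2)) (c := fun z => c (z.1, z.2.1, clamp z.2.2))
    (l := fun z => l (z.1, clamp z.2)) (by fun_prop) (by fun_prop) (by fun_prop)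
    (fun m t => h₀ m _ (clamp_nonneg t) (clamp_le_one t))
    (fun m t => h₁ m _ (clamp_nonneg t) (clamp_le_one t))
  refine ⟨⟨H, hH, fun z => ?_, fun z => ?_⟩, fun z t => ?_⟩
  · induction z using induction with
    | left x => rw [H_left, clamp_zero, f_left]
    | mid m s hs₀ hs₁ => rw [H_mid m s _ hs₀.le hs₁.le, clamp_zero, f_mid m s hs₀.le hs₁.le]
    | right x => rw [H_right, clamp_zero, f_right]
  · induction z using induction with
    | left x => rw [H_left, clamp_one, g_left]
    | mid m s hs₀ hs₁ => rw [H_mid m s _ hs₀.le hs₁.le, clamp_one, g_mid m s hs₀.le hs₁.le]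
    | right x => rw [H_right, clamp_one, g_right]
  · have t_nonneg := clamp_nonneg t
    have t_le_one := clamp_le_one t
    dsimp only
    induction z using induction with
    | left x => rw [H_left]; exact ε_left x _ t_nonneg t_le_one
    | mid m s hs₀ hs₁ =>
      rw [H_mid m s _ hs₀.le hs₁.le]
      exact ε_mid m s _ hs₀.le hs₁.le t_nonneg t_le_one
    | right x => rw [H_right]; exact ε_right x _ t_nonneg t_le_one

end Topology

end DoubleCylinder

namespace DoubleCylinder

section Reattach

variable {A M L V : Type*} [TopologicalSpace A] [TopologicalSpace M] [TopologicalSpace L]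
  [PseudoMetricSpace V] {i i' : M → A} {j j' : M → L}

/-- The comparison of two double mapping cylinders with homotopic attaching maps: the outer thirds
of the cylinder run along the homotopies, the middle third is stretched over the new cylinder. -/
def reattach (G : RealHomotopy i i') (H : RealHomotopy j j') :
    DoubleCylinder i j → DoubleCylinder i' j' :=
  lift left (fun z => zigzag (G (z.1, 3 * z.2)) z.1 (H (z.1, 3 - 3 * z.2)) (3 * z.2 - 1)) right
    (fun m => by simp [zigzag_of_nonpos])
    (fun m => by rw [zigzag_of_one_le] <;> norm_num)

variable (G : RealHomotopy i i') (H : RealHomotopy j j')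

@[simp] lemma reattach_left (a : A) : reattach G H (left a) = left a := rfl

@[simp] lemma reattach_right (l : L) : reattach G H (right l) = right l := rfl

lemma reattach_mid (m : M) {s : ℝ} (h₀ : 0 ≤ s) (h₁ : s ≤ 1) :
    reattach G H (mid m s) = zigzag (G (m, 3 * s)) m (H (m, 3 - 3 * s)) (3 * s - 1) :=
  lift_mid m h₀ h₁

lemma reattach_mid_induction {P : DoubleCylinder i' j' → Prop} {m : M} {s : ℝ}
    (left : ∀ t, P (left (G (m, t)))) (mid : ∀ u, P (mid m u))
    (right : ∀ t, P (right (H (m, t)))) : P (reattach G H (DoubleCylinder.mid m s)) :=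
  zigzag_induction (left _) (mid _) (right _)

lemma continuous_reattach : Continuous (reattach G H) := by
  refine continuous_lift _ _ (by fun_prop) (continuous_zigzag (by fun_prop) (by fun_prop)
    (by fun_prop) (by fun_prop) (fun z hz => ?_) (fun z hz => ?_)) (by fun_prop)
  · rw [show 3 * z.2 = 1 by linarith, G.map_one]
  · rw [show 3 - 3 * z.2 = 1 by linarith, H.map_one]

lemma reattach_symm_reattach_mid (m : M) {s : ℝ} (h₀ : 0 ≤ s) (h₁ : s ≤ 1) :
    reattach G.symm H.symm (reattach G H (mid m s)) =
      zigzag (G (m, min (4 - 9 * s) (3 * s))) m (H (m, min (9 * s - 5) (3 - 3 * s)))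
        (9 * s - 4) := by
  rw [reattach_mid G H m h₀ h₁]
  rcases le_total (3 * s - 1) 0 with hs | hs
  · rw [zigzag_of_nonpos _ _ _ hs, zigzag_of_nonpos _ _ _ (by linarith), reattach_left,
      min_eq_right (by linarith)]
  rcases le_total (3 * s - 1) 1 with hs' | hs'
  · rw [zigzag_of_mem hs hs', reattach_mid _ _ _ hs hs', min_eq_left (by linarith),
      min_eq_left (by linarith), RealHomotopy.symm_toFun, RealHomotopy.symm_toFun]
    · ring_nf
    · exact fun h => by rw [show 3 * s = 1 by linarith, G.map_one]
  · rw [zigzag_of_one_le hs', zigzag_of_one_le (by linarith) fun h => by linarith,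
      reattach_right, min_eq_right (by linarith)]
    exact fun h => by rw [show 3 - 3 * s = 1 by linarith, H.map_one]

lemma controlledHomotopic_reattach_symm {ε : ℝ} (hε : 0 ≤ ε) {q : DoubleCylinder i j → V}
    (hG : ∀ m s t, dist (q (left (G (m, t)))) (q (mid m s)) ≤ ε)
    (hH : ∀ m s t, dist (q (right (H (m, t)))) (q (mid m s)) ≤ ε)
    (hmid : ∀ m s t, dist (q (mid m t)) (q (mid m s)) ≤ ε) :
    ControlledHomotopic q q ε (reattach G.symm H.symm ∘ reattach G H) id := by
  let u (s t : ℝ) : ℝ := s * (9 - 8 * t) - 4 * (1 - t)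
  refine controlledHomotopic (a := fun z => left z.1)
    (c := fun z => zigzag (G (z.1, min (-u z.2.1 z.2.2) (3 * clamp z.2.1))) z.1
      (H (z.1, min (u z.2.1 z.2.2 - 1) (3 - 3 * clamp z.2.1))) (u z.2.1 z.2.2))
    (l := fun z => right z.1) (by fun_prop) ?_ (by fun_prop) (fun m t _ h₁ => ?_)
    (fun m t _ h₁ => ?_) (fun _ => rfl) (fun _ => rfl) (fun m s h₀ h₁ => ?_) (fun _ => rfl)
    (fun _ => rfl) (fun m s h₀ h₁ => ?_) (by simp [hε]) (by simp [hε]) (fun m s t _ _ _ _ => ?_)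
  · refine continuous_zigzag (by fun_prop) (by fun_prop) (by fun_prop) (by fun_prop)
      (fun z hz => ?_) (fun z hz => ?_)
    · rw [hz, neg_zero, min_eq_left (by linarith [clamp_nonneg z.2.1]), G.map_zero]
    · rw [hz, sub_self, min_eq_left (by linarith [clamp_le_one z.2.1]), H.map_zero]
  · have hu : u 0 t ≤ 0 := by simp only [u]; linarith
    rw [zigzag_of_nonpos _ _ _ hu, clamp_zero, mul_zero, min_eq_right (by linarith), G.map_zero]
  · have hu : 1 ≤ u 1 t := by simp only [u]; linarith
    have hH : H (m, min (u 1 t - 1) (3 - 3 * clamp 1)) = j m := by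
      rw [clamp_one, mul_one, sub_self, min_eq_right (by linarith), H.map_zero]
    rw [zigzag_of_one_le hu fun _ => hH, hH]
  · rw [Function.comp_apply, reattach_symm_reattach_mid G H m h₀ h₁, clamp_of_mem h₀ h₁]
    norm_num [u, mul_comm, sub_sub]
  · have hu : u s 1 = s := by simp only [u]; ring
    rw [hu, zigzag_of_mem h₀ h₁, id]
    rintro rfl
    simp
  · exact zigzag_induction (P := fun z => dist (q z) (q (mid m s)) ≤ ε) (hG _ _ _) (hmid _ _ _)
      (hH _ _ _)

lemma controlledHomotopic_reattach_map {f : A → A} {g : L → L} (F : RealHomotopy id f)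
    (K : RealHomotopy id g) (hi : Continuous i) (hj : Continuous j) {α : A → V} {β : L → V}
    (h : ∀ m, α (i m) = β (j m)) {ε : ℝ} {q : DoubleCylinder (f ∘ i) (g ∘ j) → V}
    (hF : ∀ a t, dist (q (left (F (a, t)))) (α a) ≤ ε)
    (hK : ∀ l t, dist (q (right (K (l, t)))) (β l) ≤ ε)
    (hmid : ∀ m s, dist (q (mid m s)) (α (i m)) ≤ ε) :
    ControlledHomotopic q (proj α β h) ε (reattach (F.compRight hi) (K.compRight hj))
      (map f id g (fun _ => rfl) (fun _ => rfl)) := by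
  let u (s t : ℝ) : ℝ := s * (3 - 2 * t) - (1 - t)
  refine controlledHomotopic (a := fun z => left (F z))
    (c := fun z => zigzag (F (i z.1, u z.2.1 z.2.2 + 1)) z.1 (K (j z.1, 2 - u z.2.1 z.2.2))
      (u z.2.1 z.2.2))
    (l := fun z => right (K z)) (by fun_prop) ?_ (by fun_prop) (fun m t _ h₁ => ?_)
    (fun m t _ h₁ => ?_) (fun a => ?_) (fun l => ?_) (fun m s h₀ h₁ => ?_) (fun a => ?_)
    (fun l => ?_) (fun m s h₀ h₁ => ?_) (fun a t _ _ => hF a t) (fun l t _ _ => hK l t)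
    (fun m s t _ _ _ _ => ?_)
  · refine continuous_zigzag (by fun_prop) (by fun_prop) (by fun_prop) (by fun_prop)
      (fun z hz => ?_) (fun z hz => ?_)
    · simp [hz]
    · norm_num [hz]
  · have hu : u 0 t = t - 1 := by simp only [u]; ring
    rw [hu, zigzag_of_nonpos _ _ _ (by linarith), sub_add_cancel]
  · have hu : u 1 t = 2 - t := by simp only [u]; ring
    rw [hu, zigzag_of_one_le (by linarith), sub_sub_cancel]
    intro ht
    norm_num [ht]
  · rw [F.map_zero, reattach_left, id]
  · rw [K.map_zero, reattach_right, id]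
  · have hu : u s 0 = 3 * s - 1 := by simp only [u]; ring
    rw [reattach_mid _ _ m h₀ h₁, hu, sub_add_cancel, show 2 - (3 * s - 1) = 3 - 3 * s by ring]
    rfl
  · rw [F.map_one, map_left]
  · rw [K.map_one, map_right]
  · have hu : u s 1 = s := by simp only [u]; ring
    rw [hu, zigzag_of_mem h₀ h₁, map_mid, id]
    rintro rfl
    simp
  · exact zigzag_induction (P := fun z => dist (q z) (α (i m)) ≤ ε) (hF _ _) (hmid _ _)
      (h m ▸ hK _ _)

lemma controlledHomotopic_map_reattach {k : M → M} (K : RealHomotopy id k) (hi : Continuous i)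
    (hj : Continuous j) {α : A → V} {β : L → V} (h : ∀ m, α (i m) = β (j m)) {ε : ℝ} (hε : 0 ≤ ε)
    (hK : ∀ m t, dist (α (i (K (m, t)))) (α (i m)) ≤ ε) :
    ControlledHomotopic (proj α β h) (proj α β h) ε
      (map (i' := i) (j' := j) id k id (fun _ => rfl) (fun _ => rfl) ∘
        reattach (K.compLeft hi) (K.compLeft hj)) id := by
  refine controlledHomotopic (a := fun z => left z.1)
    (c := fun z => mid (K (z.1, (1 - z.2.2) * min 1 (min (3 * z.2.1) (3 - 3 * z.2.1))))
      (z.2.1 * (3 - 2 * z.2.2) - (1 - z.2.2)))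
    (l := fun z => right z.1) (by fun_prop) (by fun_prop) (by fun_prop) (fun m t _ h₁ => ?_)
    (fun m t _ h₁ => ?_) (fun _ => rfl) (fun _ => rfl) (fun m s h₀ h₁ => ?_) (fun _ => rfl)
    (fun _ => rfl) (fun m s _ _ => ?_) (by simp [hε]) (by simp [hε])
    (fun m s t _ _ _ _ => hK m _)
  · rw [mid_of_nonpos (by linarith)]
    simp
  · rw [mid_of_one_le (by linarith)]
    simp
  · have hs : s * (3 - 2 * 0) - (1 - 0) = 3 * s - 1 := by ring
    rw [Function.comp_apply, reattach_mid _ _ m h₀ h₁, hs, sub_zero, one_mul]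
    rcases le_total (3 * s - 1) 0 with hs | hs
    · rw [zigzag_of_nonpos _ _ _ hs, map_left, mid_of_nonpos hs,
        min_eq_left (by linarith : 3 * s ≤ 3 - 3 * s), min_eq_right (by linarith)]
      rfl
    rcases le_total (3 * s - 1) 1 with hs' | hs'
    · rw [zigzag_of_mem hs hs', map_mid, min_eq_left, K.map_one]
      · exact le_min (by linarith) (by linarith)
      · exact fun h => by simp [show 3 * s = 1 by linarith]
    · rw [zigzag_of_one_le hs', map_right, mid_of_one_le hs',
        min_eq_right (by linarith : 3 - 3 * s ≤ 3 * s), min_eq_right (by linarith)]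
      · rfl
      · exact fun h => by simp [show 3 - 3 * s = 1 by linarith]
  · norm_num

end Reattach

section Ends

variable {A A' M L L' V : Type*} [TopologicalSpace A] [TopologicalSpace M] [TopologicalSpace L]
  [PseudoMetricSpace V] {i : M → A} {j : M → L} (hi : Continuous i) (hj : Continuous j)
  {f : A → A'} {f' : A' → A} {g : L → L'} {g' : L' → L}

/-- The left homotopy inverse of `map f id g` determined by left homotopy inverses `f'` of `f` and
`g'` of `g`. -/
def endsInverse (F : RealHomotopy id (f' ∘ f)) (K : RealHomotopy id (g' ∘ g)) :
    DoubleCylinder (f ∘ i) (g ∘ j) → DoubleCylinder i j :=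
  reattach (i := f' ∘ f ∘ i) (j := g' ∘ g ∘ j) (F.compRight hi).symm (K.compRight hj).symm ∘
    map f' id g' (fun _ => rfl) (fun _ => rfl)

section EndsInverse

variable (F : RealHomotopy id (f' ∘ f)) (K : RealHomotopy id (g' ∘ g))

lemma endsInverse_mid_induction {P : DoubleCylinder i j → Prop} {m : M} {s : ℝ}
    (left : ∀ t, P (left (F (i m, t)))) (mid : ∀ u, P (mid m u))
    (right : ∀ t, P (right (K (j m, t)))) : P (endsInverse hi hj F K (DoubleCylinder.mid m s)) := by
  rw [endsInverse, Function.comp_apply, map_mid]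
  exact reattach_mid_induction _ _ (fun _ => left _) mid (fun _ => right _)

lemma continuous_endsInverse [TopologicalSpace A'] [TopologicalSpace L'] (hf' : Continuous f')
    (hg' : Continuous g') : Continuous (endsInverse hi hj F K) :=
  (continuous_reattach _ _).comp (continuous_map _ _ hf' continuous_id hg')

variable {α : A → V} {β : L → V} (h : ∀ m, α (i m) = β (j m)) {ε : ℝ}

lemma dist_proj_endsInverse_mid_le (hε : 0 ≤ ε) (hF : ∀ a t, dist (α (F (a, t))) (α a) ≤ ε)
    (hK : ∀ l t, dist (β (K (l, t))) (β l) ≤ ε) (m : M) (s : ℝ) :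
    dist (proj α β h (endsInverse hi hj F K (mid m s))) (α (i m)) ≤ ε :=
  endsInverse_mid_induction hi hj F K (P := fun z => dist (proj α β h z) (α (i m)) ≤ ε)
    (fun t => hF _ _) (fun u => by simpa using hε) (fun t => h m ▸ hK _ _)

lemma controlledHomotopic_endsInverse_map (hε : 0 ≤ ε)
    (hF : ∀ a t, dist (α (F (a, t))) (α a) ≤ ε) (hK : ∀ l t, dist (β (K (l, t))) (β l) ≤ ε) :
    ControlledHomotopic (proj α β h) (proj α β h) ε
      (endsInverse hi hj F K ∘ map f id g (fun _ => rfl) (fun _ => rfl)) id := by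
  let G : RealHomotopy i (f' ∘ f ∘ i) := F.compRight hi
  let H : RealHomotopy j (g' ∘ g ∘ j) := K.compRight hj
  have map_map : endsInverse hi hj F K ∘ map f id g (fun _ => rfl) (fun _ => rfl) =
      reattach G.symm H.symm ∘ map (f' ∘ f) id (g' ∘ g) (fun _ => rfl) (fun _ => rfl) := by
    funext z
    induction z using induction <;> simp [endsInverse, G, H]
  have straighten := (controlledHomotopic_reattach_map F K hi hj h
    (q := proj α β h ∘ reattach G.symm H.symm) hF hK fun m s =>
      reattach_mid_induction _ _ (P := fun z => dist (proj α β h z) (α (i m)) ≤ ε)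
        (fun t => hF _ _) (fun u => by simpa using hε) (fun t => h m ▸ hK _ _)).comp_left_of_comm
    (continuous_reattach G.symm H.symm)
  have cancel : ControlledHomotopic (proj α β h) (proj α β h) ε
      (reattach G.symm H.symm ∘ reattach G H) id :=
    controlledHomotopic_reattach_symm G H hε (fun m _ t => hF _ _)
      (fun m _ t => (congrArg _ (h m)).trans_le (hK _ _)) (fun m s t => by simpa using hε)
  rw [map_map]
  exact straighten.symm.trans cancel

end EndsInverse

variable [TopologicalSpace A'] [TopologicalSpace L'] {α : A' → V} {β : L' → V}
  (h : ∀ m, α (f (i m)) = β (g (j m))) {ε : ℝ}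
  (F : RealHomotopy id (f' ∘ f)) (K : RealHomotopy id (g' ∘ g))
  (F' : RealHomotopy id (f ∘ f')) (K' : RealHomotopy id (g ∘ g'))

lemma controlledHomotopic_leftInverse_endsInverse (hε : 0 ≤ ε) (hf : Continuous f)
    (hf' : Continuous f') (hg : Continuous g) (hg' : Continuous g')
    (hF : ∀ a t, dist (α (f (F (a, t)))) (α (f a)) ≤ ε)
    (hK : ∀ l t, dist (β (g (K (l, t)))) (β (g l)) ≤ ε)
    (hF' : ∀ a t, dist (α (F' (a, t))) (α a) ≤ ε) (hK' : ∀ l t, dist (β (K' (l, t))) (β l) ≤ ε) :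
    ControlledHomotopic (proj α β h) (proj α β h) (3 * ε)
      (endsInverse (i := f ∘ i) (j := g ∘ j) (hf.comp hi) (hg.comp hj) F' K' ∘
        reattach (F.compRight hi) (K.compRight hj) ∘ endsInverse hi hj F K) id := by
  let G : RealHomotopy i (f' ∘ f ∘ i) := F.compRight hi
  let H : RealHomotopy j (g' ∘ g ∘ j) := K.compRight hj
  let N' := endsInverse (i := f ∘ i) (j := g ∘ j) (hf.comp hi) (hg.comp hj) F' K'
  have hN' : Continuous N' := continuous_endsInverse _ _ _ _ hf hg
  have N'_mid (m : M) (s : ℝ) : dist (proj α β h (N' (mid m s))) (α (f (i m))) ≤ ε :=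
    dist_proj_endsInverse_mid_le (hf.comp hi) (hg.comp hj) F' K' h hε hF' hK' m s
  have cancel := controlledHomotopic_reattach_symm G.symm H.symm (q := proj α β h ∘ N')
    (ε := ε + ε) (by positivity)
    (fun m s t => (dist_triangle_right _ _ _).trans (add_le_add (hF _ _) (N'_mid m s)))
    (fun m s t => (dist_triangle_right _ _ _).trans
      (add_le_add (h m ▸ hK _ _) (N'_mid m s)))
    (fun m s t => (dist_triangle_right _ _ _).trans (add_le_add (N'_mid m t) (N'_mid m s)))
  rw [G.symm_symm, H.symm_symm] at cancel
  have N'_map := controlledHomotopic_endsInverse_map (hf.comp hi) (hg.comp hj) F' K' h hε hF' hK'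
  have hmap : Continuous (map f' id g' (fun _ => rfl) (fun _ => rfl) :
      DoubleCylinder (f ∘ i) (g ∘ j) → DoubleCylinder (f' ∘ f ∘ i) (g' ∘ g ∘ j)) :=
    continuous_map _ _ hf' continuous_id hg'
  have cancel' := ((cancel.comp_right hmap).comp_left_of_comm hN').of_dist_base_le
    N'_map.dist_left_le
  exact (cancel'.mono (by linarith)).trans (N'_map.mono (by linarith))

lemma dist_proj_endsInverse_le (hε : 0 ≤ ε) (hF : ∀ a t, dist (α (f (F (a, t)))) (α (f a)) ≤ ε)
    (hK : ∀ l t, dist (β (g (K (l, t)))) (β (g l)) ≤ ε)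
    (hF' : ∀ a t, dist (α (F' (a, t))) (α a) ≤ ε) (hK' : ∀ l t, dist (β (K' (l, t))) (β l) ≤ ε)
    (z : DoubleCylinder (f ∘ i) (g ∘ j)) :
    dist (proj (α ∘ f) (β ∘ g) h (endsInverse hi hj F K z)) (proj α β h z) ≤ ε := by
  induction z using induction with
  | left a =>
    have := hF' a 1
    rwa [F'.map_one] at this
  | mid m s => exact dist_proj_endsInverse_mid_le hi hj F K h hε hF hK m s
  | right l =>
    have := hK' l 1
    rwa [K'.map_one] at this

lemma dist_proj_endsInverse_reattach_le (hf : Continuous f) (hg : Continuous g) (hε : 0 ≤ ε)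
    (hF : ∀ a t, dist (α (f (F (a, t)))) (α (f a)) ≤ ε)
    (hK : ∀ l t, dist (β (g (K (l, t)))) (β (g l)) ≤ ε)
    (hF' : ∀ a t, dist (α (F' (a, t))) (α a) ≤ ε) (hK' : ∀ l t, dist (β (K' (l, t))) (β l) ≤ ε)
    (z : DoubleCylinder i j) :
    dist (proj α β h (endsInverse (i := f ∘ i) (j := g ∘ j) (hf.comp hi) (hg.comp hj) F' K'
      (reattach (F.compRight hi) (K.compRight hj) z))) (proj (α ∘ f) (β ∘ g) h z) ≤ ε := by
  let N' := endsInverse (i := f ∘ i) (j := g ∘ j) (hf.comp hi) (hg.comp hj) F' K'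
  induction z using induction with
  | left a => exact (dist_self _).trans_le hε
  | mid m s =>
    exact reattach_mid_induction _ _
      (P := fun w => dist (proj α β h (N' w)) (α (f (i m))) ≤ ε) (fun t => hF _ _)
      (dist_proj_endsInverse_mid_le (hf.comp hi) (hg.comp hj) F' K' h hε hF' hK' m)
      (fun t => (congrArg _ (h m)).trans_le (hK _ _))
  | right l => exact (dist_self _).trans_le hε

/-- `endsInverse` is a left inverse of `map f id g` which itself has a left inverse, hence it is a
two-sided inverse. -/
lemma isControlledEquiv_map_ends (hi : Continuous i) (hj : Continuous j)
    (hf : IsControlledEquiv α f) (hg : IsControlledEquiv β g) :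
    IsControlledEquiv (proj α β h : DoubleCylinder (f ∘ i) (g ∘ j) → V)
      (map f id g (fun _ => rfl) (fun _ => rfl)) := by
  have hmap : Continuous (map f id g (fun _ => rfl) (fun _ => rfl) :
      DoubleCylinder i j → DoubleCylinder (f ∘ i) (g ∘ j)) :=
    continuous_map _ _ hf.continuous continuous_id hg.continuous
  have proj_map : proj α β h ∘ map f id g (fun _ => rfl) (fun _ => rfl) =
      proj (i := i) (j := j) (α ∘ f) (β ∘ g) h := by
    funext z
    induction z using induction <;> rfl
  refine ⟨hmap, fun ε hε => ?_⟩
  obtain ⟨δ, hδ, rfl⟩ : ∃ δ > 0, 3 * (3 * δ) = ε := ⟨ε / 9, by positivity, by ring⟩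
  obtain ⟨f', hf', ⟨F, hF⟩, ⟨F', hF'⟩⟩ := hf.exists_inverse δ hδ
  obtain ⟨g', hg', ⟨K, hK⟩, ⟨K', hK'⟩⟩ := hg.exists_inverse δ hδ
  have hN := continuous_endsInverse hi hj F K hf' hg'
  have N_map := controlledHomotopic_endsInverse_map hi hj F K (α := α ∘ f) (β := β ∘ g) h hδ.le
    hF hK
  rw [← proj_map] at N_map
  refine ⟨endsInverse hi hj F K, hN, N_map.symm.mono (by linarith), .symm ?_⟩
  refine .comp_of_leftInverse_leftInverse (by positivity) hmap hN
    ((continuous_endsInverse _ _ _ _ hf.continuous hg.continuous).comp (continuous_reattach _ _))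
    (N_map.mono (by linarith)) (controlledHomotopic_leftInverse_endsInverse hi hj h F K F' K' hδ.le
      hf.continuous hf' hg.continuous hg' hF hK hF' hK') (fun z => ?_) (fun z => ?_)
  · refine (Eq.trans_le ?_ (dist_proj_endsInverse_le hi hj h F K F' K' hδ.le hF hK hF' hK'
      z)).trans (by linarith : δ ≤ 3 * δ)
    rw [← proj_map, Function.comp_apply]
  · refine (Eq.trans_le ?_ (dist_proj_endsInverse_reattach_le hi hj h F K F' K' hf.continuous
      hg.continuous hδ.le hF hK hF' hK' z)).trans (by linarith : δ ≤ 3 * δ)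
    rw [← proj_map, Function.comp_apply, Function.comp_apply]

end Ends

section Middle

variable {A M M' L V : Type*} [TopologicalSpace A] [TopologicalSpace M] [TopologicalSpace L]
  [PseudoMetricSpace V] {i : M → A} {j : M → L} (hi : Continuous i)
  (hj : Continuous j) {k : M' → M} {k' : M → M'}

/-- The right homotopy inverse of `map id k id` determined by a right homotopy inverse `k'` of
`k`. -/
def midInverse (K : RealHomotopy id (k ∘ k')) :
    DoubleCylinder i j → DoubleCylinder (i ∘ k) (j ∘ k) :=
  map (i := i ∘ k ∘ k') (j := j ∘ k ∘ k') id k' id (fun _ => rfl) (fun _ => rfl) ∘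
    reattach (K.compLeft hi) (K.compLeft hj)

variable {α : A → V} {β : L → V} (h : ∀ m, α (i m) = β (j m)) {ε : ℝ}
  (K : RealHomotopy id (k ∘ k'))

lemma controlledHomotopic_map_midInverse (hε : 0 ≤ ε)
    (hK : ∀ m t, dist (α (i (K (m, t)))) (α (i m)) ≤ ε) :
    ControlledHomotopic (proj α β h) (proj α β h) ε
      (map id k id (fun _ => rfl) (fun _ => rfl) ∘ midInverse hi hj K) id := by
  have map_map : map (i' := i) (j' := j) id k id (fun _ => rfl) (fun _ => rfl) ∘
      midInverse hi hj K =
      map (i := i ∘ k ∘ k') (j := j ∘ k ∘ k') (i' := i) (j' := j) id (k ∘ k') id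
        (fun _ => rfl) (fun _ => rfl) ∘ reattach (K.compLeft hi) (K.compLeft hj) := by
    rw [midInverse, ← Function.comp_assoc]
    congr 1
    funext z
    induction z using induction <;> simp
  rw [map_map]
  exact controlledHomotopic_map_reattach K hi hj h hε hK

variable [TopologicalSpace M'] (K' : RealHomotopy id (k' ∘ k))

lemma continuous_midInverse (hk' : Continuous k') : Continuous (midInverse hi hj K) :=
  (continuous_map _ _ continuous_id hk' continuous_id).comp (continuous_reattach _ _)

lemma controlledHomotopic_midInverse_rightInverse (hk : Continuous k) (hk' : Continuous k')
    (hε : 0 ≤ ε) (hK : ∀ m t, dist (α (i (K (m, t)))) (α (i m)) ≤ ε)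
    (hK' : ∀ m t, dist (α (i (k (K' (m, t))))) (α (i (k m))) ≤ ε) :
    ControlledHomotopic (proj (i := i ∘ k) (j := j ∘ k) α β fun m => h (k m))
      (proj (i := i ∘ k) (j := j ∘ k) α β fun m => h (k m)) (3 * ε)
      (midInverse hi hj K ∘ reattach (i' := i) (j' := j) (K.compLeft hi).symm (K.compLeft hj).symm ∘
        midInverse (hi.comp hk) (hj.comp hk) K') id := by
  let G : RealHomotopy i (i ∘ k ∘ k') := K.compLeft hi
  let H : RealHomotopy j (j ∘ k ∘ k') := K.compLeft hj
  let q := proj (i := i ∘ k) (j := j ∘ k) α β fun m => h (k m)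
  let e : DoubleCylinder (i ∘ k ∘ k') (j ∘ k ∘ k') → DoubleCylinder (i ∘ k) (j ∘ k) :=
    map id k' id (fun _ => rfl) (fun _ => rfl)
  have he : Continuous e := continuous_map _ _ continuous_id hk' continuous_id
  have dist_G (m : M) (t : ℝ) : dist (α (G (m, t))) (α (i (k (k' m)))) ≤ ε + ε :=
    (dist_triangle_right _ _ _).trans (add_le_add (hK m t) (by simpa using hK m 1))
  have cancel := controlledHomotopic_reattach_symm G.symm H.symm (q := q ∘ e) (ε := ε + ε)
    (by positivity) (fun m _ t => dist_G m _)
    (fun m _ t => (h (K (m, 1 - t)) ▸ dist_G m (1 - t) :))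
    (fun m _ t => (dist_self _).trans_le (by positivity))
  rw [G.symm_symm, H.symm_symm] at cancel
  have map_inverse := controlledHomotopic_map_midInverse (hi.comp hk) (hj.comp hk)
    (fun m => h (k m)) K' hε hK'
  have cancel' := ((cancel.comp_right (continuous_midInverse (hi.comp hk) (hj.comp hk) K'
    hk)).comp_left_of_comm he).of_dist_base_le map_inverse.dist_left_le
  exact (cancel'.mono (by linarith)).trans (map_inverse.mono (by linarith))

/-- `midInverse` is a right inverse of `map id k id` which itself has a right inverse, hence it is
a two-sided inverse. -/
lemma isControlledEquiv_map_mid (hi : Continuous i) (hj : Continuous j)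
    (hk : IsControlledEquiv (α ∘ i) k) {i₀ : M' → A} {j₀ : M' → L} (hi₀ : ∀ m, i (k m) = i₀ m)
    (hj₀ : ∀ m, j (k m) = j₀ m) :
    IsControlledEquiv (proj α β h : DoubleCylinder i j → V) (map id k id hi₀ hj₀) := by
  obtain rfl : i ∘ k = i₀ := funext hi₀
  obtain rfl : j ∘ k = j₀ := funext hj₀
  have hmap : Continuous (map (i := i ∘ k) (j := j ∘ k) (i' := i) (j' := j) id k id
      (fun _ => rfl) (fun _ => rfl)) := continuous_map _ _ continuous_id hk.continuous continuous_id
  have proj_map : proj α β h ∘ map id k id (fun _ => rfl) (fun _ => rfl) =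
      proj (i := i ∘ k) (j := j ∘ k) α β fun m => h (k m) := by
    funext z
    induction z using induction <;> rfl
  refine ⟨hmap, fun ε hε => ?_⟩
  obtain ⟨δ, hδ, rfl⟩ : ∃ δ > 0, 4 * (3 * δ) = ε := ⟨ε / 12, by positivity, by ring⟩
  obtain ⟨k', hk', ⟨K', hK'⟩, ⟨K, hK⟩⟩ := hk.exists_inverse δ hδ
  have hR := continuous_midInverse hi hj K hk'
  have map_R := controlledHomotopic_map_midInverse hi hj h K hδ.le hK
  have R_inverse := controlledHomotopic_midInverse_rightInverse hi hj h K K' hk.continuous hk'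
    hδ.le hK hK'
  rw [← proj_map] at R_inverse
  exact ⟨midInverse hi hj K, hR, (ControlledHomotopic.comp_of_rightInverse_rightInverse
    (by positivity) hmap hR ((continuous_reattach _ _).comp (continuous_midInverse _ _ _
      hk.continuous)) (map_R.mono (by linarith)) R_inverse).symm, map_R.symm.mono (by linarith)⟩

end Middle

theorem isControlledEquiv_map {A A' M M' L L' V : Type*} [TopologicalSpace A] [TopologicalSpace A']
    [TopologicalSpace M] [TopologicalSpace M'] [TopologicalSpace L] [TopologicalSpace L']
    [PseudoMetricSpace V] {i : M → A} {j : M → L} {i' : M' → A'} {j' : M' → L'} {f : A → A'}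
    {k : M → M'} {g : L → L'} (hi : Continuous i) (hj : Continuous j) (hi' : Continuous i')
    (hj' : Continuous j') (hki : ∀ m, i' (k m) = f (i m)) (hkj : ∀ m, j' (k m) = g (j m))
    {α : A' → V} {β : L' → V} (h : ∀ m, α (i' m) = β (j' m)) (hf : IsControlledEquiv α f)
    (hk : IsControlledEquiv (α ∘ i') k) (hg : IsControlledEquiv β g) :
    IsControlledEquiv (proj α β h) (map f k g hki hkj) := by
  have h_comp : map f k g hki hkj = map (i := f ∘ i) (j := g ∘ j) id k id hki hkj ∘
      map f id g (fun _ => rfl) (fun _ => rfl) := by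
    funext z
    induction z using induction <;> simp
  have h' (m : M) : α (f (i m)) = β (g (j m)) := by rw [← hki, ← hkj, h]
  have proj_map : proj α β h ∘ map (i := f ∘ i) (j := g ∘ j) id k id hki hkj = proj α β h' := by
    funext z
    induction z using induction <;> simp [hki]
  rw [h_comp]
  exact (isControlledEquiv_map_mid h hi' hj' hk hki hkj).comp
    (proj_map ▸ isControlledEquiv_map_ends h' hi hj hf hg)

end DoubleCylinder

/-! ### Homotopy lifting over subsets of the base -/

section Lifting

variable {V E Z : Type} [MetricSpace V] [TopologicalSpace E] [TopologicalSpace Z]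

/-- `p : E → V` lifts homotopies which run inside `B ⊆ V`. The lift is stationary outside the time
interval `[0, 1]`, whence the `clamp`. -/
def LiftsHomotopies (p : E → V) (B : Set V) : Prop :=
  ∀ (Z : Type) [TopologicalSpace Z] (f : Z → E) (h : Z × ℝ → V), Continuous f → Continuous h →
    (∀ z t, 0 ≤ t → t ≤ 1 → h (z, t) ∈ B) → (∀ z, h (z, 0) = p (f z)) →
    ∃ H : Z × ℝ → E, Continuous H ∧ (∀ z, H (z, 0) = f z) ∧ ∀ z t, p (H (z, t)) = h (z, clamp t)

/-- The base path swept out by the first lift backwards and the second one forwards contracts along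
itself onto its common endpoint; lifting this contraction joins the two endpoints upstairs. -/
lemma LiftsHomotopies.controlledHomotopic_of_lifts {p : E → V} {B : Set V}
    (hB : LiftsHomotopies p B) {γ : Z × ℝ → V} (hγ : Continuous γ)
    (γ_mem : ∀ z t, 0 ≤ t → t ≤ 1 → γ (z, t) ∈ B)
    {F G : Z × ℝ → E} (hF : Continuous F) (hG : Continuous G) (h₀ : ∀ z, F (z, 0) = G (z, 0))
    (pF : ∀ z t, 0 ≤ t → t ≤ 1 → p (F (z, t)) = γ (z, t))
    (pG : ∀ z t, 0 ≤ t → t ≤ 1 → p (G (z, t)) = γ (z, t)) :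
    ControlledHomotopic p (fun z => γ (z, 1)) 0 (fun z => F (z, 1)) fun z => G (z, 1) := by
  let path (w : Z × ℝ) : E := if w.2 ≤ 0 then F (w.1, clamp (-w.2)) else G (w.1, clamp w.2)
  have continuous_path : Continuous path := by
    refine Continuous.if_le (by fun_prop) (by fun_prop) (by fun_prop) (by fun_prop) ?_
    rintro ⟨z, t⟩ (rfl : t = 0)
    simp [h₀]
  let r (s t : ℝ) : ℝ := max (clamp t) (clamp |s|)
  have r_nonneg (s t : ℝ) : 0 ≤ r s t := le_max_of_le_left (clamp_nonneg t)
  have r_le_one (s t : ℝ) : r s t ≤ 1 := max_le (clamp_le_one t) (clamp_le_one _)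
  have p_path (w : Z × ℝ) : γ (w.1, r w.2 0) = p (path w) := by
    have hr : r w.2 0 = clamp |w.2| := by
      simp only [r, clamp_zero, max_eq_right (clamp_nonneg _)]
    rw [hr]
    simp only [path]
    split_ifs with h
    · rw [pF _ _ (clamp_nonneg _) (clamp_le_one _), abs_of_nonpos h]
    · rw [pG _ _ (clamp_nonneg _) (clamp_le_one _), abs_of_pos (not_le.1 h)]
  obtain ⟨H, hH, H_zero, pH⟩ := hB (Z × ℝ) path (fun w => γ (w.1.1, r w.1.2 w.2)) continuous_path
    (by fun_prop) (fun w t _ _ => γ_mem _ _ (r_nonneg _ _) (r_le_one _ _)) p_path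
  have r_end {s t : ℝ} (h : |s| = 1 ∨ t = 1) : r s t = 1 := by
    obtain h | h := h <;> simp [r, h, clamp_le_one]
  have first : ControlledHomotopic p (fun z => γ (z, 1)) 0 (fun z => F (z, 1))
      fun z => H ((z, -1), 1) :=
    ⟨⟨fun w => H ((w.1, -1), w.2), by fun_prop, fun z => by simp [H_zero, path], fun _ => rfl⟩,
      fun z t => by simp [pH, r_end (.inl (abs_neg 1 |>.trans abs_one))]⟩
  have second : ControlledHomotopic p (fun z => γ (z, 1)) 0 (fun z => H ((z, -1), 1))
      fun z => H ((z, 1), 1) :=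
    ⟨⟨fun w => H ((w.1, 2 * w.2 - 1), 1), by fun_prop, fun z => by simp, fun z => by norm_num⟩,
      fun z t => by simp [pH, r_end (.inr rfl)]⟩
  have third : ControlledHomotopic p (fun z => γ (z, 1)) 0 (fun z => G (z, 1))
      fun z => H ((z, 1), 1) :=
    ⟨⟨fun w => H ((w.1, 1), w.2), by fun_prop, fun z => by simp [H_zero, path], fun _ => rfl⟩,
      fun z t => by simp [pH, r_end (.inl abs_one)]⟩
  exact (first.trans second).trans third.symm

/-- The part of `p` over `S`, as a map into the ambient space of the base. -/
abbrev restrictOver (p : E → V) (S : Set V) : p ⁻¹' S → V := fun e => p e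

lemma ControlledHomotopic.codRestrict {p : E → V} {b : Z → V} {S : Set V} (hb : ∀ z, b z ∈ S)
    {f g : Z → p ⁻¹' S} (H : ControlledHomotopic p b 0 (fun z => (f z : E)) fun z => g z) :
    ControlledHomotopic (restrictOver p S) b 0 f g := by
  obtain ⟨H, hH⟩ := H
  have mem (w : Z × ℝ) : p (H w) ∈ S := dist_le_zero.1 (hH w.1 w.2) ▸ hb w.1
  exact ⟨⟨fun w => ⟨H w, mem w⟩, by fun_prop, fun z => Subtype.ext (H.map_zero z),
    fun z => Subtype.ext (H.map_one z)⟩, hH⟩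

end Lifting

section Trivialization

/-- A fibre homotopy equivalence between the part of `p : E → V` over `C` and the product
projection `C × L → C`. -/
structure FiberTrivialization {V E : Type} [PseudoMetricSpace V] [TopologicalSpace E] (p : E → V)
    (C : Set V) (L : Type) [TopologicalSpace L] where
  /-- The trivialising map. -/
  toProd : p ⁻¹' C → C × L
  /-- Its fibre homotopy inverse. -/
  ofProd : C × L → p ⁻¹' C
  continuous_toProd : Continuous toProd
  continuous_ofProd : Continuous ofProd
  toProd_fst : ∀ e, (toProd e).1 = p e
  apply_ofProd : ∀ x, p (ofProd x) = x.1
  ofProd_toProd : ControlledHomotopic (restrictOver p C) (restrictOver p C) 0 id (ofProd ∘ toProd)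
  toProd_ofProd : ControlledHomotopic (fun x : C × L => (x.1 : V)) (fun x => (x.1 : V)) 0 id
    (toProd ∘ ofProd)

lemma exists_realHomotopy {X Y : Type*} [TopologicalSpace X] [TopologicalSpace Y] {f g : C(X, Y)}
    (h : f.Homotopic g) : Nonempty (RealHomotopy f g) := by
  obtain ⟨H⟩ := h
  refine ⟨⟨fun z => H (Set.projIcc 0 1 zero_le_one z.2, z.1), by fun_prop, fun x => ?_,
    fun x => ?_⟩⟩
  · simp
  · simp

variable {V E L L' : Type} [TopologicalSpace E] [TopologicalSpace L] [TopologicalSpace L']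

lemma FiberTrivialization.nonempty_congr [PseudoMetricSpace V] {p : E → V} {C : Set V}
    (T : FiberTrivialization p C L)
    (e : ContinuousMap.HomotopyEquiv L L') : Nonempty (FiberTrivialization p C L') := by
  obtain ⟨G⟩ := exists_realHomotopy e.left_inv.symm
  obtain ⟨K⟩ := exists_realHomotopy e.right_inv.symm
  have hT := T.continuous_toProd
  have hT' := T.continuous_ofProd
  refine ⟨⟨Prod.map id e.toFun ∘ T.toProd, T.ofProd ∘ Prod.map id e.invFun, by fun_prop,
    by fun_prop, T.toProd_fst, fun x => T.apply_ofProd _, T.ofProd_toProd.trans ?_, ?_⟩⟩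
  · exact ⟨⟨fun z => T.ofProd ((T.toProd z.1).1, G ((T.toProd z.1).2, z.2)), by fun_prop,
      fun x => by simp, fun x => by simp [Prod.map]⟩, fun x t => by
        simp [restrictOver, T.apply_ofProd, T.toProd_fst]⟩
  · have on_prod : ControlledHomotopic (fun x : C × L' => (x.1 : V)) (fun x => (x.1 : V)) 0 id
        (Prod.map id (e.toFun ∘ e.invFun)) :=
      ⟨⟨fun z => (z.1.1, K (z.1.2, z.2)), by fun_prop, fun x => by simp, fun x => by
        simp [Prod.map]⟩, by simp⟩
    exact on_prod.trans ((T.toProd_ofProd.comp_right (m := Prod.map id e.invFun)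
      (by fun_prop)).comp_left_of_comm (r := fun x : C × L' => (x.1 : V))
        (m := Prod.map id e.toFun) (by fun_prop))

section StarConvex

variable [NormedAddCommGroup V] [NormedSpace ℝ V] {p : E → V} {B C : Set V} {v : V}

lemma lineMap_mem_of_starConvex (hC : StarConvex ℝ v C) {b : V} (hb : b ∈ C) {t : ℝ} (h₀ : 0 ≤ t)
    (h₁ : t ≤ 1) : AffineMap.lineMap v b t ∈ C :=
  starConvex_iff_segment_subset.1 hC hb <| by
    rw [segment_eq_image_lineMap]
    exact ⟨t, ⟨h₀, h₁⟩, rfl⟩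

lemma LiftsHomotopies.exists_fiberTrivialization (hp : Continuous p) (hB : LiftsHomotopies p B)
    (hCB : C ⊆ B) (hC : StarConvex ℝ v C) : Nonempty (FiberTrivialization p C (p ⁻¹' {v})) := by
  obtain ⟨T, hT, T_zero, pT⟩ := hB (p ⁻¹' C) (fun e => e)
    (fun z => AffineMap.lineMap v (p z.1) (1 - z.2)) (by fun_prop) (by fun_prop)
    (fun e t h₀ h₁ => hCB (lineMap_mem_of_starConvex hC e.2 (by linarith) (by linarith)))
    (fun e => by simp)
  obtain ⟨S, hS, S_zero, pS⟩ := hB (C × p ⁻¹' {v}) (fun x => x.2)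
    (fun z => AffineMap.lineMap v (z.1.1 : V) z.2) (by fun_prop) (by fun_prop)
    (fun x t h₀ h₁ => hCB (lineMap_mem_of_starConvex hC x.1.2 h₀ h₁))
    (fun x => by simpa using x.2.2.symm)
  let α (e : p ⁻¹' C) : C × p ⁻¹' {v} := (⟨p e, e.2⟩, ⟨T (e, 1), by simp [pT]⟩)
  let β (x : C × p ⁻¹' {v}) : p ⁻¹' C := ⟨S (x, 1), by simp [pS]⟩
  have hα : Continuous α := by fun_prop
  have hβ : Continuous β := by fun_prop
  have βα : ControlledHomotopic (restrictOver p C) (restrictOver p C) 0 id (β ∘ α) := by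
    have := hB.controlledHomotopic_of_lifts (γ := fun z : p ⁻¹' C × ℝ =>
      AffineMap.lineMap v (p z.1) z.2) (F := fun z => T (z.1, 1 - z.2))
      (G := fun z => S (α z.1, z.2)) (by fun_prop)
      (fun e t h₀ h₁ => hCB (lineMap_mem_of_starConvex hC e.2 h₀ h₁)) (by fun_prop) (by fun_prop)
      (fun e => by simp [S_zero, α])
      (fun e t h₀ h₁ => by rw [pT, clamp_of_mem (by linarith) (by linarith), sub_sub_cancel])
      (fun e t h₀ h₁ => by rw [pS, clamp_of_mem h₀ h₁])
    refine .codRestrict (fun e => e.2) ?_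
    simpa [T_zero] using this
  have αβ : ControlledHomotopic p (fun _ => v) 0 (fun x => (x.2 : E)) fun x => T (β x, 1) := by
    have := hB.controlledHomotopic_of_lifts (γ := fun z : (C × p ⁻¹' {v}) × ℝ =>
      AffineMap.lineMap v (z.1.1 : V) (1 - z.2)) (F := fun z => S (z.1, 1 - z.2))
      (G := fun z => T (β z.1, z.2)) (by fun_prop)
      (fun x t h₀ h₁ => hCB (lineMap_mem_of_starConvex hC x.1.2 (by linarith) (by linarith)))
      (by fun_prop) (by fun_prop) (fun x => by simp [T_zero, β])
      (fun x t h₀ h₁ => by rw [pS, clamp_of_mem (by linarith) (by linarith)])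
      (fun x t h₀ h₁ => by rw [pT, clamp_of_mem h₀ h₁]; simp [β, pS])
    simpa [S_zero] using this
  obtain ⟨K, -⟩ := αβ.codRestrict (S := {v}) (f := fun x => x.2) (g := fun x => (α (β x)).2)
    fun _ => rfl
  exact ⟨⟨α, β, hα, hβ, fun _ => rfl, fun x => by simp [β, pS], βα,
    ⟨⟨fun z => (z.1.1, K z), by fun_prop, fun x => by simp, fun x => by simp [α, β, pS]⟩,
      by simp⟩⟩⟩

end StarConvex

end Trivialization

section Glue

lemma exists_continuous_glue {X Y : Type*} [TopologicalSpace X] [TopologicalSpace Y] {S T : Set X}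
    (hS : IsClosed S) (hT : IsClosed T) (hST : ∀ x, x ∈ S ∨ x ∈ T) {f : S → Y} {g : T → Y}
    (hf : Continuous f) (hg : Continuous g) (hfg : ∀ x hs ht, f ⟨x, hs⟩ = g ⟨x, ht⟩) :
    ∃ F : X → Y, Continuous F ∧ (∀ x hx, F x = f ⟨x, hx⟩) ∧ ∀ x hx, F x = g ⟨x, hx⟩ := by
  classical
  have mem_right {x : X} (h : x ∉ S) : x ∈ T := (hST x).resolve_left h
  let F (x : X) : Y := if h : x ∈ S then f ⟨x, h⟩ else g ⟨x, mem_right h⟩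
  have F_left (x : X) (hx : x ∈ S) : F x = f ⟨x, hx⟩ := dif_pos hx
  have F_right (x : X) (hx : x ∈ T) : F x = g ⟨x, hx⟩ := by
    by_cases h : x ∈ S
    · rw [F_left x h, hfg x h hx]
    · exact dif_neg h
  refine ⟨F, ?_, F_left, F_right⟩
  rw [← continuousOn_univ, ← Set.eq_univ_of_forall (s := S ∪ T) hST]
  refine ContinuousOn.union_of_isClosed ?_ ?_ hS hT <;> rw [continuousOn_iff_continuous_domRestrict]
  · exact hf.congr fun x => (F_left x x.2).symm
  · exact hg.congr fun x => (F_right x x.2).symm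

end Glue

/-! ### Decomposing a total space along a collared subset of the base -/

section Collapse

/-- An `ε`-small collar of `D` in `C`: a homotopy `push` of `C` rel `D` together with a function
`height` telling how far the points already pushed into `D` have travelled. -/
structure Collar {V : Type*} [PseudoMetricSpace V] (C D : Set V) (ε : ℝ) where
  /-- The homotopy of `C`. -/
  push : V × ℝ → V
  /-- Nonnegative only at points and times where `push` has reached `D`. -/
  height : V × ℝ → ℝ
  continuous_push : Continuous push
  continuous_height : Continuous height
  push_zero : ∀ b ∈ C, push (b, 0) = b
  height_zero : ∀ b ∈ C, height (b, 0) ≤ 0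
  push_mem : ∀ b ∈ C, ∀ t, 0 ≤ t → t ≤ 1 → push (b, t) ∈ C
  dist_push_le : ∀ b ∈ C, ∀ t, 0 ≤ t → t ≤ 1 → dist (push (b, t)) b ≤ ε
  push_mem_of_height : ∀ b ∈ C, ∀ t, 0 ≤ t → t ≤ 1 → 0 ≤ height (b, t) → push (b, t) ∈ D
  push_of_mem : ∀ b ∈ D, ∀ t, 0 ≤ t → t ≤ 1 → push (b, t) = b
  height_of_mem : ∀ b ∈ D, ∀ t, 0 ≤ t → t ≤ 1 → height (b, t) = t

attribute [fun_prop] Collar.continuous_push Collar.continuous_height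

variable {V E : Type} [TopologicalSpace E]

/-- The part of `p : E → V` over `A ∩ C` included into the part over `A`. -/
abbrev interLeft (p : E → V) (A C : Set V) : p ⁻¹' (A ∩ C) → p ⁻¹' A :=
  Set.inclusion (Set.preimage_mono Set.inter_subset_left)

/-- The part of `p : E → V` over `A ∩ C` included into the part over `C`. -/
abbrev interRight (p : E → V) (A C : Set V) : p ⁻¹' (A ∩ C) → p ⁻¹' C :=
  Set.inclusion (Set.preimage_mono Set.inter_subset_right)

/-- The part of `p : E → V` over `A` included into the part over `A ∪ C`. -/
abbrev unionLeft (p : E → V) (A C : Set V) : p ⁻¹' A → p ⁻¹' (A ∪ C) :=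
  Set.inclusion (Set.preimage_mono Set.subset_union_left)

/-- The part of `p : E → V` over `C` included into the part over `A ∪ C`. -/
abbrev unionRight (p : E → V) (A C : Set V) : p ⁻¹' C → p ⁻¹' (A ∪ C) :=
  Set.inclusion (Set.preimage_mono Set.subset_union_right)

/-- The map from the homotopy union of the parts of `p : E → V` over `A` and `C` to the union. -/
def collapse (p : E → V) (A C : Set V) :
    DoubleCylinder (interLeft p A C) (interRight p A C) → p ⁻¹' (A ∪ C) :=
  DoubleCylinder.lift (unionLeft p A C) (fun z => unionLeft p A C (interLeft p A C z.1))
    (unionRight p A C) (fun _ => rfl) (fun _ => rfl)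

variable {p : E → V} {A B C : Set V} {ε : ℝ}

lemma continuous_collapse : Continuous (collapse p A C) :=
  DoubleCylinder.continuous_lift _ _ (by fun_prop) (by fun_prop) (by fun_prop)

variable [MetricSpace V]

/-- A homotopy of the part of `p` over `A ∪ C` which covers the collar `κ` over `C` and is
stationary, as seen from the base, over `A`. -/
structure CollarLift (p : E → V) (A C : Set V) (κ : Collar C (A ∩ C) ε) where
  /-- The homotopy. -/
  toFun : p ⁻¹' (A ∪ C) × ℝ → E
  continuous_toFun : Continuous toFun
  map_zero : ∀ e, toFun (e, 0) = e
  proj_left : ∀ (e : p ⁻¹' (A ∪ C)) (t), p e ∈ A → p (toFun (e, t)) = p e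
  proj_right : ∀ (e : p ⁻¹' (A ∪ C)) (t), p e ∈ C → p (toFun (e, t)) = κ.push (p e, clamp t)

lemma LiftsHomotopies.nonempty_collarLift (hB : LiftsHomotopies p B) (hp : Continuous p)
    (hA : IsClosed A) (hC : IsClosed C) (hACB : A ∪ C ⊆ B) (κ : Collar C (A ∩ C) ε) :
    Nonempty (CollarLift p A C κ) := by
  obtain ⟨h, hh, h_left, h_right⟩ := exists_continuous_glue (X := p ⁻¹' (A ∪ C) × ℝ)
    (S := {z | p z.1 ∈ A}) (T := {z | p z.1 ∈ C}) (f := fun z => p z.1.1)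
    (g := fun z => κ.push (p z.1.1, clamp z.1.2)) (hA.preimage (by fun_prop))
    (hC.preimage (by fun_prop)) (fun z => z.1.2) (by fun_prop)
    (by fun_prop)
    fun z hs ht => (κ.push_of_mem _ ⟨hs, ht⟩ _ (clamp_nonneg _) (clamp_le_one _)).symm
  have h_mem (e : p ⁻¹' (A ∪ C)) (t : ℝ) : h (e, t) ∈ B := by
    rcases e.2 with he | he
    · rw [h_left _ he]
      exact hACB e.2
    · rw [h_right _ he]
      exact hACB (.inr (κ.push_mem _ he _ (clamp_nonneg _) (clamp_le_one _)))
  have h_zero (e : p ⁻¹' (A ∪ C)) : h (e, 0) = p e := by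
    rcases e.2 with he | he
    · rw [h_left _ he]
    · rw [h_right _ he, clamp_zero, κ.push_zero _ he]
  obtain ⟨U, hU, U_zero, pU⟩ := hB _ (fun e : p ⁻¹' (A ∪ C) => (e : E)) h (by fun_prop) hh
    (fun e t _ _ => h_mem e t) h_zero
  exact ⟨⟨U, hU, U_zero, fun e t he => by rw [pU, h_left _ he], fun e t he => by
    rw [pU, h_right _ he, clamp_of_mem (clamp_nonneg t) (clamp_le_one t)]⟩⟩

namespace CollarLift

instance {κ : Collar C (A ∩ C) ε} : CoeFun (CollarLift p A C κ) fun _ => p ⁻¹' (A ∪ C) × ℝ → E :=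
  ⟨toFun⟩

attribute [fun_prop] continuous_toFun

variable {κ : Collar C (A ∩ C) ε} (U : CollarLift p A C κ)

lemma mem_left (e : p ⁻¹' (A ∪ C)) (he : p e ∈ A) (t : ℝ) : p (U (e, t)) ∈ A := by
  rwa [U.proj_left e t he]

lemma mem_right (e : p ⁻¹' (A ∪ C)) (he : p e ∈ C) (t : ℝ) : p (U (e, t)) ∈ C := by
  rw [U.proj_right e t he]
  exact κ.push_mem _ he _ (clamp_nonneg t) (clamp_le_one t)

lemma mem_inter_of_height (e : p ⁻¹' (A ∪ C)) (he : p e ∈ C) {t : ℝ}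
    (h : 0 ≤ κ.height (p e, clamp t)) : p (U (e, t)) ∈ A ∩ C := by
  rw [U.proj_right e t he]
  exact κ.push_mem_of_height _ he _ (clamp_nonneg t) (clamp_le_one t) h

lemma mem_union (e : p ⁻¹' (A ∪ C)) (t : ℝ) : p (U (e, t)) ∈ A ∪ C :=
  e.2.imp (U.mem_left e · t) (U.mem_right e · t)

lemma dist_le (hε : 0 ≤ ε) (e : p ⁻¹' (A ∪ C)) (t : ℝ) : dist (p (U (e, t))) (p e) ≤ ε := by
  rcases e.2 with he | he
  · rw [U.proj_left e t he, dist_self]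
    exact hε
  · rw [U.proj_right e t he]
    exact κ.dist_push_le _ he _ (clamp_nonneg t) (clamp_le_one t)

/-- The homotopy restricted to the part over `A`. -/
def pushLeft (z : p ⁻¹' A × ℝ) : p ⁻¹' A :=
  ⟨U (unionLeft p A C z.1, z.2), U.mem_left (unionLeft p A C z.1) z.1.2 z.2⟩

/-- The homotopy restricted to the part over `A ∩ C`. -/
def pushInter (z : p ⁻¹' (A ∩ C) × ℝ) : p ⁻¹' (A ∩ C) :=
  ⟨U (unionLeft p A C (interLeft p A C z.1), z.2),
    U.mem_left (unionLeft p A C (interLeft p A C z.1)) z.1.2.1 z.2,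
    U.mem_right (unionLeft p A C (interLeft p A C z.1)) z.1.2.2 z.2⟩

@[fun_prop]
lemma continuous_pushLeft : Continuous U.pushLeft := by
  unfold pushLeft
  fun_prop

@[fun_prop]
lemma continuous_pushInter : Continuous U.pushInter := by
  unfold pushInter
  fun_prop

/-- Over `C` the homotopy lifts to the homotopy union: once a point has been pushed into `A ∩ C`, it
travels down the cylinder according to its height. -/
lemma exists_pushRight (hp : Continuous p) :
    ∃ R : p ⁻¹' C × ℝ → DoubleCylinder (interLeft p A C) (interRight p A C), Continuous R ∧
      (∀ c, R (c, 0) = .right c) ∧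
      (∀ c t, (collapse p A C (R (c, t)) : E) = U (unionRight p A C c, t)) ∧
      ∀ m t, R (interRight p A C m, t) = .mid (U.pushInter (m, t)) (1 - clamp t) := by
  let height (z : p ⁻¹' C × ℝ) : ℝ := κ.height (p z.1, clamp z.2)
  have continuous_height : Continuous height := by fun_prop
  obtain ⟨R, hR, R_nonpos, R_nonneg⟩ := exists_continuous_glue
    (isClosed_le continuous_height continuous_const)
    (isClosed_le continuous_const continuous_height) (fun z => le_total (height z) 0)
    (f := fun z => (.right ⟨U (unionRight p A C z.1.1, z.1.2),
      U.mem_right (unionRight p A C z.1.1) z.1.1.2 z.1.2⟩ :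
        DoubleCylinder (interLeft p A C) (interRight p A C)))
    (g := fun z => .mid ⟨U (unionRight p A C z.1.1, z.1.2),
      U.mem_inter_of_height (unionRight p A C z.1.1) z.1.1.2 z.2⟩ (1 - height z)) (by fun_prop)
    (by fun_prop) fun z hs ht => by
      have : height z = 0 := le_antisymm hs ht
      simp only [this, sub_zero, DoubleCylinder.mid_one]
  refine ⟨R, hR, fun c => ?_, fun c t => ?_, fun m t => ?_⟩
  · rw [R_nonpos (c, 0) (by simpa [height] using κ.height_zero _ c.2)]
    exact congrArg _ (Subtype.ext (U.map_zero _))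
  · rcases le_total (height (c, t)) 0 with h | h
    · rw [R_nonpos (c, t) h]
      rfl
    · rw [R_nonneg (c, t) h]
      rfl
  · have height_inter : height (interRight p A C m, t) = clamp t :=
      κ.height_of_mem _ m.2 _ (clamp_nonneg t) (clamp_le_one t)
    rw [R_nonneg (interRight p A C m, t) ((clamp_nonneg t).trans_eq height_inter.symm)]
    simp only [height_inter]
    rfl

/-- The end of the homotopy lifts to the homotopy union and provides an inverse of `collapse`. -/
lemma exists_inverse (hp : Continuous p) (hA : IsClosed A) (hC : IsClosed C)
    {R : p ⁻¹' C × ℝ → DoubleCylinder (interLeft p A C) (interRight p A C)} (hR : Continuous R)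
    (R_inter : ∀ m t, R (interRight p A C m, t) = .mid (U.pushInter (m, t)) (1 - clamp t)) :
    ∃ ψ : p ⁻¹' (A ∪ C) → DoubleCylinder (interLeft p A C) (interRight p A C), Continuous ψ ∧
      (∀ a, ψ (unionLeft p A C a) = .left (U.pushLeft (a, 1))) ∧
      ∀ c, ψ (unionRight p A C c) = R (c, 1) := by
  obtain ⟨ψ, hψ, ψ_left, ψ_right⟩ := exists_continuous_glue (X := p ⁻¹' (A ∪ C))
    (S := {e | p e ∈ A}) (T := {e | p e ∈ C}) (hA.preimage (by fun_prop))
    (hC.preimage (by fun_prop)) (fun e => e.2)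
    (f := fun e => (.left (U.pushLeft (⟨e.1, e.2⟩, 1)) :
      DoubleCylinder (interLeft p A C) (interRight p A C)))
    (g := fun e => R (⟨e.1, e.2⟩, 1)) (by fun_prop) (by fun_prop) fun e hs ht => by
      have := R_inter ⟨e, hs, ht⟩ 1
      rw [clamp_one, sub_self, DoubleCylinder.mid_zero] at this
      exact this.symm
  exact ⟨ψ, hψ, fun a => ψ_left _ a.2, fun c => ψ_right _ c.2⟩

lemma controlledHomotopic_comp_collapse (hε : 0 ≤ ε)
    {R : p ⁻¹' C × ℝ → DoubleCylinder (interLeft p A C) (interRight p A C)} (hR : Continuous R)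
    (R_zero : ∀ c, R (c, 0) = .right c)
    (collapse_R : ∀ c t, (collapse p A C (R (c, t)) : E) = U (unionRight p A C c, t))
    (R_inter : ∀ m t, R (interRight p A C m, t) = .mid (U.pushInter (m, t)) (1 - clamp t))
    {ψ : p ⁻¹' (A ∪ C) → DoubleCylinder (interLeft p A C) (interRight p A C)}
    (ψ_left : ∀ a, ψ (unionLeft p A C a) = .left (U.pushLeft (a, 1)))
    (ψ_right : ∀ c, ψ (unionRight p A C c) = R (c, 1)) :
    ControlledHomotopic (restrictOver p (A ∪ C) ∘ collapse p A C)
      (restrictOver p (A ∪ C) ∘ collapse p A C) ε id (ψ ∘ collapse p A C) := by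
  refine DoubleCylinder.controlledHomotopic (a := fun z => .left (U.pushLeft z))
    (c := fun z => .mid (U.pushInter (z.1, z.2.2)) (z.2.1 * (1 - clamp z.2.2))) (l := R)
    (by fun_prop) (by fun_prop) hR ?_ ?_ ?_ ?_ ?_ ?_ ?_ ?_ ?_ ?_ ?_
  · intro m t _ _
    rw [zero_mul, DoubleCylinder.mid_zero]
    rfl
  · intro m t _ _
    rw [one_mul, R_inter]
  · exact fun x => congrArg _ (Subtype.ext (U.map_zero _))
  · exact R_zero
  · intro m s _ _
    rw [clamp_zero, sub_zero, mul_one]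
    exact congrArg (DoubleCylinder.mid · s) (Subtype.ext (U.map_zero _))
  · exact fun x => (ψ_left x).symm
  · exact fun x => (ψ_right x).symm
  · intro m s _ _
    rw [clamp_one, sub_self, mul_zero, DoubleCylinder.mid_zero]
    exact (ψ_left _).symm
  · exact fun x t _ _ => U.dist_le hε _ t
  · intro x t _ _
    change dist (p (collapse p A C (R (x, t)))) _ ≤ ε
    rw [collapse_R]
    exact U.dist_le hε _ t
  · exact fun x s t _ _ _ _ => U.dist_le hε _ t

end CollarLift

theorem LiftsHomotopies.isControlledEquiv_collapse (hB : LiftsHomotopies p B) (hp : Continuous p)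
    (hA : IsClosed A) (hC : IsClosed C) (hACB : A ∪ C ⊆ B)
    (hκ : ∀ ε > 0, Nonempty (Collar C (A ∩ C) ε)) :
    IsControlledEquiv (restrictOver p (A ∪ C)) (collapse p A C) := by
  refine ⟨continuous_collapse, fun ε hε => ?_⟩
  obtain ⟨κ⟩ := hκ ε hε
  obtain ⟨U⟩ := hB.nonempty_collarLift hp hA hC hACB κ
  obtain ⟨R, hR, R_zero, collapse_R, R_inter⟩ := U.exists_pushRight hp
  obtain ⟨ψ, hψ, ψ_left, ψ_right⟩ := U.exists_inverse hp hA hC hR R_inter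
  refine ⟨ψ, hψ,
    U.controlledHomotopic_comp_collapse hε.le hR R_zero collapse_R R_inter ψ_left ψ_right,
    ⟨⟨fun z => ⟨U z, U.mem_union z.1 z.2⟩, by fun_prop, fun e => ?_, fun e => ?_⟩,
      U.dist_le hε.le⟩⟩
  · exact Subtype.ext (U.map_zero e)
  · refine Subtype.ext ?_
    rcases e.2 with he | he
    · exact congrArg (fun d => (collapse p A C d : E)) (ψ_left ⟨e, he⟩).symm
    · exact (collapse_R ⟨e, he⟩ 1).symm.trans
        (congrArg (fun d => (collapse p A C d : E)) (ψ_right ⟨e, he⟩).symm)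

end Collapse

section Attach

variable {V E L : Type} [MetricSpace V] [TopologicalSpace E] [TopologicalSpace L] {p : E → V}
  {A B C : Set V}

namespace FiberTrivialization

lemma isControlledEquiv_toProd (T : FiberTrivialization p C L) :
    IsControlledEquiv (fun x : C × L => (x.1 : V)) T.toProd := by
  have toProd_fst : (fun x : C × L => (x.1 : V)) ∘ T.toProd = restrictOver p C :=
    funext T.toProd_fst
  refine .of_fiberwise_inverse T.continuous_toProd T.continuous_ofProd ?_ T.toProd_ofProd
  rw [toProd_fst]
  exact T.ofProd_toProd

/-- The fibrewise homotopy from the identity to `T.ofProd ∘ T.toProd`. -/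
def homotopy (T : FiberTrivialization p C L) : RealHomotopy id (T.ofProd ∘ T.toProd) :=
  T.ofProd_toProd.choose

lemma apply_homotopy (T : FiberTrivialization p C L) (z : p ⁻¹' C × ℝ) :
    p (T.homotopy z) = p z.1 :=
  dist_le_zero.1 (T.ofProd_toProd.choose_spec z.1 z.2)

/-- The map to the part of `p` over `A ∪ C` from the space glued from its part over `A` and the
product `C × L` trivialising it over `C`. -/
def attach (T : FiberTrivialization p C L) (A : Set V) :
    DoubleCylinder (interLeft p A C) (T.toProd ∘ interRight p A C) → p ⁻¹' (A ∪ C) :=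
  DoubleCylinder.lift (unionLeft p A C)
    (fun z => unionRight p A C (T.homotopy (interRight p A C z.1, z.2)))
    (fun x => unionRight p A C (T.ofProd x)) (fun m => by rw [RealHomotopy.map_zero]; rfl)
    (fun m => by rw [RealHomotopy.map_one]; rfl)

variable (T : FiberTrivialization p C L)

lemma attach_mid (m : p ⁻¹' (A ∩ C)) {s : ℝ} (hs₀ : 0 ≤ s) (hs₁ : s ≤ 1) :
    T.attach A (.mid m s) = unionRight p A C (T.homotopy (interRight p A C m, s)) :=
  DoubleCylinder.lift_mid m hs₀ hs₁

lemma continuous_attach : Continuous (T.attach A) := by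
  have hT := T.continuous_ofProd
  exact DoubleCylinder.continuous_lift _ _ (by fun_prop) (by fun_prop) (by fun_prop)

lemma restrictOver_comp_attach :
    restrictOver p (A ∪ C) ∘ T.attach A =
      DoubleCylinder.proj (restrictOver p A) (fun x => (x.1 : V))
        fun m => (T.toProd_fst (interRight p A C m)).symm := by
  ext z
  induction z using DoubleCylinder.induction with
  | left a => rfl
  | mid m s hs₀ hs₁ =>
    rw [Function.comp_apply, T.attach_mid m hs₀.le hs₁.le]
    exact T.apply_homotopy _
  | right x => exact T.apply_ofProd x

lemma controlledHomotopic_collapse_attach :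
    ControlledHomotopic (restrictOver p (A ∪ C)) (restrictOver p (A ∪ C) ∘ collapse p A C) 0
      (collapse p A C) (T.attach A ∘ DoubleCylinder.map id id T.toProd (fun _ => rfl)
        fun _ => rfl) := by
  refine DoubleCylinder.controlledHomotopic (a := fun z => unionLeft p A C z.1)
    (c := fun z => unionRight p A C (T.homotopy (interRight p A C z.1, z.2.1 * z.2.2)))
    (l := fun z => unionRight p A C (T.homotopy z)) (by fun_prop) (by fun_prop) (by fun_prop)
    (fun m t _ _ => ?_) (fun m t _ _ => by rw [one_mul]) (fun x => rfl)
    (fun x => by rw [T.homotopy.map_zero]; rfl) (fun m s _ _ => ?_) (fun x => rfl)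
    (fun x => by rw [T.homotopy.map_one]; rfl) (fun m s hs₀ hs₁ => ?_) ?_ ?_ ?_
  · rw [zero_mul, T.homotopy.map_zero]
    rfl
  · rw [mul_zero, T.homotopy.map_zero]
    rfl
  · rw [mul_one, Function.comp_apply, DoubleCylinder.map_mid]
    exact (T.attach_mid m hs₀ hs₁).symm
  · exact fun x t _ _ => (dist_self _).le
  · exact fun x t _ _ => dist_le_zero.2 (T.apply_homotopy _)
  · exact fun m s t _ _ _ _ => dist_le_zero.2 (T.apply_homotopy _)

lemma isControlledEquiv_attach (hp : Continuous p) (hB : LiftsHomotopies p B)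
    (hA : IsClosed A) (hC : IsClosed C) (hACB : A ∪ C ⊆ B)
    (hκ : ∀ ε > 0, Nonempty (Collar C (A ∩ C) ε)) :
    IsControlledEquiv (restrictOver p (A ∪ C)) (T.attach A) := by
  have hT := T.continuous_toProd
  have trivialize : IsControlledEquiv (restrictOver p (A ∪ C) ∘ T.attach A)
      (DoubleCylinder.map id id T.toProd (fun _ => rfl) (fun _ => rfl)) := by
    rw [restrictOver_comp_attach]
    exact DoubleCylinder.isControlledEquiv_map (by fun_prop) (by fun_prop) (by fun_prop)
      (by fun_prop) _ _ _ (.of_homeomorph (.refl _)) (.of_homeomorph (.refl _))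
      T.isControlledEquiv_toProd
  refine trivialize.of_comp T.continuous_attach
    ((hB.isControlledEquiv_collapse hp hA hC hACB hκ).congr
      T.controlledHomotopic_collapse_attach ?_)
  exact funext fun z => dist_le_zero.1 (T.controlledHomotopic_collapse_attach.dist_right_le z)

end FiberTrivialization

end Attach

/-! ### Absolute neighbourhood extensors -/

section ANE

open Set

/-- `S` is an absolute neighbourhood extensor for metric spaces: a continuous map to `S` from a
closed subset of a metric space extends to a neighbourhood. -/
def IsANE {Z : Type*} [TopologicalSpace Z] (S : Set Z) : Prop :=
  ∀ (Y : Type) [MetricSpace Y] (Y₀ : Set Y) (f : Y → Z), IsClosed Y₀ → ContinuousOn f Y₀ →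
    MapsTo f Y₀ S → ∃ (Ω : Set Y) (F : Y → Z), IsOpen Ω ∧ Y₀ ⊆ Ω ∧ ContinuousOn F Ω ∧
      MapsTo F Ω S ∧ EqOn F f Y₀

variable {Z W : Type*} [TopologicalSpace Z] [TopologicalSpace W] {S : Set Z} {T : Set W}

lemma isANE_empty : IsANE (∅ : Set Z) := by
  intro Y _ Y₀ f _ _ hf
  exact ⟨∅, f, isOpen_empty, fun y hy => hf hy, continuousOn_empty f, mapsTo_empty f _,
    fun y hy => (hf hy).elim⟩

lemma isANE_univ [TietzeExtension.{0} Z] : IsANE (univ : Set Z) := by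
  intro Y _ Y₀ f hY₀ hf _
  obtain ⟨F, hF⟩ := ContinuousMap.exists_restrict_eq hY₀
    ⟨Y₀.domRestrict f, continuousOn_iff_continuous_domRestrict.1 hf⟩
  exact ⟨univ, F, isOpen_univ, subset_univ _, F.continuous.continuousOn, mapsTo_univ _ _,
    fun y hy => DFunLike.congr_fun hF ⟨y, hy⟩⟩

namespace IsANE

lemma of_rightInvOn (hS : IsANE S) {r : Z → W} {g : W → Z} (hr : ContinuousOn r S)
    (hrT : MapsTo r S T) (hg : ContinuousOn g T) (hgS : MapsTo g T S) (hrg : EqOn (r ∘ g) id T) :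
    IsANE T := by
  intro Y _ Y₀ f hY₀ hf hfT
  obtain ⟨Ω, F, hΩ, hY₀Ω, hF, hFS, hFf⟩ :=
    hS Y Y₀ (g ∘ f) hY₀ (hg.comp hf hfT) (hgS.comp hfT)
  refine ⟨Ω, r ∘ F, hΩ, hY₀Ω, hr.comp hF hFS, hrT.comp hFS, fun y hy => ?_⟩
  rw [Function.comp_apply, hFf hy]
  exact hrg (hfT hy)

lemma inter_of_isOpen (hS : IsANE S) {U : Set Z} (hU : IsOpen U) : IsANE (S ∩ U) := by
  intro Y _ Y₀ f hY₀ hf hfS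
  obtain ⟨Ω, F, hΩ, hY₀Ω, hF, hFS, hFf⟩ := hS Y Y₀ f hY₀ hf fun y hy => (hfS hy).1
  refine ⟨Ω ∩ F ⁻¹' U, F, hF.isOpen_inter_preimage hΩ hU,
    fun y hy => ⟨hY₀Ω hy, ?_⟩, hF.mono inter_subset_left, fun y hy => ⟨hFS hy.1, hy.2⟩, hFf⟩
  rw [mem_preimage, hFf hy]
  exact (hfS hy).2

lemma image (hS : IsANE S) {g : Z → W} (hg : Topology.IsEmbedding g) : IsANE (g '' S) := by
  rcases isEmpty_or_nonempty Z with hZ | hZ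
  · rw [S.eq_empty_of_isEmpty, image_empty]
    exact isANE_empty
  have g_invFun {w : W} (hw : w ∈ g '' S) : g (Function.invFun g w) = w :=
    Function.invFun_eq (image_subset_range g S hw)
  refine hS.of_rightInvOn (g := Function.invFun g) hg.continuous.continuousOn (mapsTo_image g S)
    (hg.isInducing.continuousOn_iff.2 (continuousOn_id.congr fun w hw => g_invFun hw)) ?_
    fun w hw => g_invFun hw
  rintro _ ⟨z, hz, rfl⟩
  rwa [Function.leftInverse_invFun hg.injective z]

lemma range (hZ : IsANE (univ : Set Z)) {g : Z → W} (hg : Topology.IsEmbedding g) :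
    IsANE (range g) :=
  image_univ ▸ hZ.image hg

lemma univ_coe (hS : IsANE S) : IsANE (univ : Set S) := by
  classical
  intro Y _ Y₀ f hY₀ hf _
  obtain ⟨Ω, F, hΩ, hY₀Ω, hF, hFS, hFf⟩ := hS Y Y₀ (fun y => f y) hY₀
    (continuous_subtype_val.comp_continuousOn hf) fun y _ => (f y).2
  let G (y : Y) : S := if h : F y ∈ S then ⟨F y, h⟩ else f y
  have coe_G (y : Y) (hy : y ∈ Ω) : (G y : Z) = F y := by simp only [G, dif_pos (hFS hy)]
  refine ⟨Ω, G, hΩ, hY₀Ω, ?_, mapsTo_univ _ _, fun y hy => Subtype.ext ?_⟩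
  · exact Topology.IsInducing.subtypeVal.continuousOn_iff.2 (hF.congr coe_G)
  · rw [coe_G y (hY₀Ω hy), hFf hy]

lemma prod (hS : IsANE S) (hT : IsANE T) : IsANE (S ×ˢ T) := by
  intro Y _ Y₀ f hY₀ hf hfST
  obtain ⟨Ω, F, hΩ, hY₀Ω, hF, hFS, hFf⟩ :=
    hS Y Y₀ (fun y => (f y).1) hY₀ hf.fst fun y hy => (hfST hy).1
  obtain ⟨Ω', F', hΩ', hY₀Ω', hF', hFT, hFf'⟩ :=
    hT Y Y₀ (fun y => (f y).2) hY₀ hf.snd fun y hy => (hfST hy).2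
  exact ⟨Ω ∩ Ω', fun y => (F y, F' y), hΩ.inter hΩ', subset_inter hY₀Ω hY₀Ω',
    (hF.mono inter_subset_left).prodMk (hF'.mono inter_subset_right),
    fun y hy => ⟨hFS hy.1, hFT hy.2⟩, fun y hy => Prod.ext (hFf hy) (hFf' hy)⟩

lemma exists_extension_union (hS : IsANE S) {Y : Type} [MetricSpace Y] {Y₀ Y₁ : Set Y}
    {f g : Y → Z} (hY₀ : IsClosed Y₀) (hY₁ : IsClosed Y₁) (hf : ContinuousOn f Y₀)
    (hg : ContinuousOn g Y₁) (hfS : MapsTo f Y₀ S) (hgS : MapsTo g Y₁ S)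
    (hfg : EqOn f g (Y₀ ∩ Y₁)) :
    ∃ (Ω : Set Y) (F : Y → Z), IsOpen Ω ∧ Y₀ ∪ Y₁ ⊆ Ω ∧ ContinuousOn F Ω ∧ MapsTo F Ω S ∧
      EqOn F f Y₀ ∧ EqOn F g Y₁ := by
  classical
  let h : Y → Z := Y₀.piecewise f g
  have h_left : EqOn h f Y₀ := Y₀.piecewise_eqOn f g
  have h_right : EqOn h g Y₁ := fun y hy => by
    by_cases hy₀ : y ∈ Y₀
    · rw [h_left hy₀, hfg ⟨hy₀, hy⟩]
    · exact Y₀.piecewise_eqOn_compl f g hy₀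
  obtain ⟨Ω, F, hΩ, hYΩ, hF, hFS, hFh⟩ := hS Y (Y₀ ∪ Y₁) h (hY₀.union hY₁)
    ((hf.congr h_left).union_of_isClosed (hg.congr h_right) hY₀ hY₁)
    ((hfS.congr h_left.symm).union (hgS.congr h_right.symm))
  exact ⟨Ω, F, hΩ, hYΩ, hF, hFS, (hFh.mono subset_union_left).trans h_left,
    (hFh.mono subset_union_right).trans h_right⟩

end IsANE

lemma exists_isClosed_cover_inter_subset {Y : Type*} [MetricSpace Y] {Y₁ Y₂ : Set Y}
    (h₁ : IsClosed Y₁) (h₂ : IsClosed Y₂) :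
    ∃ N₁ N₂ : Set Y, IsClosed N₁ ∧ IsClosed N₂ ∧ (∀ y, y ∈ N₁ ∨ y ∈ N₂) ∧
      (Y₁ ∪ Y₂) ∩ N₁ ⊆ Y₁ ∧ (Y₁ ∪ Y₂) ∩ N₂ ⊆ Y₂ := by
  refine ⟨{y | Metric.infEDist y Y₁ ≤ Metric.infEDist y Y₂},
    {y | Metric.infEDist y Y₂ ≤ Metric.infEDist y Y₁},
    isClosed_le Metric.continuous_infEDist Metric.continuous_infEDist,
    isClosed_le Metric.continuous_infEDist Metric.continuous_infEDist,
    fun y => le_total (α := ENNReal) _ _, ?_, ?_⟩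
  · rintro y ⟨hy | hy, h⟩
    · exact hy
    · rw [mem_ofPred_eq, Metric.infEDist_zero_of_mem hy, nonpos_iff_eq_zero] at h
      exact (Metric.mem_iff_infEDist_zero_of_closed h₁).2 h
  · rintro y ⟨hy | hy, h⟩
    · rw [mem_ofPred_eq, Metric.infEDist_zero_of_mem hy, nonpos_iff_eq_zero] at h
      exact (Metric.mem_iff_infEDist_zero_of_closed h₂).2 h
    · exact hy

lemma continuousOn_of_isClosed_cover {Y : Type*} [TopologicalSpace Y] {N₁ N₂ Ω : Set Y} {F : Y → Z}
    (hN₁ : IsClosed N₁) (hN₂ : IsClosed N₂) (hN : ∀ y, y ∈ N₁ ∨ y ∈ N₂)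
    (h₁ : ContinuousOn F (Ω ∩ N₁)) (h₂ : ContinuousOn F (Ω ∩ N₂)) : ContinuousOn F Ω := by
  have within {N : Set Y} (hN : IsClosed N) (h : ContinuousOn F (Ω ∩ N)) (y : Y) (hy : y ∈ Ω) :
      ContinuousWithinAt F (Ω ∩ N) y := by
    by_cases hyN : y ∈ N
    · exact h y ⟨hy, hyN⟩
    · exact continuousWithinAt_of_notMem_closure fun hyc =>
        hyN (closure_minimal inter_subset_right hN hyc)
  intro y hy
  rw [← inter_univ Ω, ← eq_univ_of_forall (s := N₁ ∪ N₂) hN, inter_union_distrib_left]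
  exact (within hN₁ h₁ y hy).union (within hN₂ h₂ y hy)

lemma exists_extension_of_isClosed_cover {Y : Type*} [TopologicalSpace Y]
    {Y₀ N₁ N₂ Ω₁ Ω₂ O : Set Y} {f F₁ F₂ : Y → Z} {T : Set Z} (hN₁ : IsClosed N₁)
    (hN₂ : IsClosed N₂) (hN : ∀ y, y ∈ N₁ ∨ y ∈ N₂) (hΩ₁ : IsOpen Ω₁) (hΩ₂ : IsOpen Ω₂)
    (hO : IsOpen O) (hYΩ₁ : Y₀ ∩ N₁ ⊆ Ω₁) (hYΩ₂ : Y₀ ∩ N₂ ⊆ Ω₂) (hYO : Y₀ ∩ (N₁ ∩ N₂) ⊆ O)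
    (hF₁ : ContinuousOn F₁ Ω₁) (hF₂ : ContinuousOn F₂ Ω₂) (hF₁S : MapsTo F₁ Ω₁ S)
    (hF₂T : MapsTo F₂ Ω₂ T) (hF₁f : EqOn F₁ f (Y₀ ∩ N₁)) (hF₂f : EqOn F₂ f (Y₀ ∩ N₂))
    (hF₁₂ : EqOn F₁ F₂ (N₁ ∩ N₂ ∩ O)) :
    ∃ (Ω : Set Y) (F : Y → Z), IsOpen Ω ∧ Y₀ ⊆ Ω ∧ ContinuousOn F Ω ∧ MapsTo F Ω (S ∪ T) ∧
      EqOn F f Y₀ := by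
  classical
  let Ω : Set Y := (N₁ᶜ ∪ Ω₁) ∩ (N₂ᶜ ∪ Ω₂) ∩ ((N₁ ∩ N₂)ᶜ ∪ O)
  let F : Y → Z := N₁.piecewise F₁ F₂
  have F_left : EqOn F F₁ (Ω ∩ N₁) := (N₁.piecewise_eqOn F₁ F₂).mono inter_subset_right
  have F_right : EqOn F F₂ (Ω ∩ N₂) := fun y hy => by
    by_cases hy₁ : y ∈ N₁
    · rw [F_left ⟨hy.1, hy₁⟩, hF₁₂ ⟨⟨hy₁, hy.2⟩, hy.1.2.resolve_left (not_not_intro ⟨hy₁, hy.2⟩)⟩]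
    · exact N₁.piecewise_eqOn_compl F₁ F₂ hy₁
  have hΩΩ₁ : Ω ∩ N₁ ⊆ Ω₁ := fun y hy => hy.1.1.1.resolve_left (not_not_intro hy.2)
  have hΩΩ₂ : Ω ∩ N₂ ⊆ Ω₂ := fun y hy => hy.1.1.2.resolve_left (not_not_intro hy.2)
  have hYΩ : Y₀ ⊆ Ω := fun y hy =>
    ⟨⟨or_iff_not_imp_left.2 fun h => hYΩ₁ ⟨hy, not_not.1 h⟩,
      or_iff_not_imp_left.2 fun h => hYΩ₂ ⟨hy, not_not.1 h⟩⟩,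
      or_iff_not_imp_left.2 fun h => hYO ⟨hy, not_not.1 h⟩⟩
  refine ⟨Ω, F, ?_, hYΩ, ?_, fun y hy => ?_, fun y hy => ?_⟩
  · exact ((hN₁.isOpen_compl.union hΩ₁).inter (hN₂.isOpen_compl.union hΩ₂)).inter
      ((hN₁.inter hN₂).isOpen_compl.union hO)
  · exact continuousOn_of_isClosed_cover hN₁ hN₂ hN ((hF₁.mono hΩΩ₁).congr F_left)
      ((hF₂.mono hΩΩ₂).congr F_right)
  · rcases hN y with hy₁ | hy₂
    · exact Or.inl (F_left ⟨hy, hy₁⟩ ▸ hF₁S (hΩΩ₁ ⟨hy, hy₁⟩))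
    · exact Or.inr (F_right ⟨hy, hy₂⟩ ▸ hF₂T (hΩΩ₂ ⟨hy, hy₂⟩))
  · rcases hN y with hy₁ | hy₂
    · rw [F_left ⟨hYΩ hy, hy₁⟩, hF₁f ⟨hy, hy₁⟩]
    · rw [F_right ⟨hYΩ hy, hy₂⟩, hF₂f ⟨hy, hy₂⟩]

/-- The two halves of a map `f` to `S ∪ T` are extended separately over the two pieces of a closed
cover, after extending `f` near the overlap of the pieces to a map to `S ∩ T`. -/
theorem IsANE.union {T : Set Z} (hSc : IsClosed S) (hTc : IsClosed T) (hS : IsANE S)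
    (hT : IsANE T) (hST : IsANE (S ∩ T)) : IsANE (S ∪ T) := by
  intro Y _ Y₀ f hY₀ hf hfST
  have hY₁ : IsClosed (Y₀ ∩ f ⁻¹' S) := hf.preimage_isClosed_of_isClosed hY₀ hSc
  have hY₂ : IsClosed (Y₀ ∩ f ⁻¹' T) := hf.preimage_isClosed_of_isClosed hY₀ hTc
  have hY : Y₀ = Y₀ ∩ f ⁻¹' S ∪ Y₀ ∩ f ⁻¹' T := by
    rw [← inter_union_distrib_left]
    exact (inter_eq_left.2 hfST).symm
  obtain ⟨N₁, N₂, hN₁, hN₂, hN, hYN₁, hYN₂⟩ := exists_isClosed_cover_inter_subset hY₁ hY₂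
  rw [← hY] at hYN₁ hYN₂
  obtain ⟨Ω, G, hΩ, hYΩ, hG, hGST, hGf⟩ := hST Y (Y₀ ∩ (N₁ ∩ N₂)) f (hY₀.inter (hN₁.inter hN₂))
    (hf.mono inter_subset_left) fun y hy => ⟨(hYN₁ ⟨hy.1, hy.2.1⟩).2, (hYN₂ ⟨hy.1, hy.2.2⟩).2⟩
  obtain ⟨O, hO, hYO, hOΩ⟩ := normal_exists_closure_subset (hY₀.inter (hN₁.inter hN₂)) hΩ hYΩ
  have hP : IsClosed (N₁ ∩ N₂ ∩ closure O) := (hN₁.inter hN₂).inter isClosed_closure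
  have hGP : ContinuousOn G (N₁ ∩ N₂ ∩ closure O) := hG.mono fun y hy => hOΩ hy.2
  obtain ⟨Ω₁, F₁, hΩ₁, hYΩ₁, hF₁, hF₁S, hF₁f, hF₁G⟩ := hS.exists_extension_union hY₁ hP
    (hf.mono inter_subset_left) hGP (fun y hy => hy.2) (fun y hy => (hGST (hOΩ hy.2)).1)
    fun y hy => (hGf ⟨hy.1.1, hy.2.1⟩).symm
  obtain ⟨Ω₂, F₂, hΩ₂, hYΩ₂, hF₂, hF₂T, hF₂f, hF₂G⟩ := hT.exists_extension_union hY₂ hP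
    (hf.mono inter_subset_left) hGP (fun y hy => hy.2) (fun y hy => (hGST (hOΩ hy.2)).2)
    fun y hy => (hGf ⟨hy.1.1, hy.2.1⟩).symm
  exact exists_extension_of_isClosed_cover hN₁ hN₂ hN hΩ₁ hΩ₂ hO
    (hYN₁.trans (subset_union_left.trans hYΩ₁)) (hYN₂.trans (subset_union_left.trans hYΩ₂)) hYO
    hF₁ hF₂ hF₁S hF₂T (hF₁f.mono hYN₁) (hF₂f.mono hYN₂)
    ((hF₁G.trans hF₂G.symm).mono (inter_subset_inter_right _ subset_closure))

end ANE

/-! ### Simplices -/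

section RadialCollar

open AffineMap

/-- The factor by which a point at radius `ρ` is pushed outwards at time `t`: it grows with speed
`κ` until the point arrives at radius `1`. -/
def radialScale (κ ρ t : ℝ) : ℝ := (1 + clamp t * κ) / max 1 (ρ * (1 + clamp t * κ))

variable {κ ρ : ℝ} (t : ℝ)

lemma one_le_one_add_clamp_mul (hκ : 0 ≤ κ) : 1 ≤ 1 + clamp t * κ :=
  le_add_of_nonneg_right (mul_nonneg (clamp_nonneg t) hκ)

lemma max_one_pos (a : ℝ) : 0 < max 1 a := lt_max_of_lt_left one_pos

@[fun_prop]
lemma continuous_radialScale (κ : ℝ) : Continuous fun z : ℝ × ℝ => radialScale κ z.1 z.2 :=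
  Continuous.div (by fun_prop) (by fun_prop) fun _ => (max_one_pos _).ne'

lemma radialScale_zero (hρ : ρ ≤ 1) : radialScale κ ρ 0 = 1 := by
  simp [radialScale, hρ]

lemma radialScale_one_left (hκ : 0 ≤ κ) : radialScale κ 1 t = 1 := by
  have := one_le_one_add_clamp_mul t hκ
  rw [radialScale, one_mul, max_eq_right this, div_self (by linarith)]

lemma one_le_radialScale (hκ : 0 ≤ κ) (hρ : ρ ≤ 1) : 1 ≤ radialScale κ ρ t := by
  have := one_le_one_add_clamp_mul t hκ
  rw [radialScale, one_le_div (max_one_pos _)]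
  exact max_le this (mul_le_of_le_one_left (by linarith) hρ)

lemma radialScale_le (hκ : 0 ≤ κ) : radialScale κ ρ t ≤ 1 + κ := by
  have := one_le_one_add_clamp_mul t hκ
  refine (div_le_self (by linarith) (le_max_left _ _)).trans ?_
  linarith [mul_le_of_le_one_left hκ (clamp_le_one t)]

lemma radialScale_mul_le_one : radialScale κ ρ t * ρ ≤ 1 := by
  rw [radialScale, div_mul_eq_mul_div, div_le_one (max_one_pos _), mul_comm]
  exact le_max_right _ _

lemma radialScale_mul_eq_one (h : 1 ≤ ρ * (1 + clamp t * κ)) : radialScale κ ρ t * ρ = 1 := by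
  rw [radialScale, max_eq_right h, div_mul_eq_mul_div, mul_comm, div_self (by linarith)]

variable {V : Type*} [NormedAddCommGroup V] [NormedSpace ℝ V]

lemma nonempty_collar_of_radius {C D : Set V} {v : V} {r : V → ℝ} (hr : Continuous r)
    (hC : Bornology.IsBounded C) (r_le : ∀ x ∈ C, r x ≤ 1) (r_eq : ∀ x ∈ D, r x = 1)
    (mem_C : ∀ x ∈ C, ∀ l, 0 ≤ l → l * r x ≤ 1 → lineMap v x l ∈ C)
    (mem_D : ∀ x ∈ C, ∀ l, 0 ≤ l → l * r x = 1 → lineMap v x l ∈ D) {ε : ℝ} (hε : 0 < ε) :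
    Nonempty (Collar C D ε) := by
  obtain ⟨R, hR, hCR⟩ := hC.subset_closedBall_lt 0 v
  let κ : ℝ := ε / R
  have hκ : 0 < κ := div_pos hε hR
  have scale_nonneg (x : V) (hx : x ∈ C) (t : ℝ) : 0 ≤ radialScale κ (r x) t :=
    zero_le_one.trans (one_le_radialScale t hκ.le (r_le x hx))
  refine ⟨⟨fun z => lineMap v z.1 (radialScale κ (r z.1) z.2),
    fun z => (r z.1 * (1 + clamp z.2 * κ) - 1) / κ,
    ?_, by fun_prop, fun x hx => ?_, fun x hx => ?_, fun x hx t _ _ => ?_,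
    fun x hx t _ _ => ?_, fun x hx t _ _ h => ?_, fun x hx t _ _ => ?_, fun x hx t ht₀ ht₁ => ?_⟩⟩
  · have := (continuous_radialScale κ).comp (f := fun z : V × ℝ => (r z.1, z.2)) (by fun_prop)
    exact Continuous.lineMap continuous_const continuous_fst this
  · rw [radialScale_zero (r_le x hx), lineMap_apply_one]
  · simp only [clamp_zero, zero_mul, add_zero, mul_one]
    exact div_nonpos_of_nonpos_of_nonneg (sub_nonpos.2 (r_le x hx)) hκ.le
  · exact mem_C x hx _ (scale_nonneg x hx t) (radialScale_mul_le_one t)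
  · have hxR : dist v x ≤ R := by rw [dist_comm]; exact hCR hx
    have := one_le_radialScale t hκ.le (r_le x hx)
    rw [dist_lineMap_right, Real.norm_eq_abs, abs_sub_comm, abs_of_nonneg (by linarith)]
    calc (radialScale κ (r x) t - 1) * dist v x ≤ κ * R := by
          gcongr
          linarith [radialScale_le (ρ := r x) t hκ.le]
      _ = ε := div_mul_cancel₀ ε hR.ne'
  · have := (le_div_iff₀ hκ).1 h
    exact mem_D x hx _ (scale_nonneg x hx t) (radialScale_mul_eq_one t (by linarith))
  · rw [r_eq x hx, radialScale_one_left t hκ.le, lineMap_apply_one]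
  · simp only [r_eq x hx, clamp_of_mem ht₀ ht₁, one_mul, add_sub_cancel_left]
    exact mul_div_cancel_right₀ t hκ.ne'

end RadialCollar

section Simplices

open Set AffineMap

variable {V : Type*} [NormedAddCommGroup V] [NormedSpace ℝ V] {ι : Type*}
  (b : AffineBasis ι ℝ V) {s : Finset ι} {x : V}

lemma coord_lineMap_centroid {i : ι} (hi : i ∈ s) (x : V) (l : ℝ) :
    b.coord i (lineMap (s.centroid ℝ b) x l) =
      (1 - l * (1 - s.card * b.coord i x)) / s.card := by
  have card_pos : (0 : ℝ) < s.card := by exact_mod_cast Finset.card_pos.2 ⟨i, hi⟩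
  rw [apply_lineMap, b.coord_apply_centroid hi, lineMap_apply_ring]
  field_simp
  ring

lemma coord_lineMap_centroid_of_notMem (hs : s.Nonempty) {i : ι} (hi : i ∉ s)
    (hx : b.coord i x = 0) (l : ℝ) : b.coord i (lineMap (s.centroid ℝ b) x l) = 0 := by
  have coord_centroid : b.coord i (s.centroid ℝ b) = 0 := b.coord_apply_combination_of_notMem hi
    (s.sum_centroidWeights_eq_one_of_nonempty ℝ hs)
  rw [apply_lineMap, coord_centroid, hx, lineMap_same_apply]

variable [Finite ι]

lemma sum_coord_eq_one_of_support (hx : ∀ i ∉ s, b.coord i x = 0) :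
    ∑ i ∈ s, b.coord i x = 1 := by
  have := Fintype.ofFinite ι
  rw [← b.sum_coord_apply_eq_one x]
  exact Finset.sum_subset s.subset_univ fun i _ hi => hx i hi

lemma sum_coord_smul_eq_self_of_support (hx : ∀ i ∉ s, b.coord i x = 0) :
    ∑ i ∈ s, b.coord i x • b i = x := by
  have := Fintype.ofFinite ι
  conv_rhs => rw [← b.linear_combination_coord_eq_self x]
  exact Finset.sum_subset s.subset_univ fun i _ hi => by rw [hx i hi, zero_smul]

lemma mem_convexHull_image_iff_coord : x ∈ convexHull ℝ (b '' s) ↔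
    (∀ i, 0 ≤ b.coord i x) ∧ ∀ i ∉ s, b.coord i x = 0 := by
  refine ⟨fun hx => ⟨fun i => ?_, fun i hi => ?_⟩, fun ⟨nonneg, hs⟩ => ?_⟩
  · have hx' := convexHull_mono (image_subset_range b s) hx
    rw [b.convexHull_eq_nonneg_coord] at hx'
    exact hx' i
  · have hsub : b '' s ⊆ b.coord i ⁻¹' {0} := by
      rintro _ ⟨j, hj, rfl⟩
      exact b.coord_apply_ne fun hij => hi (hij ▸ hj)
    exact convexHull_min hsub ((convex_singleton 0).affine_preimage (b.coord i)) hx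
  · rw [← sum_coord_smul_eq_self_of_support b hs]
    exact (convex_convexHull ℝ _).sum_mem (fun i _ => nonneg i) (sum_coord_eq_one_of_support b hs)
      fun i hi => subset_convexHull ℝ _ (mem_image_of_mem b hi)

lemma isANE_convexHull_image : IsANE (convexHull ℝ (b '' s)) := by
  have := b.finiteDimensional
  have := Fintype.ofFinite ι
  let U : Set (ι → ℝ) := {y | 0 < ∑ i ∈ s, max 0 (y i)}
  have hU : IsOpen U := isOpen_lt continuous_const (by fun_prop)
  have max_coord {x : V} (hx : x ∈ convexHull ℝ (b '' s)) :
      ∀ i ∈ s, max 0 (b.coord i x) = b.coord i x := fun i _ =>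
    max_eq_right (((mem_convexHull_image_iff_coord b).1 hx).1 i)
  have sum_eq {x : V} (hx : x ∈ convexHull ℝ (b '' s)) :
      ∑ i ∈ s, max 0 (b.coord i x) = 1 := by
    rw [Finset.sum_congr rfl (max_coord hx),
      sum_coord_eq_one_of_support b ((mem_convexHull_image_iff_coord b).1 hx).2]
  refine (isANE_univ.inter_of_isOpen hU).of_rightInvOn (g := fun x i => b.coord i x)
    (r := fun y => s.centerMass (fun i => max 0 (y i)) b) ?_ ?_ ?_ ?_ ?_
  · refine ContinuousOn.smul (ContinuousOn.inv₀ (by fun_prop) fun y hy => ?_) (by fun_prop)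
    exact hy.2.ne'
  · exact fun y hy => s.centerMass_mem_convexHull (fun i _ => le_max_left _ _) hy.2
      fun i hi => mem_image_of_mem b hi
  · exact continuousOn_pi.2 fun i => (continuous_barycentric_coord b i).continuousOn
  · exact fun x hx => ⟨mem_univ _, zero_lt_one.trans_eq (sum_eq hx).symm⟩
  · intro x hx
    change s.centerMass (fun i => max 0 (b.coord i x)) b = x
    rw [Finset.centerMass_eq_of_sum_1 _ _ (sum_eq hx),
      Finset.sum_congr rfl fun i hi => by rw [max_coord hx i hi]]
    exact sum_coord_smul_eq_self_of_support b ((mem_convexHull_image_iff_coord b).1 hx).2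

/-- With `N` vertices the radius function is `1 - N * min_i (coord i x)`: it is `0` at the
barycentre, `1` on the boundary, and homogeneous in between. -/
lemma nonempty_collar_convexHull_image (hs : s.Nonempty) {ε : ℝ} (hε : 0 < ε) :
    Nonempty (Collar (convexHull ℝ (b '' s))
      {x ∈ convexHull ℝ (b '' s) | ∃ i ∈ s, b.coord i x = 0} ε) := by
  have := b.finiteDimensional
  have hN : (0 : ℝ) < s.card := by exact_mod_cast hs.card_pos
  let v : V := s.centroid ℝ b
  let r (x : V) : ℝ := s.sup' hs fun i => 1 - s.card * b.coord i x
  have le_r {i : ι} (hi : i ∈ s) (x : V) : 1 - s.card * b.coord i x ≤ r x :=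
    Finset.le_sup' (fun i => 1 - s.card * b.coord i x) hi
  have r_le (x : V) (hx : x ∈ convexHull ℝ (b '' s)) : r x ≤ 1 :=
    Finset.sup'_le _ _ fun i _ => sub_le_self _ <|
      mul_nonneg hN.le (((mem_convexHull_image_iff_coord b).1 hx).1 i)
  have lineMap_mem (x : V) (hx : x ∈ convexHull ℝ (b '' s)) (l : ℝ) (hl : 0 ≤ l)
      (hlr : l * r x ≤ 1) : lineMap v x l ∈ convexHull ℝ (b '' s) := by
    have hx' := (mem_convexHull_image_iff_coord b).1 hx
    have coord_eq_zero (i : ι) (hi : i ∉ s) : b.coord i (lineMap v x l) = 0 :=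
      coord_lineMap_centroid_of_notMem b hs hi (hx'.2 i hi) l
    refine (mem_convexHull_image_iff_coord b).2 ⟨fun i => ?_, coord_eq_zero⟩
    by_cases hi : i ∈ s
    · rw [coord_lineMap_centroid b hi]
      have := mul_le_mul_of_nonneg_left (le_r hi x) hl
      exact div_nonneg (by linarith) hN.le
    · exact (coord_eq_zero i hi).ge
  refine nonempty_collar_of_radius (v := v) (r := r) ?_
    ((s.finite_toSet.image b).isCompact_convexHull ℝ).isBounded r_le ?_
    lineMap_mem ?_ hε
  · exact Continuous.finset_sup'_apply hs fun i _ => by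
      have := continuous_barycentric_coord b i
      fun_prop
  · rintro x ⟨hx, i, hi, hix⟩
    refine (r_le x hx).antisymm ?_
    simpa only [hix, mul_zero, sub_zero] using le_r hi x
  · intro x hx l hl hlr
    refine ⟨lineMap_mem x hx l hl hlr.le, ?_⟩
    obtain ⟨i, hi, hri⟩ := Finset.exists_mem_eq_sup' hs fun i => 1 - s.card * b.coord i x
    exact ⟨i, hi, by rw [coord_lineMap_centroid b hi, ← hri, hlr, sub_self, zero_div]⟩

end Simplices

/-! ### Polyhedra -/

section Polyhedra

open Set

open Classical in
/-- The simplices making up the boundary of the simplex `τ`. -/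
def properFaces {V : Type*} (τ : Finset V) : Finset (Finset V) :=
  τ.ssubsets.filter Finset.Nonempty

lemma mem_properFaces {V : Type*} {t τ : Finset V} :
    t ∈ properFaces τ ↔ t ⊂ τ ∧ t.Nonempty := by
  simp [properFaces]

variable {V : Type*} [NormedAddCommGroup V] [NormedSpace ℝ V] {S T : Finset (Finset V)}
  {τ : Finset V} {x : V}

/-- The union of a finite set of simplices, each given by its vertices. -/
def polyhedron (S : Finset (Finset V)) : Set V := ⋃ s ∈ S, convexHull ℝ (s : Set V)

lemma mem_polyhedron : x ∈ polyhedron S ↔ ∃ s ∈ S, x ∈ convexHull ℝ (s : Set V) := by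
  simp [polyhedron]

lemma polyhedron_empty : polyhedron (∅ : Finset (Finset V)) = ∅ := by simp [polyhedron]

lemma polyhedron_mono (h : S ⊆ T) : polyhedron S ⊆ polyhedron T :=
  biUnion_mono h fun _ _ => Subset.rfl

lemma isCompact_convexHull_finset (s : Finset V) : IsCompact (convexHull ℝ (s : Set V)) :=
  s.finite_toSet.isCompact_convexHull ℝ

lemma isCompact_polyhedron (S : Finset (Finset V)) : IsCompact (polyhedron S) :=
  S.isCompact_biUnion fun s _ => isCompact_convexHull_finset s

lemma mem_polyhedron_properFaces_map_iff {ι : Type*} [Finite ι] (b : AffineBasis ι ℝ V)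
    {s : Finset ι} : x ∈ polyhedron (properFaces (s.map ⟨b, b.ind.injective⟩)) ↔
      x ∈ convexHull ℝ (b '' s) ∧ ∃ i ∈ s, b.coord i x = 0 := by
  classical
  simp only [mem_polyhedron, mem_properFaces]
  constructor
  · rintro ⟨t, ⟨hts, -⟩, hx⟩
    obtain ⟨u, hus, rfl⟩ := Finset.subset_map_iff.1 hts.subset
    obtain ⟨i, his, hiu⟩ := Finset.exists_of_ssubset (Finset.map_ssubset_map.1 hts)
    rw [Finset.coe_map] at hx
    exact ⟨convexHull_mono (image_mono hus) hx, i, his,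
      ((mem_convexHull_image_iff_coord b).1 hx).2 i hiu⟩
  · rintro ⟨hx, i, hi, hix⟩
    have hx' : x ∈ convexHull ℝ (b '' (s.erase i : Finset ι)) := by
      rw [mem_convexHull_image_iff_coord] at hx ⊢
      refine ⟨hx.1, fun j hj => ?_⟩
      by_cases hji : j = i
      · rw [hji, hix]
      · exact hx.2 j fun hjs => hj (Finset.mem_erase.2 ⟨hji, hjs⟩)
    refine ⟨(s.erase i).map ⟨b, b.ind.injective⟩,
      ⟨Finset.map_ssubset_map.2 (Finset.erase_ssubset hi), ?_⟩, by rwa [Finset.coe_map]⟩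
    exact (Finset.coe_nonempty.1 (image_nonempty.1 (convexHull_nonempty_iff.1 ⟨x, hx'⟩))).map

variable [FiniteDimensional ℝ V]

lemma exists_affineBasis_map_eq (hτ : AffineIndependent ℝ ((↑) : τ → V)) :
    ∃ (t : Set V) (_ : Finite t) (b : AffineBasis t ℝ V) (s : Finset t),
      s.map ⟨b, b.ind.injective⟩ = τ := by
  obtain ⟨t, hτt, ht_ind, ht_top⟩ :=
    exists_subset_affineIndependent_affineSpan_eq_top (s := (τ : Set V)) hτ
  let b : AffineBasis t ℝ V := ⟨(↑), ht_ind, by rwa [Subtype.range_coe]⟩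
  refine ⟨t, finite_of_fin_dim_affineIndependent ℝ ht_ind, b,
    τ.attach.map ⟨inclusion hτt, inclusion_injective hτt⟩, ?_⟩
  rw [Finset.map_map]
  exact τ.attach_map_val

lemma isANE_convexHull (hτ : AffineIndependent ℝ ((↑) : τ → V)) :
    IsANE (convexHull ℝ (τ : Set V)) := by
  obtain ⟨t, _, b, s, rfl⟩ := exists_affineBasis_map_eq hτ
  rw [Finset.coe_map]
  exact isANE_convexHull_image b

lemma nonempty_collar_properFaces (hτ : AffineIndependent ℝ ((↑) : τ → V)) (hne : τ.Nonempty)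
    {ε : ℝ} (hε : 0 < ε) :
    Nonempty (Collar (convexHull ℝ (τ : Set V)) (polyhedron (properFaces τ)) ε) := by
  obtain ⟨t, _, b, s, rfl⟩ := exists_affineBasis_map_eq hτ
  have hD : polyhedron (properFaces (s.map ⟨b, b.ind.injective⟩)) =
      {x ∈ convexHull ℝ (b '' s) | ∃ i ∈ s, b.coord i x = 0} :=
    Set.ext fun x => mem_polyhedron_properFaces_map_iff b
  rw [hD, Finset.coe_map]
  exact nonempty_collar_convexHull_image b (Finset.map_nonempty.1 hne) hε

end Polyhedra

section Subcomplexes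

open Set

variable {V : Type*} [NormedAddCommGroup V] [NormedSpace ℝ V]
  {K : Geometry.SimplicialComplex ℝ V} {S : Finset (Finset V)} {τ : Finset V}

/-- `S` is the set of simplices of a finite subcomplex of `K`. -/
structure IsSubcomplex (K : Geometry.SimplicialComplex ℝ V) (S : Finset (Finset V)) : Prop where
  mem_faces : ∀ s ∈ S, s ∈ K.faces
  mem_of_subset : ∀ s ∈ S, ∀ t ⊆ s, t.Nonempty → t ∈ S

lemma isSubcomplex_properFaces (hτ : τ ∈ K.faces) : IsSubcomplex K (properFaces τ) := by
  refine ⟨fun s hs => ?_, fun s hs t hts ht => ?_⟩ <;> rw [mem_properFaces] at *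
  · exact K.down_closed hτ hs.1.subset hs.2
  · exact ⟨hts.trans_ssubset hs.1, ht⟩

lemma isSubcomplex_toFinset (hK : K.faces.Finite) : IsSubcomplex K hK.toFinset := by
  refine ⟨fun s hs => hK.mem_toFinset.1 hs, fun s hs t hts ht => ?_⟩
  rw [hK.mem_toFinset] at *
  exact K.down_closed hs hts ht

lemma polyhedron_toFinset (hK : K.faces.Finite) : polyhedron hK.toFinset = K.space := by
  ext x
  simp only [mem_polyhedron, hK.mem_toFinset, K.mem_space_iff]

namespace IsSubcomplex

lemma polyhedron_subset_space (hS : IsSubcomplex K S) : polyhedron S ⊆ K.space :=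
  iUnion₂_subset fun s hs => K.convexHull_subset_space (hS.mem_faces s hs)

open Classical in
lemma erase (hS : IsSubcomplex K S) (hτ : Maximal (· ∈ S) τ) : IsSubcomplex K (S.erase τ) := by
  refine ⟨fun s hs => hS.mem_faces s (Finset.mem_of_mem_erase hs), fun s hs t hts ht => ?_⟩
  obtain ⟨hsτ, hsS⟩ := Finset.mem_erase.1 hs
  refine Finset.mem_erase.2 ⟨?_, hS.mem_of_subset s hsS t hts ht⟩
  rintro rfl
  exact hsτ (hτ.eq_of_le hsS hts).symm

open Classical in
lemma properFaces_subset_erase (hS : IsSubcomplex K S) (hτ : τ ∈ S) :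
    properFaces τ ⊆ S.erase τ := fun t ht => by
  rw [mem_properFaces] at ht
  exact Finset.mem_erase.2 ⟨ht.1.ne, hS.mem_of_subset τ hτ t ht.1.subset ht.2⟩

open Classical in
lemma polyhedron_erase_inter (hS : IsSubcomplex K S) (hτ : Maximal (· ∈ S) τ) :
    polyhedron (S.erase τ) ∩ convexHull ℝ (τ : Set V) = polyhedron (properFaces τ) := by
  refine Subset.antisymm ?_
    (subset_inter (polyhedron_mono (hS.properFaces_subset_erase hτ.prop)) ?_)
  · rintro x ⟨hx, hxτ⟩
    obtain ⟨s, hs, hxs⟩ := mem_polyhedron.1 hx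
    obtain ⟨hsτ, hs⟩ := Finset.mem_erase.1 hs
    have hx' := K.inter_subset_convexHull (hS.mem_faces s hs) (hS.mem_faces τ hτ.prop) ⟨hxs, hxτ⟩
    rw [← Finset.coe_inter] at hx'
    refine mem_polyhedron.2 ⟨s ∩ τ, mem_properFaces.2 ⟨?_, ?_⟩, hx'⟩
    · refine Finset.inter_subset_right.ssubset_of_ne fun h => hsτ ?_
      exact (hτ.eq_of_le hs (Finset.inter_eq_right.1 h)).symm
    · exact Finset.coe_nonempty.1 (convexHull_nonempty_iff.1 ⟨x, hx'⟩)
  · refine iUnion₂_subset fun t ht => convexHull_mono ?_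
    exact_mod_cast (mem_properFaces.1 ht).1.subset

open Classical in
theorem induction {motive : Finset (Finset V) → Prop} (hS : IsSubcomplex K S)
    (empty : motive ∅)
    (step : ∀ S τ, IsSubcomplex K S → Maximal (· ∈ S) τ → motive (S.erase τ) →
      motive (properFaces τ) → motive S) : motive S := by
  induction S using Finset.strongInduction with
  | H S ih =>
    rcases S.eq_empty_or_nonempty with rfl | hne
    · exact empty
    obtain ⟨τ, hτ⟩ := S.exists_maximal hne
    have hlt := Finset.erase_ssubset hτ.prop
    exact step S τ hS hτ (ih _ hlt (hS.erase hτ))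
      (ih _ ((hS.properFaces_subset_erase hτ.prop).trans_ssubset hlt)
        (isSubcomplex_properFaces (hS.mem_faces τ hτ.prop)))

end IsSubcomplex

open Classical in
lemma polyhedron_erase_union (hτ : τ ∈ S) :
    polyhedron (S.erase τ) ∪ convexHull ℝ (τ : Set V) = polyhedron S := by
  conv_rhs => rw [← Finset.insert_erase hτ]
  rw [union_comm, polyhedron, polyhedron, Finset.set_biUnion_insert]

theorem IsSubcomplex.isANE_polyhedron [FiniteDimensional ℝ V] (hS : IsSubcomplex K S) :
    IsANE (polyhedron S) := by
  refine hS.induction (motive := fun S => IsANE (polyhedron S)) ?_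
    fun S τ hS hτ ih_erase ih_boundary => ?_
  · rw [polyhedron_empty]
    exact isANE_empty
  · rw [← polyhedron_erase_union hτ.prop]
    refine IsANE.union (isCompact_polyhedron _).isClosed (isCompact_convexHull_finset τ).isClosed
      ih_erase (isANE_convexHull (K.indep (hS.mem_faces τ hτ.prop))) ?_
    rwa [hS.polyhedron_erase_inter hτ]

end Subcomplexes

/-! ### Compact Euclidean neighbourhood retracts -/

section CompactENR

open Set

/-- `X` admits a continuous injection into some `ℝⁿ`; for compact `X` this is an embedding. -/
def InjectsInEuclidean (X : Type*) [TopologicalSpace X] : Prop :=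
  ∃ (n : ℕ) (e : X → Fin n → ℝ), Continuous e ∧ Function.Injective e

namespace InjectsInEuclidean

variable {X Y : Type*} [TopologicalSpace X] [TopologicalSpace Y]

lemma of_injective {W : Type*} [NormedAddCommGroup W] [NormedSpace ℝ W] [FiniteDimensional ℝ W]
    {e : X → W} (he : Continuous e) (he' : Function.Injective e) : InjectsInEuclidean X :=
  let c := (Module.finBasis ℝ W).equivFunL
  ⟨_, c ∘ e, c.continuous.comp he, c.injective.comp he'⟩

lemma comp_injective (hY : InjectsInEuclidean Y) {f : X → Y} (hf : Continuous f)
    (hf' : Function.Injective f) : InjectsInEuclidean X :=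
  let ⟨n, e, he, he'⟩ := hY
  ⟨n, e ∘ f, he.comp hf, he'.comp hf'⟩

lemma prod (hX : InjectsInEuclidean X) (hY : InjectsInEuclidean Y) :
    InjectsInEuclidean (X × Y) :=
  let ⟨_, _, he, he'⟩ := hX
  let ⟨_, _, hd, hd'⟩ := hY
  of_injective (he.prodMap hd) (he'.prodMap hd')

lemma t2Space (hX : InjectsInEuclidean X) : T2Space X :=
  let ⟨_, _, he, he'⟩ := hX
  .of_injective_continuous he' he

end InjectsInEuclidean

/-- Compact Euclidean neighbourhood retracts, described by their extension property. -/
structure IsCompactENR (X : Type*) [TopologicalSpace X] : Prop where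
  compactSpace : CompactSpace X
  injectsInEuclidean : InjectsInEuclidean X
  isANE : IsANE (univ : Set X)

namespace IsCompactENR

lemma of_isCompact {X : Type*} [TopologicalSpace X] (hX : InjectsInEuclidean X) {S : Set X}
    (hS : IsCompact S) (hS' : IsANE S) : IsCompactENR S :=
  ⟨isCompact_iff_compactSpace.1 hS,
    hX.comp_injective continuous_subtype_val Subtype.val_injective, hS'.univ_coe⟩

lemma prod {X Y : Type*} [TopologicalSpace X] [TopologicalSpace Y] (hX : IsCompactENR X)
    (hY : IsCompactENR Y) : IsCompactENR (X × Y) :=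
  have := hX.compactSpace
  have := hY.compactSpace
  ⟨inferInstance, hX.injectsInEuclidean.prod hY.injectsInEuclidean,
    univ_prod_univ ▸ hX.isANE.prod hY.isANE⟩

lemma closedBall {W : Type} [NormedAddCommGroup W] [NormedSpace ℝ W] [FiniteDimensional ℝ W]
    {r : ℝ} (hr : 0 < r) : IsCompactENR (Metric.closedBall (0 : W) r) :=
  have := Metric.instTietzeExtensionClosedBall ℝ (0 : W) hr
  ⟨isCompact_iff_compactSpace.1 (isCompact_closedBall 0 r),
    .of_injective continuous_subtype_val Subtype.val_injective, isANE_univ⟩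

lemma isENR {X : Type} [TopologicalSpace X] (hX : IsCompactENR X) : IsENR X := by
  have := hX.compactSpace
  obtain ⟨n, e, he, he'⟩ := hX.injectsInEuclidean
  have he_emb : Topology.IsClosedEmbedding e := he.isClosedEmbedding he'
  have range_isANE : IsANE (range e) := hX.isANE.range he_emb.isEmbedding
  obtain ⟨U, r, hU, heU, hr, hrU, hre⟩ := range_isANE (Fin n → ℝ) (range e) id
    he_emb.isClosed_range continuousOn_id (mapsTo_id _)
  exact ⟨n, range e, ⟨he_emb.isEmbedding.toHomeomorph⟩, U, hU, heU,
    ⟨hrU.restrict, hr.mapsToRestrict hrU⟩, fun x hx => Subtype.ext (hre hx)⟩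

end IsCompactENR

lemma isControlledEquiv_snd {Q Y V : Type*} [TopologicalSpace Q] [ContractibleSpace Q]
    [TopologicalSpace Y] [PseudoMetricSpace V] (q : Y → V) :
    IsControlledEquiv q (Prod.snd : Q × Y → Y) := by
  obtain ⟨x₀, hx₀⟩ := id_nullhomotopic Q
  obtain ⟨H⟩ := exists_realHomotopy hx₀
  refine .of_fiberwise_inverse (ψ := fun y => (x₀, y)) continuous_snd (by fun_prop)
    ⟨⟨fun z => (H (z.1.1, z.2), z.1.2), by fun_prop, fun z => by simp, fun z => by simp⟩,
      fun z t => (dist_self _).le⟩ (.refl continuous_id fun y => (dist_self _).le)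

/-- Pair `f` with an embedding of `X` into a ball, which is contractible. -/
lemma InjectsInEuclidean.exists_injective_factorization {X Y V : Type} [TopologicalSpace X]
    [CompactSpace X] [TopologicalSpace Y] [PseudoMetricSpace V] (hX : InjectsInEuclidean X)
    (hY : IsCompactENR Y) {f : X → Y} (hf : Continuous f) (q : Y → V) :
    ∃ (R : Type) (_ : TopologicalSpace R) (g : R → Y) (j : X → R), IsCompactENR R ∧
      IsControlledEquiv q g ∧ Continuous j ∧ Function.Injective j ∧ g ∘ j = f := by
  obtain ⟨n, e, he, he'⟩ := hX
  obtain ⟨r, hr, hr'⟩ := (isCompact_range he).isBounded.exists_pos_norm_le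
  have e_mem (x : X) : e x ∈ Metric.closedBall (0 : Fin n → ℝ) r :=
    mem_closedBall_zero_iff.2 (hr' _ (mem_range_self x))
  have : ContractibleSpace (Metric.closedBall (0 : Fin n → ℝ) r) :=
    (convex_closedBall 0 r).contractibleSpace ⟨0, Metric.mem_closedBall_self hr.le⟩
  exact ⟨Metric.closedBall (0 : Fin n → ℝ) r × Y, inferInstance, Prod.snd,
    fun x => (⟨e x, e_mem x⟩, f x), (IsCompactENR.closedBall hr).prod hY,
    isControlledEquiv_snd q, by fun_prop,
    fun x y h => he' (congrArg (fun z => (z.1 : Fin n → ℝ)) h), rfl⟩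

end CompactENR

/-! ### Compact subcylinders -/

namespace DoubleCylinder

section Coordinates

variable {A M L : Type*} {i : M → A} {j : M → L}

/-- The height of a point of the double mapping cylinder above its left end. -/
def height : DoubleCylinder i j → ℝ :=
  lift (fun _ => 0) (fun z => z.2) (fun _ => 1) (fun _ => rfl) (fun _ => rfl)

lemma height_mid (m : M) {s : ℝ} (hs₀ : 0 ≤ s) (hs₁ : s ≤ 1) :
    height (mid m s : DoubleCylinder i j) = s :=
  lift_mid m hs₀ hs₁

/-- The projection to the left end, defined away from the right end. -/
def toLeft : DoubleCylinder i j → Option A :=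
  lift some (fun z => if z.2 < 1 then some (i z.1) else none) (fun _ => none) (fun _ => by simp)
    (fun _ => by simp)

/-- The projection to the right end, defined away from the left end. -/
def toRight : DoubleCylinder i j → Option L :=
  lift (fun _ => none) (fun z => if 0 < z.2 then some (j z.1) else none) some (fun _ => by simp)
    (fun _ => by simp)

lemma toLeft_mid (m : M) {s : ℝ} (hs₀ : 0 ≤ s) (hs₁ : s < 1) :
    toLeft (mid m s : DoubleCylinder i j) = some (i m) :=
  (lift_mid m hs₀ hs₁.le).trans (if_pos hs₁)

lemma left_injective : Function.Injective (left : A → DoubleCylinder i j) :=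
  fun _ _ h => Option.some_injective _ (congrArg toLeft h)

lemma right_injective : Function.Injective (right : L → DoubleCylinder i j) :=
  fun _ _ h => Option.some_injective _ (congrArg toRight h)

lemma eq_of_mid_eq_mid (hi : Function.Injective i) {m n : M} {s : ℝ} (hs₀ : 0 ≤ s) (hs₁ : s < 1)
    (h : (mid m s : DoubleCylinder i j) = mid n s) : m = n := by
  have toLeft_eq := congrArg toLeft h
  rw [toLeft_mid m hs₀ hs₁, toLeft_mid n hs₀ hs₁] at toLeft_eq
  exact hi (Option.some_injective _ toLeft_eq)

section Embedding

variable {V W : Type*} [NormedAddCommGroup V] [NormedSpace ℝ V] [NormedAddCommGroup W]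
  [NormedSpace ℝ W] {a : A → V} {l : L → W}

/-- Coordinates on the double mapping cylinder: the height, and coordinates of the two ends faded
out towards the opposite end. -/
def coords (a : A → V) (l : L → W) : DoubleCylinder i j → ℝ × V × W :=
  lift (fun x => (0, a x, 0)) (fun z => (z.2, (1 - z.2) • a (i z.1), z.2 • l (j z.1)))
    (fun x => (1, 0, l x)) (fun m => by simp) (fun m => by simp)

lemma coords_left (x : A) : coords a l (left x : DoubleCylinder i j) = (0, a x, 0) := rfl

lemma coords_right (x : L) : coords a l (right x : DoubleCylinder i j) = (1, 0, l x) := rfl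

lemma coords_mid (m : M) {s : ℝ} (hs₀ : 0 < s) (hs₁ : s < 1) :
    coords a l (mid m s : DoubleCylinder i j) = (s, (1 - s) • a (i m), s • l (j m)) :=
  lift_mid m hs₀.le hs₁.le

lemma coords_injective (ha : Function.Injective a) (hl : Function.Injective l)
    (hi : Function.Injective i) :
    Function.Injective (coords a l : DoubleCylinder i j → ℝ × V × W) := by
  intro z w h
  induction z using induction <;> induction w using induction <;>
    simp only [coords_left, coords_right, coords_mid, *, Prod.mk.injEq] at h
  case left.left x y => rw [ha h.2.1]
  case mid.mid m s hs₀ hs₁ n t ht₀ ht₁ =>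
    obtain ⟨rfl, h, -⟩ := h
    rw [hi (ha (smul_right_injective V (sub_pos.2 hs₁).ne' h))]
  case right.right x y => rw [hl h.2.2]
  all_goals linarith [h.1]

lemma coords_map {A' M' L' : Type*} {i' : M' → A'} {j' : M' → L'} {f : A' → A} {k : M' → M}
    {g : L' → L} {hi : ∀ m, i (k m) = f (i' m)} {hj : ∀ m, j (k m) = g (j' m)}
    (z : DoubleCylinder i' j') : coords a l (map f k g hi hj z) = coords (a ∘ f) (l ∘ g) z := by
  induction z using induction with
  | left x => rfl
  | mid m s hs₀ hs₁ =>
    simp only [map_mid, coords_mid _ hs₀ hs₁, hi, hj, Function.comp_apply]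
  | right x => rfl

lemma map_injective [TopologicalSpace A] [TopologicalSpace L] {A' M' L' : Type*} {i' : M' → A'}
    {j' : M' → L'} {f : A' → A} {k : M' → M} {g : L' → L} {hki : ∀ m, i (k m) = f (i' m)}
    {hkj : ∀ m, j (k m) = g (j' m)} (hA : InjectsInEuclidean A) (hL : InjectsInEuclidean L)
    (hi' : Function.Injective i') (hf : Function.Injective f) (hg : Function.Injective g) :
    Function.Injective (map f k g hki hkj : DoubleCylinder i' j' → DoubleCylinder i j) := by
  obtain ⟨_, a, -, ha⟩ := hA
  obtain ⟨_, l, -, hl⟩ := hL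
  refine Function.Injective.of_comp (f := coords a l) ?_
  rw [show coords a l ∘ map f k g hki hkj = coords (a ∘ f) (l ∘ g) from funext coords_map]
  exact coords_injective (ha.comp hf) (hl.comp hg) hi'

end Embedding

end Coordinates

section CylinderOn

variable {A M L : Type*} (i : M → A) (j : M → L)

/-- The middle part of the double mapping cylinder, parametrised by the product with the unit
interval. -/
def midMap (z : M × I) : DoubleCylinder i j := mid z.1 z.2

/-- The part of the double mapping cylinder left after shrinking its left end to `P`. -/
def cylinderOn (P : Set A) : Set (DoubleCylinder i j) :=
  left '' P ∪ Set.range (midMap i j) ∪ Set.range right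

variable {P : Set A}

lemma cylinderOn_mono : Monotone (cylinderOn i j) := fun _ _ h =>
  Set.union_subset_union_left _ (Set.union_subset_union_left _ (Set.image_mono h))

lemma left_image_subset_cylinderOn (P : Set A) : left '' P ⊆ cylinderOn i j P :=
  Set.subset_union_left.trans Set.subset_union_left

lemma cylinderOn_univ : cylinderOn i j Set.univ = Set.univ := by
  refine Set.eq_univ_of_forall fun z => ?_
  induction z using induction with
  | left a => exact .inl (.inl ⟨a, trivial, rfl⟩)
  | mid m s hs₀ hs₁ => exact .inl (.inr ⟨(m, ⟨s, hs₀.le, hs₁.le⟩), rfl⟩)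
  | right l => exact .inr ⟨l, rfl⟩

variable {i j}

lemma midMap_injective (hi : Function.Injective i) (hj : Function.Injective j) :
    Function.Injective (midMap i j) := by
  rintro ⟨m, s⟩ ⟨n, t⟩ h
  obtain rfl : s = t := Subtype.ext <| by
    rw [← height_mid (i := i) (j := j) m s.2.1 s.2.2, ← height_mid n t.2.1 t.2.2]
    exact congrArg height h
  obtain rfl : m = n := by
    rcases s.2.2.lt_or_eq with hs | hs
    · exact eq_of_mid_eq_mid hi s.2.1 hs h
    · simp only [midMap, hs, mid_one] at h
      exact hj (right_injective h)
  rfl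

lemma left_image_inter_range_midMap (hP : Set.range i ⊆ P) :
    left '' P ∩ Set.range (midMap i j) = Set.range (left ∘ i) := by
  ext z
  constructor
  · rintro ⟨⟨x, -, rfl⟩, ⟨m, s⟩, h⟩
    have hs : (s : ℝ) = 0 := (height_mid m s.2.1 s.2.2).symm.trans (congrArg height h)
    exact ⟨m, by rw [← h, midMap, hs, mid_zero, Function.comp_apply]⟩
  · rintro ⟨m, rfl⟩
    exact ⟨⟨_, hP ⟨m, rfl⟩, rfl⟩, (m, 0), mid_zero⟩

lemma union_range_midMap_inter_range_right :
    (left '' P ∪ Set.range (midMap i j)) ∩ Set.range right = Set.range (right ∘ j) := by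
  ext z
  constructor
  · rintro ⟨⟨x, -, rfl⟩ | ⟨⟨m, s⟩, rfl⟩, y, h⟩
    · exact absurd (congrArg height h) one_ne_zero
    · have hs : (s : ℝ) = 1 := (height_mid m s.2.1 s.2.2).symm.trans (congrArg height h).symm
      exact ⟨m, by rw [midMap, hs, mid_one, Function.comp_apply]⟩
  · rintro ⟨m, rfl⟩
    exact ⟨.inr ⟨(m, 1), mid_one⟩, j m, rfl⟩

variable {D : Set A} {k : D → L}

/-- The double mapping cylinder with left end shrunk to `P`, mapped to the whole one. -/
def shrinkLeft (k : D → L) (hDP : D ⊆ P) :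
    DoubleCylinder (Set.inclusion hDP) k → DoubleCylinder ((↑) : D → A) k :=
  map (↑) id id (fun _ => rfl) (fun _ => rfl)

lemma shrinkLeft_mid (hDP : D ⊆ P) (m : D) (s : ℝ) :
    shrinkLeft k hDP (mid m s) = mid m s :=
  map_mid m s

lemma range_shrinkLeft (hDP : D ⊆ P) : Set.range (shrinkLeft k hDP) = cylinderOn (↑) k P := by
  ext z
  constructor
  · rintro ⟨z, rfl⟩
    induction z using induction with
    | left x => exact .inl (.inl ⟨x, x.2, rfl⟩)
    | mid m s hs₀ hs₁ => exact .inl (.inr ⟨(m, ⟨s, hs₀.le, hs₁.le⟩), (shrinkLeft_mid hDP m s).symm⟩)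
    | right x => exact .inr ⟨x, rfl⟩
  · rintro ((⟨x, hx, rfl⟩ | ⟨⟨m, s⟩, rfl⟩) | ⟨x, rfl⟩)
    exacts [⟨left ⟨x, hx⟩, rfl⟩, ⟨mid m s, shrinkLeft_mid hDP m s⟩, ⟨right x, rfl⟩]

end CylinderOn

section CylinderOnTopology

variable {A M L : Type*} [TopologicalSpace A] [TopologicalSpace M] [TopologicalSpace L]
  {i : M → A} {j : M → L} {P : Set A}

lemma injectsInEuclidean (hA : InjectsInEuclidean A) (hL : InjectsInEuclidean L)
    (hi : Continuous i) (hi' : Function.Injective i) (hj : Continuous j) :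
    InjectsInEuclidean (DoubleCylinder i j) :=
  let ⟨_, _, ha, ha'⟩ := hA
  let ⟨_, _, hl, hl'⟩ := hL
  .of_injective (continuous_lift _ _ (by fun_prop) (by fun_prop) (by fun_prop))
    (coords_injective ha' hl' hi')

@[fun_prop]
lemma continuous_midMap : Continuous (midMap i j) := by unfold midMap; fun_prop

lemma isCompact_cylinderOn [CompactSpace M] [CompactSpace L] (hP : IsCompact P) :
    IsCompact (cylinderOn i j P) :=
  ((hP.image continuous_left).union (isCompact_range continuous_midMap)).union
    (isCompact_range continuous_right)

instance [CompactSpace A] [CompactSpace M] [CompactSpace L] : CompactSpace (DoubleCylinder i j) :=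
  ⟨cylinderOn_univ i j ▸ isCompact_cylinderOn isCompact_univ⟩

lemma isANE_cylinderOn [CompactSpace A] [CompactSpace M] [CompactSpace L]
    [T2Space (DoubleCylinder i j)] (hi : Continuous i) (hi' : Function.Injective i)
    (hj : Continuous j) (hj' : Function.Injective j) (hiP : Set.range i ⊆ P) (hP : IsCompact P)
    (hP' : IsANE P) (hM : IsANE (Set.univ : Set M)) (hL : IsANE (Set.univ : Set L)) :
    IsANE (cylinderOn i j P) := by
  have left_closed : IsClosed (left '' P : Set (DoubleCylinder i j)) :=
    (hP.image continuous_left).isClosed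
  have mid_closed : IsClosed (Set.range (midMap i j)) :=
    (isCompact_range continuous_midMap).isClosed
  have left_mid : IsANE (left '' P ∪ Set.range (midMap i j)) := by
    refine .union left_closed mid_closed
      (hP'.image (continuous_left.isClosedEmbedding left_injective).isEmbedding)
      (.range ?_ (continuous_midMap.isClosedEmbedding (midMap_injective hi' hj')).isEmbedding) ?_
    · exact Set.univ_prod_univ ▸ hM.prod isANE_univ
    · rw [left_image_inter_range_midMap hiP]
      exact hM.range ((continuous_left.comp hi).isClosedEmbedding
        (left_injective.comp hi')).isEmbedding
  refine .union (left_closed.union mid_closed) (isCompact_range continuous_right).isClosed left_mid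
    (hL.range (continuous_right.isClosedEmbedding right_injective).isEmbedding) ?_
  rw [union_range_midMap_inter_range_right]
  exact hM.range ((continuous_right.comp hj).isClosedEmbedding
    (right_injective.comp hj')).isEmbedding

lemma isEmbedding_shrinkLeft [CompactSpace L] {D : Set A} {k : D → L} (hk : Continuous k)
    (hA : InjectsInEuclidean A) (hL : InjectsInEuclidean L) (hP : IsCompact P) (hD : IsCompact D)
    (hDP : D ⊆ P) : Topology.IsEmbedding (shrinkLeft k hDP) := by
  have := isCompact_iff_compactSpace.1 hP
  have := isCompact_iff_compactSpace.1 hD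
  have := (injectsInEuclidean hA hL continuous_subtype_val Subtype.val_injective hk).t2Space
  have hs : Continuous (shrinkLeft k hDP) :=
    continuous_map _ _ continuous_subtype_val continuous_id continuous_id
  exact (hs.isClosedEmbedding (map_injective hA hL (Set.inclusion_injective hDP)
    Subtype.val_injective Function.injective_id)).isEmbedding

end CylinderOnTopology

end DoubleCylinder

/-! ### Models over subcomplexes -/

section Model

variable {E V X Y : Type} [TopologicalSpace E] [PseudoMetricSpace V] [TopologicalSpace X]
  [TopologicalSpace Y] {p : E → V} {A : Set V} {Φ : X → E} {P : Set X}

/-- The subspace `P` of `X` is compact, an absolute neighbourhood extensor, and the restriction of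
`Φ` to it is a controlled homotopy equivalence to the part of `p` over `A`. -/
structure IsModelOver (p : E → V) (A : Set V) (Φ : X → E) (P : Set X) : Prop where
  isCompact : IsCompact P
  isANE : IsANE P
  mapsTo : Set.MapsTo Φ P (p ⁻¹' A)
  isControlledEquiv : IsControlledEquiv (restrictOver p A) mapsTo.restrict

namespace IsModelOver

lemma of_homeomorph (hP : IsCompact P) (hP' : IsANE P) {f : Y → p ⁻¹' A} (e : Y ≃ₜ P)
    (hf : IsControlledEquiv (restrictOver p A) f) (hfe : ∀ y, Φ (e y) = f y) :
    IsModelOver p A Φ P := by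
  have Φ_eq (x : P) : Φ x = f (e.symm x) := by rw [← hfe, e.apply_symm_apply]
  have mapsTo : Set.MapsTo Φ P (p ⁻¹' A) := fun x hx => Φ_eq ⟨x, hx⟩ ▸ (f _).2
  have restrict_eq : mapsTo.restrict = f ∘ e.symm := funext fun x => Subtype.ext (Φ_eq x)
  exact ⟨hP, hP', mapsTo, restrict_eq ▸ hf.comp (.of_homeomorph e.symm)⟩

lemma image (hP : IsModelOver p A Φ P) {g : X → Y} (hg : Topology.IsEmbedding g) {Φ' : Y → E}
    (hΦ' : Φ' ∘ g = Φ) : IsModelOver p A Φ' (g '' P) :=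
  of_homeomorph (hP.isCompact.image hg.continuous) (hP.isANE.image hg) (hg.homeomorphImage P)
    hP.isControlledEquiv fun x => congrFun hΦ' x

lemma empty : IsModelOver p ∅ Φ ∅ :=
  have : IsEmpty (p ⁻¹' (∅ : Set V)) := ⟨fun e => e.2⟩
  of_homeomorph isCompact_empty isANE_empty (.refl _)
    (.of_homeomorph (.empty (X := (∅ : Set X)))) fun x => x.2.elim

end IsModelOver

end Model

namespace FiberTrivialization

variable {E V L X R : Type} [TopologicalSpace E] [MetricSpace V] [TopologicalSpace L]
  {p : E → V} {A B C : Set V}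
  (T : FiberTrivialization p C L) {Φ : X → E} {P D : Set X} (hD : Set.MapsTo Φ D (p ⁻¹' C))
  {g : R → C × L} {j : D → R} (hj : ∀ m : D, g (j m) = T.toProd ⟨Φ m, hD m.2⟩)

/-- The map `Φ` extended over the cylinder glueing a space `R` over `C × L` to `X` along `D`. -/
def glue (hj : ∀ m : D, g (j m) = T.toProd ⟨Φ m, hD m.2⟩) :
    DoubleCylinder ((↑) : D → X) j → E :=
  DoubleCylinder.lift Φ (fun z => T.homotopy (⟨Φ z.1, hD z.1.2⟩, z.2)) (fun x => T.ofProd (g x))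
    (fun m => by rw [T.homotopy.map_zero]; rfl)
    (fun m => by rw [T.homotopy.map_one, hj]; rfl)

lemma glue_shrinkLeft (hP : Set.MapsTo Φ P (p ⁻¹' A)) (hD' : Set.MapsTo Φ D (p ⁻¹' (A ∩ C)))
    (hDP : D ⊆ P) (z : DoubleCylinder (Set.inclusion hDP) j) :
    T.glue hD hj (.shrinkLeft j hDP z) =
      T.attach A (.map hP.restrict hD'.restrict g (fun _ => rfl) (fun m => (hj m).symm) z) := by
  induction z using DoubleCylinder.induction with
  | left x => rfl
  | mid m s hs₀ hs₁ =>
    calc T.glue hD hj (.shrinkLeft j hDP (.mid m s))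
      _ = T.glue hD hj (.mid m s) := by rw [DoubleCylinder.shrinkLeft_mid]
      _ = T.homotopy (⟨Φ m, hD m.2⟩, s) := DoubleCylinder.lift_mid m hs₀.le hs₁.le
      _ = T.attach A (.mid (hD'.restrict _ _ _ m) s) := by
        rw [T.attach_mid _ hs₀.le hs₁.le]
        rfl
      _ = _ := congrArg (fun z => (T.attach A z : E)) (DoubleCylinder.map_mid m s).symm
  | right x => rfl

variable [TopologicalSpace X] [TopologicalSpace R]

lemma continuous_glue (hΦ : Continuous Φ) (hg : Continuous g) : Continuous (T.glue hD hj) := by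
  have hT := T.continuous_ofProd
  have := hΦ.continuousOn.mapsToRestrict hD
  exact DoubleCylinder.continuous_lift _ _ (by fun_prop) (by fun_prop) (by fun_prop)

lemma isControlledEquiv_attach_comp_map (hp : Continuous p) (hB : LiftsHomotopies p B)
    (hA : IsClosed A) (hC : IsClosed C) (hACB : A ∪ C ⊆ B)
    (hκ : ∀ ε > 0, Nonempty (Collar C (A ∩ C) ε)) (hP : IsModelOver p A Φ P)
    (hD' : IsModelOver p (A ∩ C) Φ D) (hDP : D ⊆ P) (hjc : Continuous j)
    (hg : IsControlledEquiv (fun x => (x.1 : V)) g) :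
    IsControlledEquiv (restrictOver p (A ∪ C)) (T.attach A ∘
      .map hP.mapsTo.restrict hD'.mapsTo.restrict g
        (i := Set.inclusion hDP) (fun _ => rfl) (fun m => (hj m).symm)) := by
  have hT := T.continuous_toProd
  refine (T.isControlledEquiv_attach hp hB hA hC hACB hκ).comp ?_
  rw [T.restrictOver_comp_attach]
  exact DoubleCylinder.isControlledEquiv_map (by fun_prop) hjc (by fun_prop) (by fun_prop) _ _ _
    hP.isControlledEquiv hD'.isControlledEquiv hg

lemma isModelOver_glue [CompactSpace X] (hp : Continuous p) (hB : LiftsHomotopies p B)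
    (hA : IsClosed A) (hC : IsClosed C) (hACB : A ∪ C ⊆ B)
    (hκ : ∀ ε > 0, Nonempty (Collar C (A ∩ C) ε)) (hX : InjectsInEuclidean X)
    (hR : IsCompactENR R) (hP : IsModelOver p A Φ P) (hD' : IsModelOver p (A ∩ C) Φ D)
    (hDP : D ⊆ P) (hjc : Continuous j) (hj' : Function.Injective j)
    (hg : IsControlledEquiv (fun x => (x.1 : V)) g) :
    IsModelOver p (A ∪ C) (T.glue hD hj) (DoubleCylinder.cylinderOn (↑) j P) := by
  have := hR.compactSpace
  have := isCompact_iff_compactSpace.1 hD'.isCompact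
  have := (DoubleCylinder.injectsInEuclidean hX hR.injectsInEuclidean continuous_subtype_val
    Subtype.val_injective hjc).t2Space
  have isANE_cylinderOn : IsANE (DoubleCylinder.cylinderOn ((↑) : D → X) j P) :=
    DoubleCylinder.isANE_cylinderOn continuous_subtype_val Subtype.val_injective hjc hj'
      (by rwa [Subtype.range_coe]) hP.isCompact hP.isANE hD'.isANE.univ_coe hR.isANE
  exact .of_homeomorph (DoubleCylinder.isCompact_cylinderOn hP.isCompact) isANE_cylinderOn
    ((DoubleCylinder.isEmbedding_shrinkLeft hjc hX hR.injectsInEuclidean hP.isCompact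
      hD'.isCompact hDP).toHomeomorph.trans (.setCongr (DoubleCylinder.range_shrinkLeft hDP)))
    (T.isControlledEquiv_attach_comp_map hD hj hp hB hA hC hACB hκ hP hD' hDP hjc hg)
    (T.glue_shrinkLeft hD hj hP.mapsTo hD'.mapsTo hDP)

end FiberTrivialization

section ExtendPart

variable {V X R : Type} {τ : Finset V}

open Classical in
/-- The subspaces of the cylinder glueing a space over the simplex `τ` to a filtered model. -/
def extendPart (part : Finset (Finset V) → Set X) (τ : Finset V)
    (j : part (properFaces τ) → R) (T : Finset (Finset V)) :
    Set (DoubleCylinder ((↑) : part (properFaces τ) → X) j) :=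
  if τ ∈ T then DoubleCylinder.cylinderOn (↑) j (part (T.erase τ))
  else DoubleCylinder.left '' part T

lemma extendPart_mono {part : Finset (Finset V) → Set X} (h : Monotone part)
    (j : part (properFaces τ) → R) : Monotone (extendPart part τ j) := by
  classical
  intro T T' hT
  unfold extendPart
  split_ifs with hτ hτ' hτ'
  · exact DoubleCylinder.cylinderOn_mono _ _ (h (Finset.erase_subset_erase τ hT))
  · exact absurd (hT hτ) hτ'
  · refine (Set.image_mono (h ?_)).trans (DoubleCylinder.left_image_subset_cylinderOn _ _ _)
    exact Finset.subset_erase.2 ⟨hT, hτ⟩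
  · exact Set.image_mono (h hT)

end ExtendPart

section FilteredModel

variable {V E X : Type} [NormedAddCommGroup V] [NormedSpace ℝ V] [TopologicalSpace E]
  {p : E → V} {K : Geometry.SimplicialComplex ℝ V} {S : Finset (Finset V)} {τ : Finset V}

lemma isCompactENR_convexHull [FiniteDimensional ℝ V]
    (hτ : AffineIndependent ℝ ((↑) : τ → V)) : IsCompactENR (convexHull ℝ (τ : Set V)) :=
  .of_isCompact (.of_injective continuous_id Function.injective_id)
    (isCompact_convexHull_finset τ) (isANE_convexHull hτ)

lemma isCompactENR_space [FiniteDimensional ℝ V] (hK : K.faces.Finite) :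
    IsCompactENR K.space :=
  polyhedron_toFinset hK ▸ .of_isCompact (.of_injective continuous_id Function.injective_id)
    (isCompact_polyhedron _) (isSubcomplex_toFinset hK).isANE_polyhedron

lemma LiftsHomotopies.exists_compactENR_fiberTrivialization {B C : Set V} {v : V}
    (hB : LiftsHomotopies p B) (hp : Continuous p) (hCB : C ⊆ B) (hC : StarConvex ℝ v C)
    (hv : HomotopyEquivToFiniteComplex (p ⁻¹' {v})) :
    ∃ (L : Type) (_ : TopologicalSpace L), IsCompactENR L ∧
      Nonempty (FiberTrivialization p C L) := by
  obtain ⟨n, K', hK', ⟨e⟩⟩ := hv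
  obtain ⟨triv⟩ := hB.exists_fiberTrivialization hp hCB hC
  exact ⟨K'.space, inferInstance, isCompactENR_space hK', triv.nonempty_congr e⟩

/-- A map `Φ` from a compact subspace of some `ℝⁿ` together with subspaces `part T`, increasing in
`T`, which are models of the part of `p` over `T` for all subcomplexes `T ⊆ S` of `K`. -/
structure IsFilteredModel [TopologicalSpace X] (p : E → V) (K : Geometry.SimplicialComplex ℝ V)
    (S : Finset (Finset V)) (Φ : X → E) (part : Finset (Finset V) → Set X) : Prop where
  compactSpace : CompactSpace X
  injectsInEuclidean : InjectsInEuclidean X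
  continuous : Continuous Φ
  monotone : Monotone part
  isModelOver : ∀ T ⊆ S, IsSubcomplex K T → IsModelOver p (polyhedron T) Φ (part T)

variable [TopologicalSpace X]

lemma isFilteredModel_empty : IsFilteredModel p K ∅ (X := Empty) Empty.elim fun _ => ∅ where
  compactSpace := inferInstance
  injectsInEuclidean := ⟨0, Empty.elim, continuous_of_const fun x => x.elim, fun x => x.elim⟩
  continuous := continuous_of_const fun x => x.elim
  monotone := monotone_const
  isModelOver T hT _ := by
    rw [Finset.subset_empty.1 hT, polyhedron_empty]
    exact .empty

variable [FiniteDimensional ℝ V]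

open Classical in
lemma IsFilteredModel.glue {Φ : X → E} {part : Finset (Finset V) → Set X}
    (h : IsFilteredModel p K (S.erase τ) Φ part) (hp : Continuous p)
    (hB : LiftsHomotopies p K.space) (hS : IsSubcomplex K S) (hτ : Maximal (· ∈ S) τ) {L R : Type}
    [TopologicalSpace L] [TopologicalSpace R] (triv : FiberTrivialization p (convexHull ℝ τ) L)
    (hR : IsCompactENR R) {g : R → convexHull ℝ (τ : Set V) × L} {j : part (properFaces τ) → R}
    (hD : Set.MapsTo Φ (part (properFaces τ)) (p ⁻¹' convexHull ℝ τ))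
    (hj : ∀ m : part (properFaces τ), g (j m) = triv.toProd ⟨Φ m, hD m.2⟩)
    (hjc : Continuous j) (hj' : Function.Injective j)
    (hg : IsControlledEquiv (fun x => (x.1 : V)) g) :
    IsFilteredModel p K S (triv.glue hD hj) (extendPart part τ j) := by
  have := h.compactSpace
  have := hR.compactSpace
  have faces_subset := hS.properFaces_subset_erase hτ.prop
  have hτK : τ ∈ K.faces := hS.mem_faces τ hτ.prop
  have model_boundary := h.isModelOver _ faces_subset (isSubcomplex_properFaces hτK)
  have := isCompact_iff_compactSpace.1 model_boundary.isCompact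
  have injects := DoubleCylinder.injectsInEuclidean h.injectsInEuclidean hR.injectsInEuclidean
    continuous_subtype_val Subtype.val_injective hjc
  have := injects.t2Space
  refine ⟨inferInstance, injects, triv.continuous_glue hD hj h.continuous hg.continuous,
    extendPart_mono h.monotone j, fun T hTS hT => ?_⟩
  by_cases hτT : τ ∈ T
  · have hτT' : Maximal (· ∈ T) τ := hτ.mono hTS hτT
    have model_erase := h.isModelOver _ (Finset.erase_subset_erase τ hTS) (hT.erase hτT')
    rw [extendPart, if_pos hτT, ← polyhedron_erase_union hτT]
    rw [← hT.polyhedron_erase_inter hτT'] at model_boundary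
    refine triv.isModelOver_glue hD hj hp hB (isCompact_polyhedron _).isClosed
      (isCompact_convexHull_finset τ).isClosed
      ?_ (fun ε hε => ?_) h.injectsInEuclidean hR model_erase model_boundary
      (h.monotone (hT.properFaces_subset_erase hτT)) hjc hj' hg
    · exact polyhedron_erase_union hτT ▸ hT.polyhedron_subset_space
    · rw [hT.polyhedron_erase_inter hτT']
      exact nonempty_collar_properFaces (K.indep hτK) (K.nonempty_of_mem_faces hτK) hε
  · rw [extendPart, if_neg hτT]
    exact (h.isModelOver T (Finset.subset_erase.2 ⟨hTS, hτT⟩) hT).image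
      (DoubleCylinder.continuous_left.isClosedEmbedding DoubleCylinder.left_injective).isEmbedding
      rfl

open Classical in
lemma IsFilteredModel.exists_glue {Φ : X → E} {part : Finset (Finset V) → Set X}
    (h : IsFilteredModel p K (S.erase τ) Φ part) (hp : Continuous p)
    (hB : LiftsHomotopies p K.space)
    (hfib : ∀ v ∈ K.space, HomotopyEquivToFiniteComplex (p ⁻¹' {v}))
    (hS : IsSubcomplex K S) (hτ : Maximal (· ∈ S) τ) :
    ∃ (X' : Type) (_ : TopologicalSpace X') (Φ' : X' → E) (part' : Finset (Finset V) → Set X'),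
      IsFilteredModel p K S Φ' part' := by
  have hτK : τ ∈ K.faces := hS.mem_faces τ hτ.prop
  have hτ_space := K.convexHull_subset_space hτK
  obtain ⟨v, hv⟩ := K.nonempty_of_mem_faces hτK
  have hv' : v ∈ convexHull ℝ (τ : Set V) := subset_convexHull ℝ _ hv
  obtain ⟨L, _, hL, ⟨triv⟩⟩ := hB.exists_compactENR_fiberTrivialization hp hτ_space
    ((convex_convexHull ℝ _).starConvex hv') (hfib v (hτ_space hv'))
  have model_boundary := h.isModelOver _ (hS.properFaces_subset_erase hτ.prop)
    (isSubcomplex_properFaces hτK)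
  have hD : Set.MapsTo Φ (part (properFaces τ)) (p ⁻¹' convexHull ℝ τ) := fun x hx =>
    (hS.polyhedron_erase_inter hτ ▸ model_boundary.mapsTo hx :).2
  have := isCompact_iff_compactSpace.1 model_boundary.isCompact
  have hΦ := h.continuous
  have htriv := triv.continuous_toProd
  obtain ⟨R, _, g, j, hR, hg, hjc, hj', hgj⟩ :=
    (h.injectsInEuclidean.comp_injective (f := ((↑) : part (properFaces τ) → X))
      continuous_subtype_val Subtype.val_injective).exists_injective_factorization
      ((isCompactENR_convexHull (K.indep hτK)).prod hL)
      (f := fun m => triv.toProd ⟨Φ m, hD m.2⟩) (by fun_prop) fun x => (x.1 : V)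
  exact ⟨_, inferInstance, _, _, h.glue hp hB hS hτ triv hR hD (congrFun hgj) hjc hj' hg⟩

theorem LiftsHomotopies.exists_isFilteredModel (hB : LiftsHomotopies p K.space)
    (hp : Continuous p) (hfib : ∀ v ∈ K.space, HomotopyEquivToFiniteComplex (p ⁻¹' {v}))
    (hS : IsSubcomplex K S) :
    ∃ (X : Type) (_ : TopologicalSpace X) (Φ : X → E) (part : Finset (Finset V) → Set X),
      IsFilteredModel p K S Φ part := by
  refine hS.induction (motive := fun S => ∃ (X : Type) (_ : TopologicalSpace X) (Φ : X → E)
    (part : Finset (Finset V) → Set X), IsFilteredModel p K S Φ part)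
    ⟨_, inferInstance, _, _, isFilteredModel_empty⟩ fun S τ hS hτ ih_erase _ => ?_
  obtain ⟨X, _, Φ, part, h⟩ := ih_erase
  exact h.exists_glue hp hB hfib hS hτ

end FilteredModel

/-! ### Approximate lifting -/

section ApproximateLifting

open Set

lemma exists_continuous_modulus_of_uniform_continuity {T V : Type*} [PseudoMetricSpace T]
    [CompactSpace T] [PseudoMetricSpace V] {ε : ℝ} (hε : 0 < ε) :
    ∃ δ : C(C(T, V), ℝ), ∀ u, 0 < δ u ∧ ∀ s t, dist s t ≤ δ u → dist (u s) (u t) < ε := by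
  refine exists_continuous_forall_mem_convex_of_local_const
    (t := fun u : C(T, V) => {d : ℝ | 0 < d ∧ ∀ s t, dist s t ≤ d → dist (u s) (u t) < ε})
    (fun u => OrdConnected.convex ⟨fun a ha b hb c hc => ?_⟩) fun u => ?_
  · exact ⟨ha.1.trans_le hc.1, fun s t h => hb.2 s t (h.trans hc.2)⟩
  · have hu := CompactSpace.uniformContinuous_of_continuous u.continuous
    obtain ⟨d, hd, hud⟩ := Metric.uniformContinuous_iff.1 hu (ε / 3) (by positivity)
    refine ⟨d / 2, ?_⟩
    filter_upwards [Metric.ball_mem_nhds u (by positivity : 0 < ε / 3)] with w hw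
    have hwu (t : T) : dist (w t) (u t) < ε / 3 := (ContinuousMap.dist_apply_le_dist t).trans_lt hw
    refine ⟨by positivity, fun s t hst => ?_⟩
    calc dist (w s) (w t)
      _ ≤ dist (w s) (u s) + dist (u s) (u t) + dist (u t) (w t) := dist_triangle4 ..
      _ < ε / 3 + ε / 3 + ε / 3 :=
        add_lt_add (add_lt_add (hwu s) (hud (by linarith))) (dist_comm (w t) (u t) ▸ hwu t)
      _ = ε := by ring

variable {V E X Z : Type} [MetricSpace V] [TopologicalSpace E] [TopologicalSpace X]
  [TopologicalSpace Z]

lemma exists_continuous_time_modulus {h : Z × ℝ → V} (hh : Continuous h) {ε : ℝ} (hε : 0 < ε) :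
    ∃ δ : Z → ℝ, Continuous δ ∧ (∀ z, 0 < δ z) ∧ ∀ z, ∀ s ∈ I, ∀ t ∈ I, |s - t| ≤ δ z →
      dist (h (z, s)) (h (z, t)) < ε := by
  obtain ⟨δ, hδ⟩ := exists_continuous_modulus_of_uniform_continuity (T := I) (V := V) hε
  let u : C(Z × I, V) := ⟨fun z => h (z.1, z.2), by fun_prop⟩
  exact ⟨fun z => δ (u.curry z), by fun_prop, fun z => (hδ _).1,
    fun z s hs t ht hst => (hδ (u.curry z)).2 ⟨s, hs⟩ ⟨t, ht⟩ hst⟩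

/-- The lift of `h` to `E` is transported to `X` by an approximate inverse `ψ` of `φ`. To start at
`f` instead of `ψ ∘ φ ∘ f`, it is delayed by a short time `δ`, during which the homotopy from `id`
to `ψ ∘ φ` is traversed. -/
lemma LiftsHomotopies.exists_approx_lift {p : E → V} {B : Set V} (hB : LiftsHomotopies p B)
    {φ : X → E} (hφ : IsControlledEquiv p φ) {f : Z → X} (hf : Continuous f) {h : Z × ℝ → V}
    (hh : Continuous h) (h_mem : ∀ z t, 0 ≤ t → t ≤ 1 → h (z, t) ∈ B)
    (h_zero : ∀ z, h (z, 0) = p (φ (f z))) {ε : ℝ} (hε : 0 < ε) :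
    ∃ H : Z × ℝ → X, Continuous H ∧ (∀ z, H (z, 0) = f z) ∧
      ∀ z, ∀ t ∈ I, dist (p (φ (H (z, t)))) (h (z, t)) < ε := by
  obtain ⟨ψ, hψ, ⟨G, hG⟩, hφψ⟩ := hφ.exists_inverse (ε / 2) (by positivity)
  obtain ⟨F, hF, F_zero, pF⟩ := hB Z (φ ∘ f) h (hφ.continuous.comp hf) hh h_mem h_zero
  obtain ⟨δ, hδ, δ_pos, hδh⟩ := exists_continuous_time_modulus hh (by positivity : 0 < ε / 2)
  let H (w : Z × ℝ) : X := if w.2 ≤ δ w.1 then G (f w.1, w.2 / δ w.1) else ψ (F (w.1, w.2 - δ w.1))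
  have continuous_H : Continuous H := by
    have hdiv : Continuous fun w : Z × ℝ => w.2 / δ w.1 :=
      continuous_snd.div (by fun_prop) fun w => (δ_pos w.1).ne'
    refine Continuous.if_le (G.continuous_toFun.comp (by fun_prop)) (by fun_prop) (by fun_prop)
      (by fun_prop) fun w hw => ?_
    rw [hw, div_self (δ_pos _).ne', sub_self, G.map_one, F_zero]
    rfl
  have dist_delayed (z : Z) (t : ℝ) : dist (p (φ (H (z, t)))) (h (z, clamp (t - δ z))) ≤ ε / 2 := by
    by_cases ht : t ≤ δ z
    · rw [show H (z, t) = G (f z, t / δ z) from if_pos ht, clamp_of_nonpos (sub_nonpos.2 ht),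
        h_zero]
      exact hG _ _
    · rw [← pF, show H (z, t) = ψ (F (z, t - δ z)) from if_neg ht]
      exact hφψ.dist_right_le _
  refine ⟨H, continuous_H, fun z => ?_, fun z t ht => ?_⟩
  · simp [H, (δ_pos z).le]
  · have delay_le : |clamp (t - δ z) - t| ≤ δ z := by
      have := δ_pos z
      obtain ⟨ht₀, ht₁⟩ := ht
      grind [clamp]
    calc dist (p (φ (H (z, t)))) (h (z, t))
      _ ≤ dist (p (φ (H (z, t)))) (h (z, clamp (t - δ z))) +
          dist (h (z, clamp (t - δ z))) (h (z, t)) := dist_triangle ..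
      _ < ε / 2 + ε / 2 := add_lt_add_of_le_of_lt (dist_delayed z t)
        (hδh z _ ⟨clamp_nonneg _, clamp_le_one _⟩ t ht delay_le)
      _ = ε := add_halves ε

end ApproximateLifting

section Fibration

variable {V E B X : Type} [MetricSpace V] [TopologicalSpace E] [TopologicalSpace B]
  [TopologicalSpace X] {S : Set V} {p : E → B} {φ : X → E}

lemma IsHurewiczFibration.liftsHomotopies (hp : IsHurewiczFibration p) (β : B ≃ₜ S) :
    LiftsHomotopies (fun e => (β (p e) : V)) S := by
  intro Z _ f h hf hh h_mem h_zero
  let hB : C(Z × I, B) :=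
    ⟨fun w => β.symm ⟨h (w.1, w.2), h_mem _ _ w.2.2.1 w.2.2.2⟩, by fun_prop⟩
  have hB_zero (z : Z) : hB (z, 0) = p (f z) := β.symm_apply_eq.2 (Subtype.ext (h_zero z))
  obtain ⟨H, H_zero, pH⟩ := hp.2 Z ⟨f, hf⟩ hB hB_zero
  refine ⟨fun w => H (w.1, Set.projIcc 0 1 zero_le_one w.2), by fun_prop, fun z => ?_,
    fun z t => ?_⟩
  · simp [H_zero]
  · exact congrArg Subtype.val ((congrArg β (pH _)).trans (β.apply_symm_apply _))

lemma exists_pos_forall_dist_lt_exists_mem_of_sUnion_eq_univ (hS : IsCompact S) (β : B ≃ₜ S)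
    {𝒰 : Set (Set B)} (h𝒰 : ∀ U ∈ 𝒰, IsOpen U) (h𝒰' : ⋃₀ 𝒰 = Set.univ) :
    ∃ ε > 0, ∀ b b', dist (β b : V) (β b') < ε → ∃ U ∈ 𝒰, b ∈ U ∧ b' ∈ U := by
  have := isCompact_iff_compactSpace.1 hS
  obtain ⟨ε, hε, hε'⟩ := lebesgue_number_lemma_of_metric (s := Set.univ)
    (c := fun U : 𝒰 => β.symm ⁻¹' U) isCompact_univ
    (fun U => (h𝒰 U U.2).preimage β.symm.continuous) fun x _ => by
      obtain ⟨U, hU, hx⟩ := h𝒰'.ge (Set.mem_univ (β.symm x))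
      exact Set.mem_iUnion.2 ⟨⟨U, hU⟩, hx⟩
  refine ⟨ε, hε, fun b b' hbb' => ?_⟩
  obtain ⟨U, hU⟩ := hε' (β b') (Set.mem_univ _)
  exact ⟨U, U.2, by simpa using hU hbb', by simpa using hU (Metric.mem_ball_self hε)⟩

lemma IsHurewiczFibration.isApproxFibration_comp (hp : IsHurewiczFibration p) (hS : IsCompact S)
    (β : B ≃ₜ S) (hφ : IsControlledEquiv (fun e => (β (p e) : V)) φ) :
    IsApproxFibration (p ∘ φ) := by
  refine ⟨hp.1.comp hφ.continuous, fun Z _ f h h_zero 𝒰 h𝒰 h𝒰' => ?_⟩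
  obtain ⟨ε, hε, hε'⟩ := exists_pos_forall_dist_lt_exists_mem_of_sUnion_eq_univ hS β h𝒰 h𝒰'
  obtain ⟨H, hH, H_zero, dist_H⟩ := (hp.liftsHomotopies β).exists_approx_lift hφ f.continuous
    (h := fun w => β (h (w.1, Set.projIcc 0 1 zero_le_one w.2))) (by fun_prop)
    (fun z t _ _ => Subtype.property _) (fun z => by simp [h_zero]) hε
  refine ⟨⟨fun w => H (w.1, w.2), by fun_prop⟩, H_zero, fun w => hε' _ _ ?_⟩
  simpa using dist_H w.1 w.2 w.2.2

lemma RealHomotopy.homotopic {f g : C(X, E)} (H : RealHomotopy f g) : f.Homotopic g :=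
  ⟨⟨⟨fun w => H (w.2, w.1), by fun_prop⟩, fun x => H.map_zero x, fun x => H.map_one x⟩⟩

lemma IsControlledEquiv.exists_homotopyEquiv {q : E → V} (hφ : IsControlledEquiv q φ) :
    ∃ e : ContinuousMap.HomotopyEquiv X E, ⇑e.toFun = φ := by
  obtain ⟨ψ, hψ, ⟨G, -⟩, ⟨F, -⟩⟩ := hφ.exists_inverse 1 one_pos
  exact ⟨⟨⟨φ, hφ.continuous⟩, ⟨ψ, hψ⟩, (RealHomotopy.homotopic G).symm,
    (RealHomotopy.homotopic F).symm⟩, rfl⟩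

lemma homotopyEquivToFiniteComplex_preimage_coe_comp_homeomorph (β : B ≃ₜ S)
    (hfib : ∀ b, HomotopyEquivToFiniteComplex (p ⁻¹' {b})) {v : V} (hv : v ∈ S) :
    HomotopyEquivToFiniteComplex ((fun e => (β (p e) : V)) ⁻¹' {v}) := by
  obtain ⟨n, K, hK, ⟨η⟩⟩ := hfib (β.symm ⟨v, hv⟩)
  have preimage_eq : (fun e => (β (p e) : V)) ⁻¹' {v} = p ⁻¹' {β.symm ⟨v, hv⟩} := by
    ext e
    simp [β.eq_symm_apply, Subtype.ext_iff]
  exact ⟨n, K, hK, ⟨(Homeomorph.setCongr preimage_eq).toHomotopyEquiv.trans η⟩⟩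

lemma IsModelOver.isControlledEquiv_of_forall_mem {p : E → V} {Φ : X → E} {P : Set X}
    (h : IsModelOver p S Φ P) (hS : ∀ e, p e ∈ S) : IsControlledEquiv p fun x : P => Φ x :=
  (IsControlledEquiv.of_homeomorph ((Homeomorph.setCongr (Set.eq_univ_of_forall hS)).trans
    (Homeomorph.Set.univ E))).comp h.isControlledEquiv

end Fibration

theorem fibration_equiv_approx_fibration_with_compact_ENR_total_space
    (E B : Type) [TopologicalSpace E] [TopologicalSpace B]
    (hB : IsFiniteSimplicialComplex B)
    (p : E → B) (hp : IsHurewiczFibration p)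
    (hfib : ∀ b : B, HomotopyEquivToFiniteComplex (p ⁻¹' {b} : Set E)) :
    ∃ (X : Type) (_ : TopologicalSpace X), CompactSpace X ∧ IsENR X ∧
      ∃ (q : X → B) (φ : ContinuousMap.HomotopyEquiv X E),
        IsApproxFibration q ∧ ∀ x : X, p (φ.toFun x) = q x := by
  obtain ⟨n, K, hK, ⟨β⟩⟩ := hB
  have hp_cont := hp.1
  obtain ⟨X, _, Φ, part, h⟩ := (hp.liftsHomotopies β).exists_isFilteredModel (by fun_prop)
    (fun _ => homotopyEquivToFiniteComplex_preimage_coe_comp_homeomorph β hfib)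
    (isSubcomplex_toFinset hK)
  have model := h.isModelOver _ subset_rfl (isSubcomplex_toFinset hK)
  rw [polyhedron_toFinset hK] at model
  have controlled := model.isControlledEquiv_of_forall_mem fun e => (β (p e)).2
  have compactENR := IsCompactENR.of_isCompact h.injectsInEuclidean model.isCompact model.isANE
  obtain ⟨φ, hφ⟩ := controlled.exists_homotopyEquiv
  have hK_compact : IsCompact K.space := isCompact_iff_compactSpace.2 (isCompactENR_space hK).1
  exact ⟨part hK.toFinset, inferInstance, compactENR.compactSpace, compactENR.isENR, _, φ,
    hp.isApproxFibration_comp hK_compact β controlled, fun x => congrArg p (congrFun hφ x)⟩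

end
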